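/- arXiv:1605.00818 — 4 statements merged into one kernel-verified Lean document; each statement's English description precedes it below -/
import Mathlib

section
/- The Cayley graph Cay(Z_17 × Z_35, {1, −1} × (Z_35 \ {0})) can be decomposed into 28 C_17-factors and 6 C_35-factors. -/
open SimpleGraph

/-- `F` is a `C_k`-factor of `H`: a spanning subgraph of `H` that is 2-regular
and each of whose connected components has exactly `k` vertices. -/
def IsCycleFactor {V : Type*} (H F : SimpleGraph V) (k : ℕ) : Prop :=
  F ≤ H ∧ (∀ v, (F.neighborSet v).ncard = 2) ∧
    ∀ v : V, {w | F.Reachable v w}.ncard = k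

/-- The family of graphs `F` partitions the edge set of `H`. -/
def IsDecomp {V ι : Type*} (H : SimpleGraph V) (F : ι → SimpleGraph V) : Prop :=
  (Pairwise fun i j => Disjoint (F i).edgeSet (F j).edgeSet) ∧
  ∀ e, e ∈ H.edgeSet ↔ ∃ i, e ∈ (F i).edgeSet

/-- `HW H m n α β`: the edge set of `H` can be partitioned into
`α` `C_m`-factors and `β` `C_n`-factors. -/
def HW {V : Type*} (H : SimpleGraph V) (m n α β : ℕ) : Prop :=
  ∃ F : Fin α ⊕ Fin β → SimpleGraph V,
    (∀ i, IsCycleFactor H (F (Sum.inl i)) m) ∧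
    (∀ j, IsCycleFactor H (F (Sum.inr j)) n) ∧
    IsDecomp H F

/-- `(α, β) ∈ HWP(v; m, n)` for odd `v`: `K_v` has a 2-factorization into
`α` `C_m`-factors and `β` `C_n`-factors. -/
def HWPodd (v m n α β : ℕ) : Prop := HW (⊤ : SimpleGraph (Fin v)) m n α β

/-- `F ≤ H` is a vertex-disjoint union of `c` cycles of length `k`:
2-regular on its support, every component has `k` vertices, and the support
has `k * c` vertices. -/
def IsCycleClass {V : Type*} (H F : SimpleGraph V) (k c : ℕ) : Prop :=
  F ≤ H ∧ (∀ v ∈ F.support, (F.neighborSet v).ncard = 2) ∧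
  (∀ v ∈ F.support, {w | F.Reachable v w}.ncard = k) ∧
  F.support.ncard = k * c

/-- An almost resolvable `k`-cycle system of order `v`: a partition of the
edges of `K_v` into `(v-1)/2` almost parallel classes (each a vertex-disjoint
union of `(v-1)/k` `k`-cycles) together with one half-parallel class
(a vertex-disjoint union of `(v-1)/(2k)` `k`-cycles). -/
def IsARCS (k v : ℕ) : Prop :=
  ∃ F : Fin ((v - 1) / 2) ⊕ Unit → SimpleGraph (Fin v),
    (∀ i, IsCycleClass ⊤ (F (Sum.inl i)) k ((v - 1) / k)) ∧
    (∀ j, IsCycleClass ⊤ (F (Sum.inr j)) k ((v - 1) / (2 * k))) ∧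
    IsDecomp (⊤ : SimpleGraph (Fin v)) F

/-- The lexicographic product `C_m[n]` of the cycle `C_m` with the empty graph
on `n` vertices, on vertex set `ZMod m × ZMod n`. -/
def lexCycle (m n : ℕ) : SimpleGraph (ZMod m × ZMod n) :=
  SimpleGraph.fromRel (fun a b => a.1 - b.1 = 1)

/-- The Cayley graph of an additive group with connection set `S`. -/
def cayley {Γ : Type*} [AddGroup Γ] (S : Set Γ) : SimpleGraph Γ :=
  SimpleGraph.fromRel (fun a b => a - b ∈ S)

/-!
If `U` contains exactly one element of each pair `{u, -u}` of the connection set, and the arcs along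
`U` are dealt out, bijectively at every vertex, to maps `x ↦ δ x + x`, then the Cayley graph splits
into the undirected graphs of these maps. Here all of them are skew products over a cyclic rotation,
so their orbits have the length of the base as soon as the increments in the fibre sum to zero.

* Rotating `ZMod 17`, the 28 factors of length 17 use the differences in `ZMod 35` other than
  `0, ±1, ±2, ±3`. Three layers are permuted by `c`, `π c` and `-(c + π c)` for a complete mapping
  `π`, and the remaining layers cancel in pairs `c`, `-c`.
* Rotating `ZMod 35` by `1`, `2` or `3`, the 6 factors of length 35 move 26 times up and 9 times
  down (or conversely), for a net displacement of `±17 = 0`.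
-/

section FunctionalGraph

open Function

variable {V : Type*} {f : V → V} {x y : V}

/-- The undirected graph underlying the functional digraph with an arc from `x` to `f x` for
every `x`; fixed points of `f` contribute no edge. -/
def functionalGraph (f : V → V) : SimpleGraph V := SimpleGraph.fromRel fun x y => f x = y

theorem iterate_minimalPeriod_sub_one_apply (hx : x ∈ periodicPts f) :
    f^[minimalPeriod f x - 1] (f x) = x := by
  rw [← iterate_succ_apply, Nat.succ_eq_add_one,
    Nat.sub_add_cancel (minimalPeriod_pos_of_mem_periodicPts hx), iterate_minimalPeriod]

theorem apply_iterate_minimalPeriod_sub_one (hx : x ∈ periodicPts f) :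
    f (f^[minimalPeriod f x - 1] x) = x := by
  rw [← iterate_succ_apply' f, Nat.succ_eq_add_one,
    Nat.sub_add_cancel (minimalPeriod_pos_of_mem_periodicPts hx), iterate_minimalPeriod]

theorem functionalGraph_reachable_iff (hf : ∀ x, x ∈ periodicPts f) :
    (functionalGraph f).Reachable x y ↔ ∃ n, f^[n] x = y := by
  constructor
  · rw [SimpleGraph.reachable_iff_reflTransGen]
    intro h
    induction h with
    | refl => exact ⟨0, rfl⟩
    | @tail y z _ hyz ih =>
      obtain ⟨n, rfl⟩ := ih
      obtain ⟨-, rfl | hz⟩ := hyz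
      · exact ⟨n + 1, iterate_succ_apply' f n x⟩
      · exact ⟨minimalPeriod f z - 1 + n, by
          rw [iterate_add_apply, ← hz, iterate_minimalPeriod_sub_one_apply (hf z)]⟩
  · rintro ⟨n, rfl⟩
    induction n with
    | zero => exact .refl x
    | succ n ih =>
      rw [iterate_succ_apply']
      by_cases hfix : f^[n] x = f (f^[n] x)
      · rwa [← hfix]
      · exact ih.trans (SimpleGraph.Adj.reachable ⟨hfix, Or.inl rfl⟩)

theorem ncard_functionalGraph_reachable (hf : ∀ x, x ∈ periodicPts f) (x : V) :
    {y | (functionalGraph f).Reachable x y}.ncard = minimalPeriod f x := by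
  have horbit : {y | (functionalGraph f).Reachable x y} =
      (f^[·] x) '' Set.Iio (minimalPeriod f x) := by
    ext y
    simp only [Set.mem_ofPred_eq, functionalGraph_reachable_iff hf, Set.mem_image, Set.mem_Iio]
    refine ⟨fun ⟨n, hn⟩ => ⟨n % minimalPeriod f x, ?_, ?_⟩, fun ⟨n, _, hn⟩ => ⟨n, hn⟩⟩
    · exact Nat.mod_lt _ (minimalPeriod_pos_of_mem_periodicPts (hf x))
    · rwa [iterate_mod_minimalPeriod_eq]
  rw [horbit, Set.InjOn.ncard_image iterate_injOn_Iio_minimalPeriod, ← Finset.coe_Iio,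
    Set.ncard_coe_finset, Nat.card_Iio]

theorem functionalGraph_neighborSet (hf : ∀ x, x ∈ periodicPts f)
    (hx : minimalPeriod f x ≠ 1) :
    (functionalGraph f).neighborSet x = {f x, f^[minimalPeriod f x - 1] x} := by
  have hfix : f x ≠ x := fun h => hx (minimalPeriod_eq_one_iff_isFixedPt.2 h)
  have hpred := apply_iterate_minimalPeriod_sub_one (hf x)
  ext y
  constructor
  · rintro ⟨-, rfl | rfl⟩
    · exact Or.inl rfl
    · rw [minimalPeriod_apply (hf y), iterate_minimalPeriod_sub_one_apply (hf y)]
      exact Or.inr rfl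
  · rintro (rfl | rfl)
    · exact ⟨hfix.symm, Or.inl rfl⟩
    · exact ⟨fun h => hfix (by rwa [← h] at hpred), Or.inr hpred⟩

theorem ncard_functionalGraph_neighborSet (hf : ∀ x, x ∈ periodicPts f)
    (hx : 3 ≤ minimalPeriod f x) : ((functionalGraph f).neighborSet x).ncard = 2 := by
  rw [functionalGraph_neighborSet hf (by lia)]
  refine Set.ncard_pair fun h => ?_
  have h_one : 1 = minimalPeriod f x - 1 :=
    (iterate_eq_iterate_iff_of_lt_minimalPeriod (by lia) (by lia)).1 h
  lia

theorem isCycleFactor_functionalGraph {H : SimpleGraph V} {k : ℕ} (hk : 3 ≤ k)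
    (hf : ∀ x, minimalPeriod f x = k) (hH : functionalGraph f ≤ H) :
    IsCycleFactor H (functionalGraph f) k := by
  have hper : ∀ x, x ∈ periodicPts f := fun x =>
    minimalPeriod_pos_iff_mem_periodicPts.1 (by rw [hf]; lia)
  refine ⟨hH, fun x => ncard_functionalGraph_neighborSet hper (by rwa [hf]), fun x => ?_⟩
  rw [ncard_functionalGraph_reachable hper, hf]

end FunctionalGraph

section SkewProduct

open Function

variable {α β M : Type*} [AddCommMonoid M]

theorem minimalPeriod_add_left {A : Type*} [AddGroup A] (d x : A) :
    minimalPeriod (d + ·) x = addOrderOf d := by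
  refine minimalPeriod_eq_minimalPeriod_iff.2 fun n => ?_
  simp only [IsPeriodicPt, IsFixedPt, add_left_iterate, add_eq_right, add_zero]

theorem minimalPeriod_eq_of_semiconj {f : α → α} {g : β → β} {φ : α → β}
    (h : Semiconj φ f g) (hφ : Injective φ) (x : α) :
    minimalPeriod f x = minimalPeriod g (φ x) := by
  refine minimalPeriod_eq_minimalPeriod_iff.2 fun n => ?_
  rw [IsPeriodicPt, IsPeriodicPt, IsFixedPt, IsFixedPt, ← h.iterate_right n x, hφ.eq_iff]

theorem iterate_skewProduct (f : α → α) (g : α → M) (n : ℕ) (p : α × M) :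
    (fun q : α × M => (f q.1, g q.1 + q.2))^[n] p =
      (f^[n] p.1, birkhoffSum f g n p.1 + p.2) := by
  induction n with
  | zero => simp
  | succ n ih => simp only [iterate_succ_apply', ih, birkhoffSum_succ]; congr 1; abel

theorem birkhoffSum_card_eq_sum [Fintype α] {f : α → α} (g : α → M) {x : α}
    (hx : minimalPeriod f x = Fintype.card α) :
    birkhoffSum f g (Fintype.card α) x = ∑ y, g y := by
  have hinj : Set.InjOn (f^[·] x) (Finset.range (Fintype.card α)) := by
    rw [Finset.coe_range, ← hx]
    exact iterate_injOn_Iio_minimalPeriod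
  classical
  have horbit : (Finset.range (Fintype.card α)).image (f^[·] x) = Finset.univ :=
    Finset.eq_univ_of_card _ (by rw [Finset.card_image_of_injOn hinj, Finset.card_range])
  rw [← horbit, Finset.sum_image hinj, birkhoffSum]

theorem minimalPeriod_skewProduct [Fintype α] {f : α → α} {g : α → M} {p : α × M}
    (hf : minimalPeriod f p.1 = Fintype.card α) (hg : ∑ x, g x = 0) :
    minimalPeriod (fun q : α × M => (f q.1, g q.1 + q.2)) p = Fintype.card α := by
  have hreturn : f^[Fintype.card α] p.1 = p.1 := hf ▸ iterate_minimalPeriod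
  refine Nat.dvd_antisymm (IsPeriodicPt.minimalPeriod_dvd ?_) ?_
  · rw [IsPeriodicPt, IsFixedPt, iterate_skewProduct, hreturn, birkhoffSum_card_eq_sum g hf, hg,
      zero_add]
  · have hproj : Semiconj Prod.fst (fun q : α × M => (f q.1, g q.1 + q.2)) f := fun _ => rfl
    rw [← hf]
    exact ((isPeriodicPt_minimalPeriod _ p).map hproj).minimalPeriod_dvd

theorem minimalPeriod_translation_skewProduct {A : Type*} [AddGroup A] [Fintype A] {d : A}
    (hd : addOrderOf d = Fintype.card A) {g : A → M} (hg : ∑ a, g a = 0) (p : A × M) :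
    minimalPeriod (fun q : A × M => (d, g q.1) + q) p = Fintype.card A :=
  minimalPeriod_skewProduct ((minimalPeriod_add_left d p.1).trans hd) hg

theorem minimalPeriod_translation_skewProduct_swap {A : Type*} [AddGroup A] [Fintype A] {d : A}
    (hd : addOrderOf d = Fintype.card A) {g : A → M} (hg : ∑ a, g a = 0) (p : M × A) :
    minimalPeriod (fun q : M × A => (g q.2, d) + q) p = Fintype.card A := by
  have hswap : Semiconj Prod.swap (fun q : M × A => (g q.2, d) + q)
      (fun q : A × M => (d, g q.1) + q) := fun _ => rfl
  rw [minimalPeriod_eq_of_semiconj hswap Prod.swap_injective,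
    minimalPeriod_translation_skewProduct hd hg]

end SkewProduct

section Decomposition

open scoped Pointwise

theorem IsDecomp.le {V ι : Type*} {H : SimpleGraph V} {F : ι → SimpleGraph V}
    (h : IsDecomp H F) (s : ι) : F s ≤ H :=
  fun x y hxy => (h.2 s(x, y)).2 ⟨s, hxy⟩

theorem HW.of_isDecomp {V ι κ : Type*} [Fintype ι] [Fintype κ] {H : SimpleGraph V} {m n : ℕ}
    {F : ι ⊕ κ → SimpleGraph V} (hF : IsDecomp H F)
    (hι : ∀ i, IsCycleFactor H (F (Sum.inl i)) m)
    (hκ : ∀ j, IsCycleFactor H (F (Sum.inr j)) n) :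
    HW H m n (Fintype.card ι) (Fintype.card κ) := by
  let φ := (Fintype.equivFin ι).symm.sumCongr (Fintype.equivFin κ).symm
  refine ⟨F ∘ φ, fun i => hι _, fun j => hκ _, fun s t hst => hF.1 (φ.injective.ne hst),
    fun e => ?_⟩
  rw [hF.2 e, φ.surjective.exists]
  rfl

/-- Every edge of the Cayley graph has exactly one orientation along `U`, and at each vertex the
arcs along `U` are distributed bijectively among the functional graphs. -/
theorem isDecomp_cayley_functionalGraph {Γ ι : Type*} [AddGroup Γ] {U : Set Γ}
    (hU : Disjoint U (-U)) {δ : ι → Γ → Γ} (hδ : ∀ x, Function.Injective (δ · x))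
    (hrange : ∀ x, Set.range (δ · x) = U) :
    IsDecomp (cayley (U ∪ -U)) fun s => functionalGraph fun x => δ s x + x := by
  have hmem : ∀ s x, δ s x ∈ U := fun s x => hrange x ▸ Set.mem_range_self s
  have hadj : ∀ s x y, (functionalGraph fun x => δ s x + x).Adj x y ↔
      x ≠ y ∧ (δ s x = y - x ∨ δ s y = x - y) := fun s x y => by
    simp only [functionalGraph, SimpleGraph.fromRel_adj, eq_sub_iff_add_eq]
  have hreverse : ∀ s t x y, δ s x = y - x → δ t y ≠ x - y := fun s t x y hs ht =>
    Set.disjoint_left.1 hU (hmem s x) (by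
      rw [Set.mem_neg, hs, neg_sub, ← ht]; exact hmem t y)
  refine ⟨fun s t hst => Set.disjoint_left.2 fun e => ?_, fun e => ?_⟩ <;>
    induction e with | _ x y
  · simp only [SimpleGraph.mem_edgeSet, hadj]
    rintro ⟨-, hs | hs⟩ ⟨-, ht | ht⟩
    · exact hst (hδ x (hs.trans ht.symm))
    · exact hreverse s t x y hs ht
    · exact hreverse t s x y ht hs
    · exact hst (hδ y (hs.trans ht.symm))
  · have hU_iff : ∀ x y, y - x ∈ U ↔ ∃ s, δ s x = y - x := fun x y => by
      rw [← hrange x, Set.mem_range]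
    simp only [SimpleGraph.mem_edgeSet, hadj, cayley, SimpleGraph.fromRel_adj, Set.mem_union,
      Set.mem_neg, neg_sub, hU_iff, exists_and_left, exists_or]
    tauto

end Decomposition

section ZeroSum

variable {α A : Type*} [Fintype α] [AddCommGroup A]

theorem exists_signs_sum_eq {m q : ℕ} (hα : Fintype.card α = m + 2 * q) :
    ∃ σ : α → ℤˣ, ∑ a, (σ a : ℤ) = m := by
  classical
  obtain ⟨s, -, hs⟩ := Finset.exists_subset_card_eq
    (show q ≤ (Finset.univ : Finset α).card by rw [Finset.card_univ]; lia)
  refine ⟨fun a => if a ∈ s then -1 else 1, ?_⟩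
  have hsum : ∀ a, (((if a ∈ s then -1 else 1 : ℤˣ)) : ℤ) = 1 - 2 * if a ∈ s then 1 else 0 := by
    intro a
    split_ifs <;> rfl
  simp only [hsum, Finset.sum_sub_distrib, ← Finset.mul_sum, Finset.sum_boole,
    Finset.filter_univ_mem, Finset.sum_const, Finset.card_univ, hα, hs]
  ring

/-- A complete mapping of the subset `D` of an additive group: a permutation `π` of `D` for which
`c ↦ c + π c` is again a permutation of `D`. -/
def IsCompleteMappingOn (π : A → A) (D : Set A) : Prop :=
  Set.BijOn π D D ∧ Set.BijOn (fun c => c + π c) D D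

/-- Three of the permutations are `c`, `π c` and `-(c + π c)`; the others come in pairs
`c`, `-c`. -/
theorem IsCompleteMappingOn.exists_bijOn_sum_eq_zero {π : A → A} {D : Set A}
    (hπ : IsCompleteMappingOn π D) (hD : ∀ d ∈ D, -d ∈ D) (hodd : Odd (Fintype.card α))
    (hthree : 3 ≤ Fintype.card α) :
    ∃ g : α → A → A, (∀ i, Set.BijOn (g i) D D) ∧ ∀ c, ∑ i, g i c = 0 := by
  have hneg : Set.BijOn (fun c => -c) D D :=
    ⟨hD, neg_injective.injOn, fun d hd => ⟨-d, hD d hd, neg_neg d⟩⟩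
  obtain ⟨r, hr⟩ : ∃ r, Fintype.card α = 3 + (r + r) :=
    ⟨(Fintype.card α - 3) / 2, by obtain ⟨k, hk⟩ := hodd; lia⟩
  let φ : α ≃ Fin 3 ⊕ Fin r ⊕ Fin r := Fintype.equivOfCardEq (by simpa using hr)
  let g : Fin 3 ⊕ Fin r ⊕ Fin r → A → A :=
    Sum.elim ![id, π, fun c => -(c + π c)] (Sum.elim (fun _ => id) (fun _ c => -c))
  have hg : ∀ i, Set.BijOn (g i) D D := by
    rintro (i | _ | _)
    · fin_cases i
      exacts [Set.bijOn_id D, hπ.1, hneg.comp hπ.2]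
    exacts [Set.bijOn_id D, hneg]
  refine ⟨g ∘ φ, fun i => hg _, fun c => ?_⟩
  simp only [Function.comp_apply, Equiv.sum_comp φ (g · c), Fintype.sum_sum_type,
    Fin.sum_univ_three]
  simp [g]

end ZeroSum

section Construction

open scoped Pointwise

variable {m : ℕ} {A : Type*} {D E : Finset A}

/-- The connection set `{1} × D ∪ {1, -1} × E`, which chooses one element from each pair
`{u, -u}` of `{1, -1} × (D ∪ E ∪ -E)` when `D = -D` and `D`, `E`, `-E` are disjoint. -/
def halfConnectionSet (m : ℕ) (D E : Finset A) : Set (ZMod m × A) :=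
  {p | (p.1 = 1 ∧ p.2 ∈ D) ∨ ((p.1 = 1 ∨ p.1 = -1) ∧ p.2 ∈ E)}

/-- The step that each 2-factor of the construction takes at a vertex `x`. The factor indexed by
`c ∈ D` ascends by one layer and translates by the permutation `g x.1` of that layer; the factor
indexed by `(e, ε)` translates by `e` and changes layer in the direction `ε * σ x.2`. -/
def factorStep (g : ZMod m → A → A) (σ : A → ℤˣ) : D ⊕ (E × ℤˣ) → ZMod m × A → ZMod m × A
  | Sum.inl c, x => (1, g x.1 c)
  | Sum.inr (e, ε), x => (((ε * σ x.2 : ℤˣ) : ℤ), e)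

theorem intUnits_cast_injective [Fact (2 < m)] :
    Function.Injective fun u : ℤˣ => ((u : ℤ) : ZMod m) := by
  have hne := ZMod.neg_one_ne_one (n := m)
  intro u v huv
  rcases Int.units_eq_one_or u with rfl | rfl <;> rcases Int.units_eq_one_or v with rfl | rfl <;>
    simp_all [eq_comm]

variable {g : ZMod m → A → A} (σ : A → ℤˣ)

theorem factorStep_injective [Fact (2 < m)] (hDE : Disjoint D E)
    (hg : ∀ i, Set.BijOn (g i) D D) (x : ZMod m × A) :
    Function.Injective fun s : D ⊕ (E × ℤˣ) => factorStep g σ s x := by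
  have hne : ∀ (c : D) (e : E), g x.1 c ≠ e := fun c e h =>
    Finset.disjoint_left.1 hDE ((hg x.1).mapsTo c.2) (h ▸ e.2)
  rintro (c | ⟨e, ε⟩) (c' | ⟨e', ε'⟩) h <;> obtain ⟨h₁, h₂⟩ := Prod.ext_iff.1 h
  · rw [Subtype.ext ((hg x.1).injOn c.2 c'.2 h₂)]
  · exact (hne c e' h₂).elim
  · exact (hne c' e h₂.symm).elim
  · rw [Subtype.ext h₂, mul_right_cancel (intUnits_cast_injective h₁)]

theorem range_factorStep (hg : ∀ i, Set.BijOn (g i) D D) (x : ZMod m × A) :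
    Set.range (fun s : D ⊕ (E × ℤˣ) => factorStep g σ s x) = halfConnectionSet m D E := by
  refine Set.Subset.antisymm ?_ ?_
  · rintro _ ⟨c | ⟨e, ε⟩, rfl⟩
    · exact Or.inl ⟨rfl, (hg x.1).mapsTo c.2⟩
    · refine Or.inr ⟨?_, e.2⟩
      rcases Int.units_eq_one_or (ε * σ x.2) with h | h <;> simp [factorStep, h]
  · have hsign : ∀ (u : ℤˣ) (e : E), (((u : ℤ) : ZMod m), (e : A)) ∈
        Set.range (fun s : D ⊕ (E × ℤˣ) => factorStep g σ s x) := fun u e =>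
      ⟨Sum.inr (e, u * (σ x.2)⁻¹), by simp only [factorStep, inv_mul_cancel_right]⟩
    rintro ⟨i, d⟩ (⟨rfl : i = 1, hd⟩ | ⟨rfl | rfl, hd⟩)
    · obtain ⟨c, hc, rfl⟩ := (hg x.1).surjOn hd
      exact ⟨Sum.inl ⟨c, hc⟩, rfl⟩
    · simpa using hsign 1 ⟨d, hd⟩
    · simpa using hsign (-1) ⟨d, hd⟩

theorem disjoint_halfConnectionSet_neg [AddGroup A] [Fact (2 < m)]
    (hD : ∀ d ∈ D, -d ∈ D) (hE : ∀ e ∈ E, -e ∉ E) (hDE : Disjoint D E) :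
    Disjoint (halfConnectionSet m D E) (-halfConnectionSet m D E) := by
  have hne := ZMod.neg_one_ne_one (n := m)
  have hDE' : ∀ d ∈ D, d ∉ E := fun _ hd => Finset.disjoint_left.1 hDE hd
  refine Set.disjoint_left.2 fun ⟨i, d⟩ => ?_
  rintro (⟨hi, hd⟩ | ⟨-, hd⟩) (⟨hi', hd'⟩ | ⟨-, hd'⟩)
  · exact hne ((neg_eq_iff_eq_neg.1 hi').symm.trans hi)
  · exact hDE' _ (hD d hd) hd'
  · exact hDE' d (neg_neg d ▸ hD _ hd') hd
  · exact hE d hd hd'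

theorem halfConnectionSet_union_neg [AddGroup A] (hD : ∀ d ∈ D, -d ∈ D) :
    halfConnectionSet m D E ∪ -halfConnectionSet m D E =
      {p | (p.1 = 1 ∨ p.1 = -1) ∧ (p.2 ∈ D ∨ p.2 ∈ E ∨ -p.2 ∈ E)} := by
  have hD' : ∀ d, -d ∈ D ↔ d ∈ D := fun d => ⟨fun h => neg_neg d ▸ hD _ h, hD d⟩
  ext ⟨i, d⟩
  simp only [halfConnectionSet, Set.mem_union, Set.mem_neg, Set.mem_ofPred_eq, Prod.fst_neg,
    Prod.snd_neg, hD', neg_eq_iff_eq_neg, neg_neg]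
  tauto

theorem hw_cayley_of_isCompleteMappingOn [AddCommGroup A] [Fintype A] {π : A → A}
    (hm : Odd m) (hm₃ : 3 ≤ m) (hA : Odd (Fintype.card A)) (hmA : m ≤ Fintype.card A)
    (hπ : IsCompleteMappingOn π D) (hD : ∀ d ∈ D, -d ∈ D) (hE : ∀ e ∈ E, -e ∉ E)
    (hDE : Disjoint D E) (hgen : ∀ e ∈ E, addOrderOf e = Fintype.card A) :
    HW (cayley {p : ZMod m × A | (p.1 = 1 ∨ p.1 = -1) ∧ (p.2 ∈ D ∨ p.2 ∈ E ∨ -p.2 ∈ E)})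
      m (Fintype.card A) D.card (2 * E.card) := by
  have : NeZero m := ⟨by lia⟩
  have : Fact (2 < m) := ⟨hm₃⟩
  have hcard := ZMod.card m
  obtain ⟨g, hg, hg_sum⟩ := hπ.exists_bijOn_sum_eq_zero (α := ZMod m) hD
    (by rwa [hcard]) (by rwa [hcard])
  obtain ⟨q, hq⟩ : ∃ q, Fintype.card A = m + 2 * q :=
    ⟨(Fintype.card A - m) / 2, by obtain ⟨j, hj⟩ := hm; obtain ⟨k, hk⟩ := hA; lia⟩
  obtain ⟨σ, hσ⟩ := exists_signs_sum_eq hq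
  have hσ_sum : ∀ ε : ℤˣ, ∑ a, (((ε * σ a : ℤˣ) : ℤ) : ZMod m) = 0 := fun ε => by
    simp only [Units.val_mul, ← Int.cast_sum, ← Finset.mul_sum, hσ]
    simp
  rw [← halfConnectionSet_union_neg hD]
  have hdecomp := isDecomp_cayley_functionalGraph (disjoint_halfConnectionSet_neg hD hE hDE)
    (factorStep_injective σ hDE hg) (range_factorStep σ hg)
  have hHW := HW.of_isDecomp hdecomp
    (fun c => isCycleFactor_functionalGraph hm₃ (fun p => (minimalPeriod_translation_skewProduct
      (by rw [ZMod.addOrderOf_one, hcard]) (hg_sum c) p).trans hcard) (hdecomp.le _))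
    (fun ⟨e, ε⟩ => isCycleFactor_functionalGraph (hm₃.trans hmA)
      (minimalPeriod_translation_skewProduct_swap (hgen e e.2) (hσ_sum ε)) (hdecomp.le _))
  simpa [mul_comm] using hHW

end Construction

/-- The elements of `ZMod 35` other than `0`, `±1`, `±2`, `±3`, which are the translations used by
the `C_m`-factors. -/
def longDifferences : Finset (ZMod 35) := {0, 1, 2, 3, -1, -2, -3}ᶜ

/-- The elements `1`, `2`, `3`, which up to sign are the translations used by the `C_35`-factors. -/
def shortDifferences : Finset (ZMod 35) := {1, 2, 3}

/-- The permutation cycling four zero-sum triples and their negatives, which together with the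
nonzero multiples of `7` partition `longDifferences`. -/
def zeroSumTriplePerm : Equiv.Perm (ZMod 35) :=
  c[4, 8, -12] * c[-4, -8, 12] * c[5, 13, 17] * c[-5, -13, -17] *
    c[6, 10, -16] * c[-6, -10, 16] * c[9, 11, 15] * c[-9, -11, -15]

/-- On a zero-sum triple `c + π c = -π (π c)`, and on the multiples of `7` it is `2 * c`. -/
theorem isCompleteMappingOn_zeroSumTriplePerm :
    IsCompleteMappingOn zeroSumTriplePerm (longDifferences : Set (ZMod 35)) :=
  ⟨(Finset.image_eq_iff_bijOn_of_card le_rfl).1 (by decide +kernel),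
    (Finset.image_eq_iff_bijOn_of_card le_rfl).1 (by decide +kernel)⟩

theorem mem_longDifferences_or_mem_shortDifferences_iff (a : ZMod 35) :
    (a ∈ longDifferences ∨ a ∈ shortDifferences ∨ -a ∈ shortDifferences) ↔ a ≠ 0 := by
  revert a
  decide

theorem addOrderOf_of_mem_shortDifferences {e : ZMod 35} (he : e ∈ shortDifferences) :
    addOrderOf e = 35 := by
  simp only [shortDifferences, Finset.mem_insert, Finset.mem_singleton] at he
  obtain rfl | rfl | rfl := he
  exacts [ZMod.addOrderOf_coe 1 (by norm_num), ZMod.addOrderOf_coe 2 (by norm_num),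
    ZMod.addOrderOf_coe 3 (by norm_num)]

theorem stmt12_general {m : ℕ} (hm : Odd m) (hm₃ : 3 ≤ m) (hm₃₅ : m ≤ 35) :
    HW (cayley {p : ZMod m × ZMod 35 | (p.1 = 1 ∨ p.1 = -1) ∧ p.2 ≠ 0}) m 35 28 6 := by
  have hHW := hw_cayley_of_isCompleteMappingOn hm hm₃ (A := ZMod 35) (by decide) hm₃₅
    isCompleteMappingOn_zeroSumTriplePerm (by decide) (by decide) (by decide)
    fun _ => addOrderOf_of_mem_shortDifferences
  simp only [mem_longDifferences_or_mem_shortDifferences_iff] at hHW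
  exact hHW

theorem stmt12 :
    HW (cayley {p : ZMod 17 × ZMod 35 | (p.1 = 1 ∨ p.1 = -1) ∧ p.2 ≠ 0})
      17 35 28 6 :=
  stmt12_general (by decide) (by norm_num) (by norm_num)
end

section
/- Let k ≥ 3 be an odd integer, t ≥ 1, and let l be an integer with 0 ≤ l ≤ kt and l ∉ {1, 2, kt−1, kt}. Then the Cayley graph Cay(Z_k × Z_{2kt+1}, {1, −1} × (Z_{2kt+1} \ {0})) can be decomposed into 2l C_k-factors and 2kt − 2l C_{2kt+1}-factors. -/
open SimpleGraph

/-!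
Write `n = 2 * m + 1`. The differences `±1, …, ±l` in the second coordinate are covered by
`C_k`-factors and the differences `±(l + 1), …, ±m` by `C_n`-factors.

For `l ≠ 1, 2` there are three enumerations of `±{1, …, l}` whose termwise sums vanish. Continued by
pairs `x, -x` they give `k` enumerations with vanishing termwise sums, hence `2 * l` closed walks
in `ZMod n` indexed by `ZMod k`, and the translates of the graph of each walk form a `C_k`-factor.

The circulant graph with connection set `±{l + 1, …, m}` decomposes into Hamiltonian cycles: pair up
consecutive differences, which generate `ZMod n`, and use that a leftover `m` generates `ZMod n`
itself. For `a, b` generating an abelian group of odd order, start from the graph of all `a`-edges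
and the graph of all `b`-edges and exchange the opposite edges of a staircase of squares
`v, v + a, v + a + b, v + b`, one square between any two consecutive cosets of `⟨a⟩`. This joins the
`a`-cycles into a single cycle, and simultaneously the `b`-cycles.

Finally, an odd cycle of length `n ≥ k` maps homomorphically to the cycle on `ZMod k` by some `f`,
and the translates of the graphs of `f` and of `-f` form two `C_n`-factors.
-/

namespace CycleFactorization

/-! ### Two-regular connected graphs -/

section CycleGraph

variable {V W Γ : Type*}

/-- `G` is a cycle through all vertices of `V`: it is connected and 2-regular. -/
structure IsCycleGraph (G : SimpleGraph V) : Prop where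
  ncard_neighborSet : ∀ v, (G.neighborSet v).ncard = 2
  connected : G.Connected

/-- Disjoint copies of `G`, one for each element of `Γ`, on a vertex set identified with `V × Γ`
by `e`. -/
def copies (G : SimpleGraph V) (e : W ≃ V × Γ) : SimpleGraph W where
  Adj p q := G.Adj (e p).1 (e q).1 ∧ (e p).2 = (e q).2
  symm := ⟨fun _ _ h => ⟨h.1.symm, h.2.symm⟩⟩
  loopless := ⟨fun _ h => G.irrefl h.1⟩

lemma neighborSet_copies (G : SimpleGraph V) (e : W ≃ V × Γ) (p : W) :
    (copies G e).neighborSet p = (fun v => e.symm (v, (e p).2)) '' G.neighborSet (e p).1 := by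
  ext q
  simp only [mem_neighborSet, copies, Set.mem_image, Equiv.symm_apply_eq]
  constructor
  · rintro ⟨hadj, heq⟩
    exact ⟨(e q).1, hadj, by rw [heq]⟩
  · rintro ⟨v, hadj, hv⟩
    simpa only [← hv, and_true] using hadj

lemma setOf_reachable_copies {G : SimpleGraph V} (hG : G.Connected) (e : W ≃ V × Γ) (p : W) :
    {q | (copies G e).Reachable p q} = Set.range fun v => e.symm (v, (e p).2) := by
  ext q
  constructor
  · rintro ⟨w⟩
    have hlevel : (e p).2 = (e q).2 := by
      induction w with
      | nil => rfl
      | cons h _ ih => exact h.2.trans ih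
    exact ⟨(e q).1, by simp [hlevel]⟩
  · rintro ⟨v, rfl⟩
    let copyHom : G →g copies G e :=
      { toFun := fun v => e.symm (v, (e p).2)
        map_rel' := fun h => by simpa [copies] using h }
    have hreach := (hG.preconnected (e p).1 v).map copyHom
    rwa [show copyHom (e p).1 = p from e.symm_apply_apply p] at hreach

lemma IsCycleGraph.isCycleFactor_copies {G : SimpleGraph V} (hG : IsCycleGraph G)
    (e : W ≃ V × Γ) {H : SimpleGraph W} (hle : copies G e ≤ H) :
    IsCycleFactor H (copies G e) (Nat.card V) := by
  have hinj (p : W) : Function.Injective fun v => e.symm (v, (e p).2) :=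
    fun v w h => congrArg Prod.fst (e.symm.injective h)
  refine ⟨hle, fun p => ?_, fun p => ?_⟩
  · rw [neighborSet_copies, Set.ncard_image_of_injective _ (hinj p), hG.ncard_neighborSet]
  · rw [setOf_reachable_copies hG.connected, ← Set.image_univ,
      Set.ncard_image_of_injective _ (hinj p), Set.ncard_univ]

lemma IsCycleGraph.exists_isCycle_mem_support [Finite V] {G : SimpleGraph V}
    (hG : IsCycleGraph G) : ∃ (v : V) (p : G.Walk v v), p.IsCycle ∧ (∀ w, w ∈ p.support) ∧
      ∀ x y, G.Adj x y ↔ p.toSubgraph.Adj x y := by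
  classical
  have hcycles : G.IsCycles := fun v _ => hG.ncard_neighborSet v
  obtain ⟨v⟩ := hG.connected.nonempty
  have hnonempty : (G.neighborSet v).Nonempty :=
    Set.nonempty_of_ncard_ne_zero (by rw [hG.ncard_neighborSet]; norm_num)
  obtain ⟨p, hp, hverts⟩ := hcycles.exists_cycle_toSubgraph_verts_eq_connectedComponentSupp
    (c := G.connectedComponentMk v) rfl hnonempty
  have hmem (w : V) : w ∈ p.toSubgraph.verts := by
    rw [hverts, ConnectedComponent.mem_supp_iff, ConnectedComponent.eq]
    exact hG.connected.preconnected _ _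
  have := Fintype.ofFinite V
  exact ⟨v, p, hp, fun w => p.mem_verts_toSubgraph.1 (hmem w),
    fun x y => (hp.adj_toSubgraph_iff_of_isCycles hcycles (hmem x) y).symm⟩

lemma length_eq_card_of_isCycle [Finite V] {G : SimpleGraph V} {v : V} {p : G.Walk v v}
    (hp : p.IsCycle) (hmem : ∀ w, w ∈ p.support) : p.length = Nat.card V := by
  classical
  have := Fintype.ofFinite V
  have hham : p.IsHamiltonianCycle :=
    ⟨hp, hp.isPath_tail.isHamiltonian_of_mem fun w => by
      rw [p.support_tail_of_not_nil hp.not_nil]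
      rcases p.mem_support_iff.1 (hmem w) with rfl | hw
      · exact p.end_mem_tail_support hp.not_nil
      · exact hw⟩
  rw [hham.length_eq, Nat.card_eq_fintype_card]

lemma exists_index_getVert {G : SimpleGraph V} {v : V} {p : G.Walk v v} (hp : p.IsCycle) :
    ∃ index : V → ZMod p.length, ∀ i ≤ p.length, index (p.getVert i) = i := by
  have hinj : Function.Injective fun i : Fin p.length => p.getVert i := fun i j hij =>
    Fin.ext (hp.getVert_injOn' (show (i : ℕ) ≤ _ by lia) (show (j : ℕ) ≤ _ by lia) hij)
  refine ⟨Function.extend (fun i : Fin p.length => p.getVert i) (fun i => (i : ℕ)) 0,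
    fun i hi => ?_⟩
  rcases hi.lt_or_eq with hlt | rfl
  · exact hinj.extend_apply _ _ ⟨i, hlt⟩
  · have hpos : 0 < p.length := by have := hp.three_le_length; lia
    simpa using hinj.extend_apply (fun i : Fin p.length => ((i : ℕ) : ZMod p.length)) 0 ⟨0, hpos⟩

end CycleGraph

/-! ### Cycles as Cayley graphs -/

section Cayley

variable {Γ : Type*} [AddCommGroup Γ]

lemma cayley_adj {S : Set Γ} {x y : Γ} :
    (cayley S).Adj x y ↔ x ≠ y ∧ (x - y ∈ S ∨ y - x ∈ S) :=
  fromRel_adj _ x y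

lemma cayley_singleton_adj {a : Γ} (ha : a ≠ 0) {x y : Γ} :
    (cayley {a}).Adj x y ↔ y - x = a ∨ y - x = -a := by
  rw [cayley_adj, Set.mem_singleton_iff, Set.mem_singleton_iff, or_comm, ← neg_eq_iff_eq_neg,
    neg_sub, and_iff_right_of_imp]
  rintro (h | h) rfl <;> exact ha (by simpa using h.symm)

lemma neighborSet_cayley_singleton {a : Γ} (ha : a ≠ 0) (x : Γ) :
    (cayley {a}).neighborSet x = {x + a, x - a} := by
  ext y
  rw [mem_neighborSet, cayley_singleton_adj ha, Set.mem_insert_iff, Set.mem_singleton_iff,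
    sub_eq_iff_eq_add', sub_eq_iff_eq_add', sub_eq_add_neg]

lemma reachable_of_mem_zmultiples {G : SimpleGraph Γ} {a : Γ}
    (hG : ∀ x, G.Reachable x (x + a)) {x y : Γ} (hxy : y - x ∈ AddSubgroup.zmultiples a) :
    G.Reachable x y := by
  obtain ⟨i, hi⟩ := AddSubgroup.mem_zmultiples_iff.1 hxy
  obtain rfl : y = x + i • a := by rw [hi]; abel
  clear hxy hi
  induction i with
  | zero => simp
  | succ i ih =>
    rw [add_smul, one_smul, ← add_assoc]
    exact ih.trans (hG _)
  | pred i ih =>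
    refine ih.trans (Reachable.symm ?_)
    convert hG _ using 1
    rw [sub_smul, one_smul]
    abel

lemma isCycleGraph_cayley_singleton {a : Γ} (ha : a + a ≠ 0)
    (hgen : AddSubgroup.zmultiples a = ⊤) : IsCycleGraph (cayley {a}) := by
  have ha0 : a ≠ 0 := by
    rintro rfl
    simp at ha
  refine ⟨fun x => ?_, ⟨fun x y => ?_⟩⟩
  · rw [neighborSet_cayley_singleton ha0, Set.ncard_pair]
    intro h
    apply ha
    rwa [sub_eq_add_neg, add_right_inj, eq_neg_iff_add_eq_zero] at h
  · refine reachable_of_mem_zmultiples (a := a) (fun x => Adj.reachable ?_) (by simp [hgen])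
    exact (cayley_singleton_adj ha0).2 (Or.inl (add_sub_cancel_left x a))

end Cayley

section CycleHom

lemma zmod_one_ne_zero {k : ℕ} (hk : 2 ≤ k) : (1 : ZMod k) ≠ 0 := by
  have : Fact (1 < k) := ⟨hk⟩
  exact one_ne_zero

lemma zmod_one_add_one_ne_zero {k : ℕ} (hk : 3 ≤ k) : (1 : ZMod k) + 1 ≠ 0 := by
  intro h
  have hdvd : k ∣ 2 := by
    rw [← ZMod.natCast_eq_zero_iff, ← h]
    norm_num
  have := Nat.le_of_dvd two_pos hdvd
  lia

lemma isCycleGraph_cayley_zmod_one {k : ℕ} (hk : 3 ≤ k) :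
    IsCycleGraph (cayley ({1} : Set (ZMod k))) :=
  isCycleGraph_cayley_singleton (zmod_one_add_one_ne_zero hk)
    ((AddSubgroup.eq_top_iff' _).2 fun x => ⟨x.cast, by simp⟩)

lemma IsCycleGraph.nonempty_hom_cayley_zmod {V : Type*} [Finite V] {G : SimpleGraph V}
    (hG : IsCycleGraph G) : Nonempty (G →g cayley ({1} : Set (ZMod (Nat.card V)))) := by
  obtain ⟨v, p, hp, hmem, hadj⟩ := hG.exists_isCycle_mem_support
  rw [← length_eq_card_of_isCycle hp hmem]
  obtain ⟨index, hindex⟩ := exists_index_getVert hp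
  have hone : (1 : ZMod p.length) ≠ 0 :=
    zmod_one_ne_zero (by have := hp.three_le_length; lia)
  refine ⟨index, fun {x y} hxy => ?_⟩
  obtain ⟨i, hi, hlt⟩ := p.toSubgraph_adj_iff.1 ((hadj x y).1 hxy)
  have hstep : (cayley {1}).Adj (index (p.getVert i)) (index (p.getVert (i + 1))) := by
    rw [hindex i hlt.le, hindex (i + 1) hlt, cayley_singleton_adj hone]
    simp
  rcases Sym2.eq_iff.1 hi with ⟨rfl, rfl⟩ | ⟨rfl, rfl⟩
  · exact hstep
  · exact hstep.symm

/-- The walk `0, 1, …, k - 1, 0, -1, 0, -1, …` in `ZMod k` (for odd `k`), which winds once around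
the cycle and then oscillates. -/
def windThenOscillate (k i : ℕ) : ZMod k :=
  if i < k then i else if Even i then -1 else 0

lemma windThenOscillate_succ_sub {k : ℕ} (hk : Odd k) (i : ℕ) :
    windThenOscillate k (i + 1) - windThenOscillate k i = 1 ∨
      windThenOscillate k (i + 1) - windThenOscillate k i = -1 := by
  rcases lt_trichotomy (i + 1) k with h | rfl | h
  · left
    simp [windThenOscillate, h, Nat.lt_of_succ_lt h]
  · left
    have hcast : (i : ZMod (i + 1)) + 1 = 0 := by exact_mod_cast ZMod.natCast_self (i + 1)
    simp only [windThenOscillate, lt_self_iff_false, if_false, Nat.not_even_iff_odd.2 hk,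
      lt_add_one, if_true]
    linear_combination -hcast
  · simp only [windThenOscillate, if_neg h.not_gt, if_neg (Nat.lt_succ_iff.1 h).not_gt,
      Nat.even_add_one]
    by_cases hi : Even i <;> simp [hi]

lemma windThenOscillate_sub_one {k N : ℕ} (hN : Odd N) (hkN : k ≤ N) :
    windThenOscillate k (N - 1) = -1 := by
  rcases hkN.lt_or_eq with hlt | rfl
  · rw [windThenOscillate, if_neg (by lia), if_pos (Nat.Odd.sub_odd hN odd_one)]
  · rw [windThenOscillate, if_pos (by have := hN.pos; lia), Nat.cast_sub hN.pos]
    simp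

lemma nonempty_hom_cayley_zmod_cayley_zmod {k N : ℕ} (hk : Odd k) (hk3 : 3 ≤ k) (hN : Odd N)
    (hkN : k ≤ N) :
    Nonempty (cayley ({1} : Set (ZMod N)) →g cayley ({1} : Set (ZMod k))) := by
  have hk1 : (1 : ZMod k) ≠ 0 := zmod_one_ne_zero (by lia)
  have hN1 : (1 : ZMod N) ≠ 0 := zmod_one_ne_zero (by lia)
  have : NeZero N := ⟨by lia⟩
  have hstep (x : ZMod N) :
      (cayley {1}).Adj (windThenOscillate k x.val) (windThenOscillate k (x + 1).val) := by
    have hval : (1 : ZMod N).val = 1 := ZMod.val_one'' (by lia)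
    rw [cayley_singleton_adj hk1]
    by_cases hx : x.val + 1 < N
    · rw [ZMod.val_add_of_lt (by rwa [hval]), hval]
      exact windThenOscillate_succ_sub hk _
    · have hlt := x.val_lt
      have hlast : x.val = N - 1 := by lia
      have hzero : (x + 1).val = 0 := by
        rw [ZMod.val_add, hval, hlast, Nat.sub_add_cancel hN.pos, Nat.mod_self]
      rw [hzero, hlast, windThenOscillate_sub_one hN hkN]
      simp [windThenOscillate, hk.pos]
  refine ⟨fun x => windThenOscillate k x.val, fun {x y} hxy => ?_⟩
  rcases (cayley_singleton_adj hN1).1 hxy with h | h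
  · obtain rfl : y = x + 1 := by rw [← h]; abel
    exact hstep x
  · obtain rfl : x = y + 1 := by rw [← neg_neg 1, ← h]; abel
    exact (hstep y).symm

theorem IsCycleGraph.nonempty_hom_cayley_zmod_of_odd {V : Type*} [Finite V] {G : SimpleGraph V}
    {k : ℕ} (hG : IsCycleGraph G) (hk : Odd k) (hk3 : 3 ≤ k) (hV : Odd (Nat.card V))
    (hkV : k ≤ Nat.card V) : Nonempty (G →g cayley ({1} : Set (ZMod k))) := by
  obtain ⟨φ⟩ := hG.nonempty_hom_cayley_zmod
  obtain ⟨ψ⟩ := nonempty_hom_cayley_zmod_cayley_zmod hk hk3 hV hkV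
  exact ⟨ψ.comp φ⟩

end CycleHom

/-! ### Decompositions -/

section Decomposition

variable {V ι : Type*}

lemma isDecomp_iff {H : SimpleGraph V} {F : ι → SimpleGraph V} :
    IsDecomp H F ↔ (∀ i, F i ≤ H) ∧ ∀ x y, H.Adj x y → ∃! i, (F i).Adj x y := by
  simp only [IsDecomp, Pairwise, Set.disjoint_left, Sym2.forall, mem_edgeSet]
  constructor
  · rintro ⟨hdisj, hcover⟩
    refine ⟨fun i x y h => (hcover x y).2 ⟨i, h⟩, fun x y h => ?_⟩
    obtain ⟨i, hi⟩ := (hcover x y).1 h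
    exact ⟨i, hi, fun j hj => by_contra fun hne => hdisj hne x y hj hi⟩
  · rintro ⟨hle, hunique⟩
    exact ⟨fun i j hij x y hi hj => hij ((hunique x y (hle i hi)).unique hi hj),
      fun x y => ⟨fun h => (hunique x y h).exists, fun ⟨i, hi⟩ => hle i hi⟩⟩

lemma isDecomp_comp_equiv {κ : Type*} {H : SimpleGraph V} {F : ι → SimpleGraph V}
    (hF : IsDecomp H F) (e : κ ≃ ι) : IsDecomp H (F ∘ e) := by
  refine ⟨fun i j hij => hF.1 (e.injective.ne hij), fun x => ?_⟩
  rw [hF.2, e.surjective.exists]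
  rfl

lemma hw_of_isDecomp {κ : Type*} [Finite ι] [Finite κ] {H : SimpleGraph V} {m n : ℕ}
    {F : ι ⊕ κ → SimpleGraph V} (hm : ∀ i, IsCycleFactor H (F (Sum.inl i)) m)
    (hn : ∀ j, IsCycleFactor H (F (Sum.inr j)) n) (hF : IsDecomp H F) :
    HW H m n (Nat.card ι) (Nat.card κ) :=
  ⟨_, fun _ => hm _, fun _ => hn _,
    isDecomp_comp_equiv hF ((Finite.equivFin ι).symm.sumCongr (Finite.equivFin κ).symm)⟩

/-- The edges of `H` can be partitioned into `e` Hamiltonian cycles of `H`. -/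
def IsHamDecomposable (H : SimpleGraph V) (e : ℕ) : Prop :=
  ∃ G : Fin e → SimpleGraph V, (∀ i, IsCycleGraph (G i)) ∧ IsDecomp H G

lemma isHamDecomposable_bot : IsHamDecomposable (⊥ : SimpleGraph V) 0 :=
  ⟨fun i => i.elim0, fun i => i.elim0, isDecomp_iff.2 ⟨fun i => i.elim0, fun _ _ h => h.elim⟩⟩

lemma IsCycleGraph.isHamDecomposable {G : SimpleGraph V} (hG : IsCycleGraph G) :
    IsHamDecomposable G 1 :=
  ⟨fun _ => G, fun _ => hG,
    isDecomp_iff.2 ⟨fun _ => le_rfl, fun _ _ h => ⟨0, h, fun _ _ => Subsingleton.elim _ _⟩⟩⟩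

lemma IsHamDecomposable.sup {H K : SimpleGraph V} {e f : ℕ} (hH : IsHamDecomposable H e)
    (hK : IsHamDecomposable K f) (hHK : Disjoint H K) : IsHamDecomposable (H ⊔ K) (e + f) := by
  obtain ⟨F, hF, hFdec⟩ := hH
  obtain ⟨G, hG, hGdec⟩ := hK
  rw [isDecomp_iff] at hFdec hGdec
  have hdisj {x y : V} (hx : H.Adj x y) (hy : K.Adj x y) : False :=
    (disjoint_iff_inf_le.1 hHK) ⟨hx, hy⟩
  have hdec : IsDecomp (H ⊔ K) (Sum.elim F G) := by
    refine isDecomp_iff.2 ⟨?_, ?_⟩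
    · rintro (i | i)
      · exact (hFdec.1 i).trans le_sup_left
      · exact (hGdec.1 i).trans le_sup_right
    · rintro x y (h | h)
      · obtain ⟨i, hi, hunique⟩ := hFdec.2 x y h
        refine ⟨Sum.inl i, hi, ?_⟩
        rintro (j | j) hj
        · rw [hunique j hj]
        · exact (hdisj h (hGdec.1 j hj)).elim
      · obtain ⟨i, hi, hunique⟩ := hGdec.2 x y h
        refine ⟨Sum.inr i, hi, ?_⟩
        rintro (j | j) hj
        · exact (hdisj (hFdec.1 j hj) h).elim
        · rw [hunique j hj]
  refine ⟨_, fun i => ?_, isDecomp_comp_equiv hdec finSumFinEquiv.symm⟩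
  rw [Function.comp_apply]
  rcases finSumFinEquiv.symm i with j | j
  · exact hF j
  · exact hG j

lemma IsCycleGraph.sup_isHamDecomposable {G K : SimpleGraph V} (hG : IsCycleGraph G)
    (hK : IsCycleGraph K) (hGK : Disjoint G K) : IsHamDecomposable (G ⊔ K) 2 :=
  hG.isHamDecomposable.sup hK.isHamDecomposable hGK

end Decomposition

/-! ### From potentials to cycle factors of `ZMod k × Γ` -/

section Potential

variable {k : ℕ} {Γ : Type*} [AddCommGroup Γ]

lemma cayley_prod_adj (hk : 2 ≤ k) {p q : ZMod k × Γ} :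
    (cayley {p : ZMod k × Γ | (p.1 = 1 ∨ p.1 = -1) ∧ p.2 ≠ 0}).Adj p q ↔
      (cayley {1}).Adj p.1 q.1 ∧ p.2 ≠ q.2 := by
  rw [cayley_singleton_adj (zmod_one_ne_zero hk), cayley_adj]
  simp only [Set.mem_ofPred_eq, Prod.fst_sub, Prod.snd_sub, sub_ne_zero, ← neg_sub q.1,
    neg_eq_iff_eq_neg, neg_neg, @ne_comm _ q.2]
  refine ⟨by tauto, fun ⟨h, hne⟩ => ⟨fun heq => hne (by rw [heq]), by tauto⟩⟩

/-- The `C_k`-factor of `ZMod k × Γ` formed by the translates of the graph of `S`. -/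
def shortFactor (S : ZMod k → Γ) : SimpleGraph (ZMod k × Γ) :=
  copies (cayley {1}) ((Equiv.refl _).prodShear fun c => Equiv.subRight (S c))

lemma shortFactor_adj {S : ZMod k → Γ} {p q : ZMod k × Γ} :
    (shortFactor S).Adj p q ↔ (cayley {1}).Adj p.1 q.1 ∧ q.2 - p.2 = S q.1 - S p.1 := by
  refine and_congr_right fun _ => ?_
  change p.2 - S p.1 = q.2 - S q.1 ↔ _
  rw [sub_eq_sub_iff_sub_eq_sub, ← neg_inj, neg_sub, neg_sub]

lemma shortFactor_adj_of_fst_eq_add_one (hk : 2 ≤ k) {S : ZMod k → Γ} {p q : ZMod k × Γ}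
    (hpq : q.1 = p.1 + 1) :
    (shortFactor S).Adj p q ↔ S (p.1 + 1) - S p.1 = q.2 - p.2 := by
  simp [shortFactor_adj, hpq, cayley_singleton_adj (zmod_one_ne_zero hk), eq_comm]

lemma shortFactor_le (hk : 2 ≤ k) {S : ZMod k → Γ} (hS : ∀ c, S (c + 1) - S c ≠ 0) :
    shortFactor S ≤ cayley {p : ZMod k × Γ | (p.1 = 1 ∨ p.1 = -1) ∧ p.2 ≠ 0} := by
  intro p q hpq
  rw [shortFactor_adj] at hpq
  refine (cayley_prod_adj hk).2 ⟨hpq.1, fun heq => ?_⟩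
  have hS0 : S q.1 - S p.1 = 0 := by rw [← hpq.2, heq, sub_self]
  rcases (cayley_singleton_adj (zmod_one_ne_zero hk)).1 hpq.1 with h | h
  · rw [sub_eq_iff_eq_add'] at h
    exact hS p.1 (by rwa [← h])
  · have h' : p.1 = q.1 + 1 := by linear_combination -h
    exact hS q.1 (by rw [← h', ← neg_sub, hS0, neg_zero])

/-- The translates, in the direction of `ZMod k`, of the graph of `f` over the cycle `G`. -/
def longFactor {V : Type*} (G : SimpleGraph V) (f : V → ZMod k) : SimpleGraph (ZMod k × V) :=
  copies G ((Equiv.prodComm _ _).trans ((Equiv.refl _).prodShear fun x => Equiv.subRight (f x)))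

lemma longFactor_adj {V : Type*} {G : SimpleGraph V} {f : V → ZMod k}
    {p q : ZMod k × V} :
    (longFactor G f).Adj p q ↔ G.Adj p.2 q.2 ∧ q.1 - p.1 = f q.2 - f p.2 := by
  refine and_congr_right fun _ => ?_
  change p.1 - f p.2 = q.1 - f q.2 ↔ _
  rw [sub_eq_sub_iff_sub_eq_sub, ← neg_inj, neg_sub, neg_sub]

lemma longFactor_le (hk : 2 ≤ k) {G : SimpleGraph Γ} {f : Γ → ZMod k}
    (hf : ∀ ⦃x y⦄, G.Adj x y → (cayley {1}).Adj (f x) (f y)) :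
    longFactor G f ≤ cayley {p : ZMod k × Γ | (p.1 = 1 ∨ p.1 = -1) ∧ p.2 ≠ 0} := by
  intro p q hpq
  rw [longFactor_adj] at hpq
  have h1 := zmod_one_ne_zero hk
  refine (cayley_prod_adj hk).2 ⟨?_, hpq.1.ne⟩
  rw [cayley_singleton_adj h1, hpq.2]
  exact (cayley_singleton_adj h1).1 (hf hpq.1)

lemma existsUnique_int_units_smul_eq_one {R : Type*} [Ring R] (h2 : (1 : R) + 1 ≠ 0) {d : R}
    (hd : d = 1 ∨ d = -1) : ∃! u : ℤˣ, u • d = 1 := by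
  have hne : (-1 : R) ≠ 1 := fun h => h2 (by nth_rw 1 [← h]; simp)
  rcases hd with rfl | rfl
  · refine ⟨1, one_smul _ _, fun u hu => ?_⟩
    rcases Int.units_eq_one_or u with rfl | rfl
    · rfl
    · exact (hne (by simpa [Units.smul_def] using hu)).elim
  · refine ⟨-1, by simp [Units.smul_def], fun u hu => ?_⟩
    rcases Int.units_eq_one_or u with rfl | rfl
    · exact (hne (by simpa [Units.smul_def] using hu)).elim
    · rfl

lemma cayley_singleton_adj_units_smul {a : Γ} (ha : a ≠ 0) {x y : Γ} (u : ℤˣ)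
    (hxy : (cayley {a}).Adj x y) : (cayley {a}).Adj (u • x) (u • y) := by
  rw [cayley_singleton_adj ha] at hxy ⊢
  rw [← smul_sub]
  rcases Int.units_eq_one_or u with rfl | rfl
  · simpa using hxy
  · simpa only [Units.smul_def, Units.val_neg, Units.val_one, neg_smul, one_smul,
      neg_eq_iff_eq_neg, neg_neg, or_comm] using hxy

variable {ι κ : Type*} {D : Set Γ} {S : ι → ZMod k → Γ} {H : SimpleGraph Γ}
  {G : κ → SimpleGraph Γ}

/-- The short factors of the potentials `S i` together with two long factors for each cycle
`G j`, one for `f j` and one for `-f j`. -/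
def potentialFactors (S : ι → ZMod k → Γ) (f : ∀ j, G j →g cayley ({1} : Set (ZMod k))) :
    ι ⊕ κ × ℤˣ → SimpleGraph (ZMod k × Γ) :=
  Sum.elim (fun i => shortFactor (S i)) fun j => longFactor (G j.1) fun x => j.2 • f j.1 x

lemma existsUnique_potentialFactors_adj (hk : 3 ≤ k)
    (hS : ∀ c, Set.BijOn (fun i => S i (c + 1) - S i c) Set.univ D)
    (hH : ∀ x y, H.Adj x y ↔ x ≠ y ∧ y - x ∉ D) (hG : IsDecomp H G)
    (f : ∀ j, G j →g cayley ({1} : Set (ZMod k))) {p q : ZMod k × Γ} (hpq : q.1 = p.1 + 1)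
    (hne : p.2 ≠ q.2) : ∃! i, (potentialFactors S f i).Adj p q := by
  have h1 : (1 : ZMod k) ≠ 0 := zmod_one_ne_zero (by lia)
  rw [isDecomp_iff] at hG
  have hlong (j : κ) (u : ℤˣ) : (potentialFactors S f (Sum.inr (j, u))).Adj p q ↔
      (G j).Adj p.2 q.2 ∧ u • (f j q.2 - f j p.2) = 1 := by
    refine longFactor_adj.trans (and_congr_right fun _ => ?_)
    rw [hpq, add_sub_cancel_left, smul_sub, eq_comm]
  have hshort (i : ι) : (potentialFactors S f (Sum.inl i)).Adj p q ↔
      S i (p.1 + 1) - S i p.1 = q.2 - p.2 :=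
    shortFactor_adj_of_fst_eq_add_one (by lia) hpq
  by_cases hmem : q.2 - p.2 ∈ D
  · obtain ⟨i, -, hi⟩ := (hS p.1).surjOn hmem
    refine ⟨Sum.inl i, (hshort i).2 hi, ?_⟩
    rintro (i' | ⟨j, u⟩) hadj
    · rw [(hS p.1).injOn trivial trivial (hi.trans ((hshort i').1 hadj).symm)]
    · exact absurd hmem ((hH _ _).1 (hG.1 j ((hlong j u).1 hadj).1)).2
  · obtain ⟨j, hj, hjunique⟩ := hG.2 p.2 q.2 ((hH _ _).2 ⟨hne, hmem⟩)
    obtain ⟨u, hu, huunique⟩ := existsUnique_int_units_smul_eq_one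
      (zmod_one_add_one_ne_zero hk) ((cayley_singleton_adj h1).1 ((f j).map_adj hj))
    refine ⟨Sum.inr (j, u), (hlong j u).2 ⟨hj, hu⟩, ?_⟩
    rintro (i' | ⟨j', u'⟩) hadj
    · exact absurd ((hS p.1).mapsTo (Set.mem_univ i'))
        (by simpa only [(hshort i').1 hadj] using hmem)
    · obtain ⟨hj', hu'⟩ := (hlong j' u').1 hadj
      obtain rfl := hjunique j' hj'
      rw [huunique u' hu']

theorem hw_cayley_prod (hk : 3 ≤ k) [Finite Γ] [Finite ι] [Finite κ] (hD : 0 ∉ D)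
    (hS : ∀ c, Set.BijOn (fun i => S i (c + 1) - S i c) Set.univ D)
    (hH : ∀ x y, H.Adj x y ↔ x ≠ y ∧ y - x ∉ D) (hcycle : ∀ j, IsCycleGraph (G j))
    (hG : IsDecomp H G) (f : ∀ j, G j →g cayley ({1} : Set (ZMod k))) :
    HW (cayley {p : ZMod k × Γ | (p.1 = 1 ∨ p.1 = -1) ∧ p.2 ≠ 0}) k (Nat.card Γ)
      (Nat.card ι) (Nat.card κ * 2) := by
  have h1 : (1 : ZMod k) ≠ 0 := zmod_one_ne_zero (by lia)
  have hshort (i : ι) := shortFactor_le (by lia)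
    fun c h0 => hD (h0 ▸ (hS c).mapsTo (Set.mem_univ i))
  have hlong (j : κ × ℤˣ) := longFactor_le (by lia)
    fun x y hxy => cayley_singleton_adj_units_smul h1 j.2 ((f j.1).map_adj hxy)
  have hcard : Nat.card (κ × ℤˣ) = Nat.card κ * 2 := by simp [Nat.card_prod]
  rw [← hcard]
  refine hw_of_isDecomp (F := potentialFactors S f) (fun i => ?_) (fun j => ?_)
    (isDecomp_iff.2 ⟨?_, fun p q hpq => ?_⟩)
  · have := (isCycleGraph_cayley_zmod_one hk).isCycleFactor_copies _ (hshort i)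
    rwa [Nat.card_zmod] at this
  · exact (hcycle j.1).isCycleFactor_copies _ (hlong j)
  · rintro (i | j)
    · exact hshort i
    · exact hlong j
  · obtain ⟨hfst, hsnd⟩ := (cayley_prod_adj (by lia)).1 hpq
    rcases (cayley_singleton_adj h1).1 hfst with h | h
    · exact existsUnique_potentialFactors_adj hk hS hH hG f (by linear_combination h) hsnd
    · simpa only [adj_comm] using existsUnique_potentialFactors_adj hk hS hH hG f
        (p := q) (q := p) (by linear_combination -h) hsnd.symm

end Potential

/-! ### Switching squares in the union of two Cayley cycles -/

section Switching

variable {Γ : Type*} [AddCommGroup Γ] {a b : Γ} {T : Set Γ}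

/-- The four steps `a`, `-a`, `b`, `-b` are distinct. -/
structure HasDistinctSteps (a b : Γ) : Prop where
  two_left : a + a ≠ 0
  two_right : b + b ≠ 0
  ne : a ≠ b
  add_ne_zero : a + b ≠ 0

/-- No two of the squares `v, v + a, v + a + b, v + b` with `v ∈ T` share an edge. -/
structure IsSwitchSet (a b : Γ) (T : Set Γ) : Prop where
  sub_left_notMem : ∀ v ∈ T, v - a ∉ T
  sub_right_notMem : ∀ v ∈ T, v - b ∉ T

lemma HasDistinctSteps.symm (h : HasDistinctSteps a b) : HasDistinctSteps b a :=
  ⟨h.two_right, h.two_left, h.ne.symm, by rw [add_comm]; exact h.add_ne_zero⟩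

lemma IsSwitchSet.symm (h : IsSwitchSet a b T) : IsSwitchSet b a T :=
  ⟨h.sub_right_notMem, h.sub_left_notMem⟩

/-- The graph obtained from the `a`-edges by replacing, in each square `v, v + a, v + a + b, v + b`
with `v ∈ T`, the two `a`-edges by the two `b`-edges. -/
def switched (a b : Γ) (T : Set Γ) : SimpleGraph Γ :=
  fromRel fun x y =>
    (y = x + a ∧ ¬(x ∈ T ∨ x - b ∈ T)) ∨ (y = x + b ∧ (x ∈ T ∨ x - a ∈ T))

lemma neighborSet_switched (h : HasDistinctSteps a b) (v : Γ) :
    (switched a b T).neighborSet v =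
      {w | (w = v + a ∧ ¬(v ∈ T ∨ v - b ∈ T)) ∨ (w = v - a ∧ ¬(v - a ∈ T ∨ v - a - b ∈ T)) ∨
        (w = v + b ∧ (v ∈ T ∨ v - a ∈ T)) ∨ (w = v - b ∧ (v - b ∈ T ∨ v - a - b ∈ T))} := by
  have ha : a ≠ 0 := fun h0 => h.two_left (by simp [h0])
  have hb : b ≠ 0 := fun h0 => h.two_right (by simp [h0])
  ext w
  have hwa : v = w + a ↔ w = v - a := by rw [eq_sub_iff_add_eq, eq_comm]
  have hwb : v = w + b ↔ w = v - b := by rw [eq_sub_iff_add_eq, eq_comm]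
  have hcomm : v - b - a = v - a - b := sub_right_comm _ _ _
  simp only [mem_neighborSet, switched, fromRel_adj, Set.mem_ofPred_eq, hwa, hwb]
  constructor
  · rintro ⟨-, (h | h) | ⟨rfl, h⟩ | ⟨rfl, h⟩⟩
    · exact Or.inl h
    · exact Or.inr (Or.inr (Or.inl h))
    · exact Or.inr (Or.inl ⟨rfl, h⟩)
    · exact Or.inr (Or.inr (Or.inr ⟨rfl, hcomm ▸ h⟩))
  · rintro (⟨rfl, h⟩ | ⟨rfl, h⟩ | ⟨rfl, h⟩ | ⟨rfl, h⟩)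
    · exact ⟨by simpa using ha, Or.inl (Or.inl ⟨rfl, h⟩)⟩
    · exact ⟨by simpa [eq_sub_iff_add_eq] using ha, Or.inr (Or.inl ⟨rfl, h⟩)⟩
    · exact ⟨by simpa using hb, Or.inl (Or.inr ⟨rfl, h⟩)⟩
    · exact ⟨by simpa [eq_sub_iff_add_eq] using hb, Or.inr (Or.inr ⟨rfl, hcomm ▸ h⟩)⟩

lemma switched_adj_add_left (h : HasDistinctSteps a b) {x : Γ} :
    (switched a b T).Adj x (x + a) ↔ ¬(x ∈ T ∨ x - b ∈ T) := by
  have hmem := Set.ext_iff.1 (neighborSet_switched (T := T) h x) (x + a)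
  rw [mem_neighborSet] at hmem
  rw [hmem]
  simp [sub_eq_add_neg, h.ne, eq_neg_iff_add_eq_zero, h.two_left, h.add_ne_zero]

lemma switched_adj_add_right (h : HasDistinctSteps a b) {x : Γ} :
    (switched a b T).Adj x (x + b) ↔ x ∈ T ∨ x - a ∈ T := by
  have hmem := Set.ext_iff.1 (neighborSet_switched (T := T) h x) (x + b)
  rw [mem_neighborSet] at hmem
  rw [hmem]
  simp [sub_eq_add_neg, h.ne.symm, eq_neg_iff_add_eq_zero, h.two_right, h.symm.add_ne_zero]

lemma ncard_neighborSet_switched (h : HasDistinctSteps a b) (hT : IsSwitchSet a b T) (v : Γ) :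
    ((switched a b T).neighborSet v).ncard = 2 := by
  have hva := hT.sub_left_notMem v
  have hvb := hT.sub_right_notMem v
  have hvab := hT.sub_right_notMem (v - a)
  have hvba := hT.sub_left_notMem (v - b)
  rw [sub_right_comm] at hvba
  have ⟨haa, hbb, hab, hab'⟩ := h
  have hba' : b + a ≠ 0 := h.symm.add_ne_zero
  have hpair {p q : Γ} (hpq : p ≠ q) : {w | w = p ∨ w = q}.ncard = 2 := Set.ncard_pair hpq
  rw [neighborSet_switched h]
  by_cases v ∈ T <;> by_cases v - a ∈ T <;> by_cases v - b ∈ T <;> by_cases v - a - b ∈ T <;>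
    first
    | exfalso; tauto
    | simp only [*, not_true, not_false_eq_true, or_true, or_self, and_true, and_false,
        or_false, false_or]
      apply hpair
      simpa [sub_eq_add_neg, eq_neg_iff_add_eq_zero, neg_eq_iff_add_eq_zero, neg_add_eq_zero]

lemma switched_le_cayley_pair : switched a b T ≤ cayley {a, b} := by
  rintro x y ⟨hne, (⟨rfl, -⟩ | ⟨rfl, -⟩) | (⟨rfl, -⟩ | ⟨rfl, -⟩)⟩ <;>
    exact cayley_adj.2 ⟨hne, by simp⟩

lemma switched_swap_adj_iff_not (h : HasDistinctSteps a b) {x y : Γ}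
    (hxy : (cayley {a, b}).Adj x y) :
    (switched b a T).Adj x y ↔ ¬(switched a b T).Adj x y := by
  have hforward {x d : Γ} (hd : d ∈ ({a, b} : Set Γ)) :
      (switched b a T).Adj x (x + d) ↔ ¬(switched a b T).Adj x (x + d) := by
    rcases hd with rfl | rfl
    · rw [switched_adj_add_left h, switched_adj_add_right h.symm, not_not]
    · rw [switched_adj_add_right h, switched_adj_add_left h.symm]
  rcases (cayley_adj.1 hxy).2 with hd | hd
  · rw [adj_comm, (switched a b T).adj_comm]
    simpa using hforward (x := y) hd
  · simpa using hforward (x := x) hd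

lemma isHamDecomposable_cayley_pair (h : HasDistinctSteps a b) (hT : IsSwitchSet a b T)
    (hab : (switched a b T).Connected) (hba : (switched b a T).Connected) :
    IsHamDecomposable (cayley {a, b}) 2 := by
  have hle : switched b a T ≤ cayley {a, b} := Set.pair_comm a b ▸ switched_le_cayley_pair
  have hsup : switched a b T ⊔ switched b a T = cayley {a, b} := by
    refine le_antisymm (sup_le switched_le_cayley_pair hle) fun x y hxy => ?_
    rw [sup_adj, switched_swap_adj_iff_not h hxy]
    exact em _
  have hdisj : Disjoint (switched a b T) (switched b a T) :=
    disjoint_iff_inf_le.2 fun x y hxy => (switched_swap_adj_iff_not h (hle hxy.2)).1 hxy.2 hxy.1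
  rw [← hsup]
  exact IsCycleGraph.sup_isHamDecomposable ⟨ncard_neighborSet_switched h hT, hab⟩
    ⟨ncard_neighborSet_switched h.symm hT.symm, hba⟩ hdisj

end Switching

/-! ### Three enumerations of `±{1, …, l}` with zero sums -/

section ZeroSumArray

/-- Some multiset of triples with sum zero has each of its three columns equal to `M`. -/
def HasZeroSumArray (M : Multiset ℤ) : Prop :=
  ∃ R : Multiset (ℤ × ℤ × ℤ), (∀ r ∈ R, r.1 + r.2.1 + r.2.2 = 0) ∧
    R.map (fun r => r.1) = M ∧ R.map (fun r => r.2.1) = M ∧ R.map (fun r => r.2.2) = M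

lemma hasZeroSumArray_zero : HasZeroSumArray 0 := ⟨0, by simp⟩

lemma HasZeroSumArray.add {M N : Multiset ℤ} (hM : HasZeroSumArray M) (hN : HasZeroSumArray N) :
    HasZeroSumArray (M + N) := by
  obtain ⟨R, hR, rfl, hR₂, hR₃⟩ := hM
  obtain ⟨Q, hQ, rfl, hQ₂, hQ₃⟩ := hN
  refine ⟨R + Q, fun r hr => (Multiset.mem_add.1 hr).elim (hR r) (hQ r), ?_⟩
  simp [hR₂, hR₃, hQ₂, hQ₃]

lemma hasZeroSumArray_sum {ι : Type*} {f : ι → Multiset ℤ} (hf : ∀ j, HasZeroSumArray (f j))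
    (s : Finset ι) : HasZeroSumArray (∑ j ∈ s, f j) :=
  Finset.sum_induction f HasZeroSumArray (fun _ _ => HasZeroSumArray.add) hasZeroSumArray_zero
    fun j _ => hf j

lemma coe_map_eq_sum_map_singleton {α β : Type*} (L : List α) (g : α → β) :
    (L : Multiset α).map g = (L.map fun r => ({g r} : Multiset β)).sum := by
  induction L with
  | nil => rfl
  | cons r L ih =>
    rw [List.map_cons, List.sum_cons, ← Multiset.cons_coe, Multiset.map_cons, ih,
      Multiset.singleton_add]

lemma hasZeroSumArray_of_rows {M : Multiset ℤ} (L : List (ℤ × ℤ × ℤ))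
    (hL : ∀ r ∈ L, r.1 + r.2.1 + r.2.2 = 0) (h₁ : (L.map fun r => {r.1}).sum = M)
    (h₂ : (L.map fun r => {r.2.1}).sum = M) (h₃ : (L.map fun r => {r.2.2}).sum = M) :
    HasZeroSumArray M :=
  ⟨L, hL, (coe_map_eq_sum_map_singleton L _).trans h₁, (coe_map_eq_sum_map_singleton L _).trans h₂,
    (coe_map_eq_sum_map_singleton L _).trans h₃⟩

lemma hasZeroSumArray_triple {x y z : ℤ} (h : x + y + z = 0) :
    HasZeroSumArray ({x} + {y} + {z}) := by
  refine hasZeroSumArray_of_rows [(x, y, z), (y, z, x), (z, x, y)] (by simp; lia) ?_ ?_ ?_ <;>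
  · simp only [List.map_cons, List.map_nil, List.sum_cons, List.sum_nil]
    abel

/-- The multiset `±{1, …, l}`. -/
def signedRange (l : ℕ) : Multiset ℤ :=
  ∑ i ∈ Finset.range l, ({(i : ℤ) + 1} + {-((i : ℤ) + 1)})

/-- A zero-sum triple of the partition of `±{1, …, 3 * A}`, with entry `j + 1` of
smallest absolute value. -/
def risingTriple (A j : ℕ) : Multiset ℤ :=
  {(j : ℤ) + 1} + {(A : ℤ) + j + 1} + {-((A : ℤ) + 2 * j + 2)}

/-- A zero-sum triple of the partition of `±{1, …, 3 * A}`, with entry `j - A` of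
smallest absolute value. -/
def fallingTriple (A j : ℕ) : Multiset ℤ :=
  {-((A : ℤ) - j)} + {2 * (A : ℤ) + j + 1} + {-((A : ℤ) + 2 * j + 1)}

lemma hasZeroSumArray_risingTriple (A j : ℕ) : HasZeroSumArray (risingTriple A j) :=
  hasZeroSumArray_triple (by ring)

lemma hasZeroSumArray_fallingTriple (A j : ℕ) : HasZeroSumArray (fallingTriple A j) :=
  hasZeroSumArray_triple (by ring)

lemma sum_range_two_mul {M : Type*} [AddCommMonoid M] (g : ℕ → M) (A : ℕ) :
    ∑ i ∈ Finset.range (2 * A), g i = ∑ j ∈ Finset.range A, (g (2 * j) + g (2 * j + 1)) := by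
  induction A with
  | zero => simp
  | succ A ih =>
    rw [Finset.sum_range_succ, ← ih, mul_add_one, Finset.sum_range_succ, Finset.sum_range_succ,
      add_assoc]

lemma signedRange_three_mul (A : ℕ) :
    signedRange (3 * A) =
      ∑ j ∈ Finset.range A, risingTriple A j + ∑ j ∈ Finset.range A, fallingTriple A j := by
  have hpos : ∑ i ∈ Finset.range (3 * A), ({(i : ℤ) + 1} : Multiset ℤ) =
      ∑ j ∈ Finset.range A, {(j : ℤ) + 1} + ∑ j ∈ Finset.range A, {(A : ℤ) + j + 1} +
        ∑ j ∈ Finset.range A, {2 * (A : ℤ) + j + 1} := by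
    rw [show 3 * A = A + A + A by ring, Finset.sum_range_add, Finset.sum_range_add]
    push_cast
    simp only [← two_mul]
  have hneg : ∑ i ∈ Finset.range (3 * A), ({-((i : ℤ) + 1)} : Multiset ℤ) =
      ∑ j ∈ Finset.range A, {-((A : ℤ) - j)} +
        ∑ j ∈ Finset.range A, ({-((A : ℤ) + 2 * j + 1)} + {-((A : ℤ) + 2 * j + 2)}) := by
    rw [show 3 * A = A + 2 * A by ring, Finset.sum_range_add, sum_range_two_mul,
      ← Finset.sum_range_reflect]
    congr 1
    · refine Finset.sum_congr rfl fun j hj => ?_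
      have := Finset.mem_range.1 hj
      congr 1
      lia
  rw [signedRange, Finset.sum_add_distrib, hpos, hneg]
  simp only [risingTriple, fallingTriple, Finset.sum_add_distrib]
  abel

lemma sum_range_eq_list_sum_add {M : Type*} [AddCommMonoid M] {A : ℕ} {J : List ℕ} (hJ : J.Nodup)
    (hJA : ∀ j ∈ J, j < A) (f : ℕ → M) :
    ∑ j ∈ Finset.range A, f j = (J.map f).sum + ∑ j ∈ Finset.range A \ J.toFinset, f j := by
  rw [← List.sum_toFinset f hJ, add_comm, Finset.sum_sdiff]
  exact fun j hj => Finset.mem_range.2 (hJA j (List.mem_toFinset.1 hj))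

/- Only boundedly many triples of the partition of `±{1, …, 3 * A}` have to be rearranged in order
to absorb the new elements. -/
lemma hasZeroSumArray_signedRange_of_exchange {A r l : ℕ} (hl : l = 3 * A + r) {J₁ J₂ : List ℕ}
    (hJ₁ : J₁.Nodup) (hJ₁A : ∀ j ∈ J₁, j < A) (hJ₂ : J₂.Nodup) (hJ₂A : ∀ j ∈ J₂, j < A)
    (h : HasZeroSumArray ((J₁.map (risingTriple A)).sum + (J₂.map (fallingTriple A)).sum +
      ∑ i ∈ Finset.range r, ({((3 * A + i : ℕ) : ℤ) + 1} + {-(((3 * A + i : ℕ) : ℤ) + 1)}))) :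
    HasZeroSumArray (signedRange l) := by
  have hrest := ((hasZeroSumArray_sum (hasZeroSumArray_risingTriple A)
    (Finset.range A \ J₁.toFinset)).add (hasZeroSumArray_sum (hasZeroSumArray_fallingTriple A)
    (Finset.range A \ J₂.toFinset))).add h
  convert hrest using 1
  rw [hl, signedRange, Finset.sum_range_add, ← signedRange, signedRange_three_mul,
    sum_range_eq_list_sum_add hJ₁ hJ₁A, sum_range_eq_list_sum_add hJ₂ hJ₂A]
  abel

lemma hasZeroSumArray_signedRange_three_mul (A : ℕ) :
    HasZeroSumArray (signedRange (3 * A)) := by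
  rw [signedRange_three_mul]
  exact (hasZeroSumArray_sum (hasZeroSumArray_risingTriple A) _).add
    (hasZeroSumArray_sum (hasZeroSumArray_fallingTriple A) _)

/- The explicit arrays below were found by computer search. -/

lemma hasZeroSumArray_signedRange_six_mul_add_one {B : ℕ} (hB : 2 ≤ B) :
    HasZeroSumArray (signedRange (6 * B + 1)) := by
  have hcast : ((B - 1 : ℕ) : ℤ) = B - 1 := Nat.cast_pred (by lia)
  have hcast₂ : ((2 * B - 1 : ℕ) : ℤ) = 2 * B - 1 := by lia
  refine hasZeroSumArray_signedRange_of_exchange (A := 2 * B) (r := 1) (by ring)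
    (J₁ := [0, 2 * B - 1, B - 1]) (J₂ := [0, B - 1]) (by simp; lia) (by simp; lia) (by simp; lia)
    (by simp; lia) (hasZeroSumArray_of_rows
      [(-(6 * B + 1), 2 * B, 4 * B + 1), (-(6 * B), 5 * B, B), (-(4 * B), B, 3 * B),
       (-(4 * B - 1), 6 * B + 1, -(2 * B + 2)), (-(2 * B + 2), 2 * B + 1, 1),
       (-(2 * B + 1), -(4 * B), 6 * B + 1), (-(2 * B), 4 * B + 1, -(2 * B + 1)),
       (-(B + 1), -(4 * B - 1), 5 * B), (1, -(2 * B + 2), 2 * B + 1), (B, 1, -(B + 1)),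
       (2 * B, -(6 * B), 4 * B), (2 * B + 1, 4 * B, -(6 * B + 1)), (3 * B, 3 * B, -(6 * B)),
       (4 * B, -(2 * B), -(2 * B)), (4 * B + 1, -(6 * B + 1), 2 * B),
       (5 * B, -(B + 1), -(4 * B - 1)), (6 * B + 1, -(2 * B + 1), -(4 * B))]
      (by simp; lia) ?_ ?_ ?_)
  all_goals
    simp only [List.map_cons, List.map_nil, List.sum_cons, List.sum_nil, Finset.sum_range_succ,
      Finset.sum_range_zero, risingTriple, fallingTriple, hcast, hcast₂]
    push_cast
    ring_nf
    abel

lemma hasZeroSumArray_signedRange_six_mul_add_two {B : ℕ} (hB : 2 ≤ B) :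
    HasZeroSumArray (signedRange (6 * B + 2)) := by
  have hcast : ((B - 1 : ℕ) : ℤ) = B - 1 := Nat.cast_pred (by lia)
  refine hasZeroSumArray_signedRange_of_exchange (A := 2 * B) (r := 2) (by ring)
    (J₁ := [0, B - 1, B]) (J₂ := [0]) (by simp; lia) (by simp; lia) (by simp)
    (by simp; lia) (hasZeroSumArray_of_rows
      [(-(6 * B + 2), 1, 6 * B + 1), (-(6 * B + 1), 3 * B, 3 * B + 1),
       (-(4 * B + 2), 2 * B + 1, 2 * B + 1), (-(4 * B), -(2 * B + 2), 6 * B + 2),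
       (-(2 * B + 2), B + 1, B + 1), (-(2 * B + 1), 4 * B + 1, -(2 * B)),
       (-(2 * B), 6 * B + 2, -(4 * B + 2)), (1, 6 * B + 1, -(6 * B + 2)), (B, -(2 * B), B),
       (B + 1, B, -(2 * B + 1)), (2 * B + 1, -(6 * B + 2), 4 * B + 1),
       (3 * B, 3 * B + 1, -(6 * B + 1)), (3 * B + 1, -(6 * B + 1), 3 * B),
       (4 * B + 1, -(4 * B + 2), 1), (6 * B + 1, -(2 * B + 1), -(4 * B)),
       (6 * B + 2, -(4 * B), -(2 * B + 2))]
      (by simp; lia) ?_ ?_ ?_)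
  all_goals
    simp only [List.map_cons, List.map_nil, List.sum_cons, List.sum_nil, Finset.sum_range_succ,
      Finset.sum_range_zero, risingTriple, fallingTriple, hcast]
    push_cast
    ring_nf
    abel

lemma hasZeroSumArray_signedRange_six_mul_add_four {B : ℕ} (hB : 2 ≤ B) :
    HasZeroSumArray (signedRange (6 * B + 4)) := by
  have hcast : ((B - 1 : ℕ) : ℤ) = B - 1 := Nat.cast_pred (by lia)
  refine hasZeroSumArray_signedRange_of_exchange (A := 2 * B + 1) (r := 1) (by ring)
    (J₁ := [0, 2 * B, B - 1]) (J₂ := [2 * B, B]) (by simp; lia) (by simp; lia) (by simp; lia)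
    (by simp; lia) (hasZeroSumArray_of_rows
      [(-(6 * B + 4), 2 * B + 2, 4 * B + 2), (-(6 * B + 3), 4 * B + 2, 2 * B + 1),
       (-(6 * B + 2), -1, 6 * B + 3), (-(4 * B + 2), -(B + 1), 5 * B + 3),
       (-(4 * B + 1), B, 3 * B + 1), (-(2 * B + 3), 6 * B + 4, -(4 * B + 1)), (-(B + 1), 1, B),
       (-1, -(6 * B + 3), 6 * B + 4), (1, 6 * B + 3, -(6 * B + 4)), (B, 5 * B + 3, -(6 * B + 3)),
       (2 * B + 1, 2 * B + 1, -(4 * B + 2)), (2 * B + 2, -(2 * B + 3), 1),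
       (3 * B + 1, 3 * B + 1, -(6 * B + 2)), (4 * B + 2, -(6 * B + 4), 2 * B + 2),
       (5 * B + 3, -(4 * B + 2), -(B + 1)), (6 * B + 3, -(6 * B + 2), -1),
       (6 * B + 4, -(4 * B + 1), -(2 * B + 3))]
      (by simp; lia) ?_ ?_ ?_)
  all_goals
    simp only [List.map_cons, List.map_nil, List.sum_cons, List.sum_nil, Finset.sum_range_succ,
      Finset.sum_range_zero, risingTriple, fallingTriple, hcast]
    push_cast
    ring_nf
    abel

lemma hasZeroSumArray_signedRange_six_mul_add_five {B : ℕ} (hB : 1 ≤ B) :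
    HasZeroSumArray (signedRange (6 * B + 5)) := by
  refine hasZeroSumArray_signedRange_of_exchange (A := 2 * B + 1) (r := 2) (by ring)
    (J₁ := [0, B]) (J₂ := [0, B]) (by simp; lia) (by simp; lia) (by simp; lia)
    (by simp; lia) (hasZeroSumArray_of_rows
      [(-(6 * B + 5), 1, 6 * B + 4), (-(6 * B + 4), B + 1, 5 * B + 3),
       (-(4 * B + 3), 6 * B + 5, -(2 * B + 2)), (-(4 * B + 2), -(2 * B + 3), 6 * B + 5),
       (-(2 * B + 3), 2 * B + 2, 1), (-(2 * B + 2), 4 * B + 3, -(2 * B + 1)),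
       (-(2 * B + 1), -(2 * B + 2), 4 * B + 3), (-(B + 1), 5 * B + 3, -(4 * B + 2)),
       (1, 6 * B + 4, -(6 * B + 5)), (B + 1, -(4 * B + 3), 3 * B + 2),
       (2 * B + 2, -(B + 1), -(B + 1)), (3 * B + 2, 3 * B + 2, -(6 * B + 4)),
       (4 * B + 3, -(6 * B + 5), 2 * B + 2), (5 * B + 3, -(6 * B + 4), B + 1),
       (6 * B + 4, -(2 * B + 1), -(4 * B + 3)), (6 * B + 5, -(4 * B + 2), -(2 * B + 3))]
      (by simp; lia) ?_ ?_ ?_)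
  all_goals
    simp only [List.map_cons, List.map_nil, List.sum_cons, List.sum_nil, Finset.sum_range_succ,
      Finset.sum_range_zero, risingTriple, fallingTriple]
    push_cast
    ring_nf
    abel

lemma hasZeroSumArray_signedRange_four : HasZeroSumArray (signedRange 4) :=
  hasZeroSumArray_of_rows
    [(-4, 1, 3), (-3, -1, 4), (-2, 3, -1), (-1, 4, -3), (3, -4, 1), (1, -3, 2), (2, 2, -4),
     (4, -2, -2)]
    (by decide) (by decide) (by decide) (by decide)

lemma hasZeroSumArray_signedRange_five : HasZeroSumArray (signedRange 5) :=
  hasZeroSumArray_of_rows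
    [(-5, 1, 4), (-4, -1, 5), (-3, 2, 1), (3, -5, 2), (2, 3, -5), (1, -4, 3), (-2, 4, -2),
     (-1, 5, -4), (4, -3, -1), (5, -2, -3)]
    (by decide) (by decide) (by decide) (by decide)

lemma hasZeroSumArray_signedRange_seven : HasZeroSumArray (signedRange 7) :=
  hasZeroSumArray_of_rows
    [(-7, 1, 6), (-6, -1, 7), (-5, 2, 3), (-4, 3, 1), (4, -6, 2), (2, -7, 5), (3, 4, -7),
     (1, -5, 4), (-3, 5, -2), (-2, 6, -4), (-1, 7, -6), (6, -3, -3), (5, -4, -1), (7, -2, -5)]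
    (by decide) (by decide) (by decide) (by decide)

lemma hasZeroSumArray_signedRange_eight : HasZeroSumArray (signedRange 8) :=
  hasZeroSumArray_of_rows
    [(-8, 1, 7), (-7, -1, 8), (-6, 2, 4), (-5, 3, 2), (-4, -2, 6), (4, -7, 3), (5, -6, 1),
     (2, 4, -6), (1, 7, -8), (3, -8, 5), (-2, 6, -4), (-1, 8, -7), (-3, 5, -2), (7, -4, -3),
     (6, -5, -1), (8, -3, -5)]
    (by decide) (by decide) (by decide) (by decide)

lemma hasZeroSumArray_signedRange_ten : HasZeroSumArray (signedRange 10) :=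
  hasZeroSumArray_of_rows
    [(-10, 1, 9), (-9, -1, 10), (-8, 2, 6), (-7, 3, 4), (-6, -2, 8), (-5, 4, 1), (6, -9, 3),
     (4, -6, 2), (7, -5, -2), (5, -10, 5), (3, 5, -8), (2, 7, -9), (-1, 6, -5), (-2, 8, -6),
     (-4, -3, 7), (-3, 10, -7), (1, 9, -10), (9, -8, -1), (8, -4, -4), (10, -7, -3)]
    (by decide) (by decide) (by decide) (by decide)

theorem hasZeroSumArray_signedRange {l : ℕ} (h₁ : l ≠ 1) (h₂ : l ≠ 2) :
    HasZeroSumArray (signedRange l) := by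
  obtain ⟨B, hB⟩ : ∃ B, l = 6 * B ∨ l = 6 * B + 3 ∨ l = 6 * B + 1 ∨ l = 6 * B + 2 ∨
    l = 6 * B + 4 ∨ l = 6 * B + 5 := ⟨l / 6, by lia⟩
  rcases hB with rfl | rfl | rfl | rfl | rfl | rfl
  · rw [show 6 * B = 3 * (2 * B) by ring]
    exact hasZeroSumArray_signedRange_three_mul _
  · rw [show 6 * B + 3 = 3 * (2 * B + 1) by ring]
    exact hasZeroSumArray_signedRange_three_mul _
  · obtain rfl | hB : B = 1 ∨ 2 ≤ B := by lia
    · exact hasZeroSumArray_signedRange_seven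
    · exact hasZeroSumArray_signedRange_six_mul_add_one hB
  · obtain rfl | hB : B = 1 ∨ 2 ≤ B := by lia
    · exact hasZeroSumArray_signedRange_eight
    · exact hasZeroSumArray_signedRange_six_mul_add_two hB
  · obtain rfl | rfl | hB : B = 0 ∨ B = 1 ∨ 2 ≤ B := by lia
    · exact hasZeroSumArray_signedRange_four
    · exact hasZeroSumArray_signedRange_ten
    · exact hasZeroSumArray_signedRange_six_mul_add_four hB
  · obtain rfl | hB : B = 0 ∨ 1 ≤ B := by lia
    · exact hasZeroSumArray_signedRange_five
    · exact hasZeroSumArray_signedRange_six_mul_add_five hB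

lemma signedRange_succ (l : ℕ) :
    signedRange (l + 1) = signedRange l + ({(l : ℤ) + 1} + {-((l : ℤ) + 1)}) :=
  Finset.sum_range_succ _ _

lemma mem_signedRange {l : ℕ} {d : ℤ} : d ∈ signedRange l ↔ d ≠ 0 ∧ |d| ≤ l := by
  induction l with
  | zero => simp [signedRange]
  | succ l ih =>
    simp only [signedRange_succ, Multiset.mem_add, Multiset.mem_singleton, ih, abs_le]
    lia

lemma nodup_signedRange (l : ℕ) : (signedRange l).Nodup := by
  induction l with
  | zero => simp [signedRange]
  | succ l ih =>
    simp only [signedRange_succ, Multiset.nodup_add, ih, Multiset.nodup_singleton,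
      Multiset.disjoint_left, Multiset.mem_add, Multiset.mem_singleton, mem_signedRange, abs_le]
    refine ⟨trivial, ⟨trivial, trivial, ?_⟩, ?_⟩ <;> lia

lemma card_signedRange (l : ℕ) : (signedRange l).card = 2 * l := by
  simp [signedRange, mul_comm]

lemma bijOn_of_map_eq {α β : Type*} {R : Multiset α} {M : Multiset β} {g : α → β}
    (hM : M.Nodup) (hg : R.map g = M) :
    Set.BijOn (fun r : {r // r ∈ R} => g r) Set.univ {d | d ∈ M} := by
  subst hg
  refine ⟨fun r _ => Multiset.mem_map_of_mem g r.2, fun r _ q _ hrq => Subtype.ext ?_, ?_⟩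
  · exact Multiset.inj_on_of_nodup_map hM _ r.2 _ q.2 hrq
  · intro d hd
    obtain ⟨r, hr, rfl⟩ := Multiset.mem_map.1 hd
    exact ⟨⟨r, hr⟩, trivial, rfl⟩

end ZeroSumArray

/-! ### Potentials on the cycle -/

section Potential

variable {Γ : Type*} [AddCommGroup Γ]

/-- The sequence `0, x, x + y, 0, x, 0, x, …`. When `x + y + z = 0`, its successive differences are
`x, y, z, x, -x, x, -x, …`. -/
def trianglePotential (x y : Γ) : ℕ → Γ
  | 0 => 0
  | 1 => x
  | 2 => x + y
  | v + 3 => if Even v then 0 else x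

lemma trianglePotential_of_odd {k : ℕ} (hk : Odd k) (hk3 : 3 ≤ k) (x y : Γ) :
    trianglePotential x y k = 0 := by
  obtain ⟨v, rfl⟩ := Nat.exists_eq_add_of_le' hk3
  simp [trianglePotential, (Nat.odd_add'.1 hk).1 (by decide)]

lemma bijOn_trianglePotential_succ_sub {ι : Type*} {D : Set Γ} {x y z : ι → Γ}
    (hx : Set.BijOn x Set.univ D) (hy : Set.BijOn y Set.univ D) (hz : Set.BijOn z Set.univ D)
    (hsum : ∀ i, x i + y i + z i = 0) (hneg : ∀ d ∈ D, -d ∈ D) (v : ℕ) :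
    Set.BijOn (fun i => trianglePotential (x i) (y i) (v + 1) - trianglePotential (x i) (y i) v)
      Set.univ D := by
  have hz' (i : ι) : z i = 0 - (x i + y i) := by rw [eq_sub_iff_add_eq', hsum]
  have hx' : Set.BijOn (fun i => -x i) Set.univ D :=
    (Set.BijOn.mk hneg neg_injective.injOn fun d hd => ⟨-d, hneg d hd, neg_neg d⟩).comp hx
  match v with
  | 0 => exact hx.congr fun i _ => (sub_zero (x i)).symm
  | 1 => exact hy.congr fun i _ => (add_sub_cancel_left (x i) (y i)).symm
  | 2 => exact hz.congr fun i _ => by simp [trianglePotential, hz']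
  | v + 3 =>
    by_cases hv : Even v
    · exact hx.congr fun i _ => by simp [trianglePotential, Nat.even_add_one, hv]
    · exact hx'.congr fun i _ => by simp [trianglePotential, Nat.even_add_one, hv]

lemma exists_potential_of_zero_sum {k : ℕ} (hk : Odd k) (hk3 : 3 ≤ k) {ι : Type*} {D : Set Γ}
    {x y z : ι → Γ} (hx : Set.BijOn x Set.univ D) (hy : Set.BijOn y Set.univ D)
    (hz : Set.BijOn z Set.univ D) (hsum : ∀ i, x i + y i + z i = 0) (hneg : ∀ d ∈ D, -d ∈ D) :
    ∃ S : ι → ZMod k → Γ, ∀ c, Set.BijOn (fun i => S i (c + 1) - S i c) Set.univ D := by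
  have : NeZero k := ⟨by lia⟩
  have hval : (1 : ZMod k).val = 1 := ZMod.val_one'' (by lia)
  have hsucc (x y : Γ) (c : ZMod k) :
      trianglePotential x y (c + 1).val = trianglePotential x y (c.val + 1) := by
    rw [ZMod.val_add, hval]
    obtain h | h : c.val + 1 < k ∨ c.val + 1 = k := (Nat.succ_le_of_lt c.val_lt).lt_or_eq
    · rw [Nat.mod_eq_of_lt h]
    · rw [h, Nat.mod_self, trianglePotential_of_odd hk hk3, trianglePotential]
  refine ⟨fun i c => trianglePotential (x i) (y i) c.val, fun c => ?_⟩
  simp only [hsucc]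
  exact bijOn_trianglePotential_succ_sub hx hy hz hsum hneg c.val

lemma injOn_intCast_zmod (m : ℕ) :
    Set.InjOn (Int.cast : ℤ → ZMod (2 * m + 1)) {z | |z| ≤ m} := by
  intro z hz w hw h
  rw [Set.mem_ofPred_eq, abs_le] at hz hw
  rw [ZMod.intCast_eq_intCast_iff_dvd_sub] at h
  have hzero := Int.eq_zero_of_abs_lt_dvd h (by rw [abs_lt]; lia)
  lia

lemma exists_potential_signedRange {k m l : ℕ} (hk : Odd k) (hk3 : 3 ≤ k) (hlm : l ≤ m)
    (h₁ : l ≠ 1) (h₂ : l ≠ 2) :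
    ∃ (ι : Type) (_ : Finite ι) (S : ι → ZMod k → ZMod (2 * m + 1)), Nat.card ι = 2 * l ∧
      ∀ c, Set.BijOn (fun i => S i (c + 1) - S i c) Set.univ
        (Int.cast '' {z : ℤ | z ∈ signedRange l}) := by
  obtain ⟨R, hR, hR₁, hR₂, hR₃⟩ := hasZeroSumArray_signedRange h₁ h₂
  have hcast : Set.BijOn (Int.cast : ℤ → ZMod (2 * m + 1)) {z | z ∈ signedRange l}
      (Int.cast '' {z : ℤ | z ∈ signedRange l}) :=
    ((injOn_intCast_zmod m).mono fun z hz =>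
      (mem_signedRange.1 hz).2.trans (by exact_mod_cast hlm)).bijOn_image
  have hcol {g : ℤ × ℤ × ℤ → ℤ} (hg : R.map g = signedRange l) :=
    bijOn_of_map_eq (nodup_signedRange l) hg
  obtain ⟨S, hS⟩ := exists_potential_of_zero_sum hk hk3 (hcast.comp (hcol hR₁))
    (hcast.comp (hcol hR₂)) (hcast.comp (hcol hR₃))
    (fun r => by simpa using congrArg (Int.cast : ℤ → ZMod (2 * m + 1)) (hR r r.2))
    (by
      rintro _ ⟨z, hz, rfl⟩
      exact ⟨-z, by simpa [mem_signedRange] using hz, by simp⟩)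
  have hnodup : R.Nodup := Multiset.Nodup.of_map _ (hR₁ ▸ nodup_signedRange l)
  refine ⟨{r // r ∈ R}, R.finite_toSet, S, ?_, hS⟩
  calc Nat.card {r // r ∈ R} = R.card := Nat.subtype_card ⟨R, hnodup⟩ fun _ => Iff.rfl
    _ = 2 * l := by rw [← card_signedRange, ← hR₁, Multiset.card_map]

end Potential

/-! ### Twisted grids and staircases of squares -/

section Grid

variable {Γ : Type*} [AddCommGroup Γ] {a b : Γ} {g N s H : ℤ}

/-- The vertex in row `j` and column `i`: steps by `a` run along rows, steps by `b` along
columns. -/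
def gridVertex (a b : Γ) (j i : ℤ) : Γ := j • b + i • a

lemma gridVertex_add_left_step (j i : ℤ) : gridVertex a b j i + a = gridVertex a b j (i + 1) := by
  rw [gridVertex, gridVertex, add_one_zsmul, add_assoc]

lemma gridVertex_add_right_step (j i : ℤ) : gridVertex a b j i + b = gridVertex a b (j + 1) i := by
  rw [gridVertex, gridVertex, add_one_zsmul, add_right_comm]

lemma gridVertex_sub_left_step (j i : ℤ) : gridVertex a b j i - a = gridVertex a b j (i - 1) := by
  rw [sub_eq_iff_eq_add, gridVertex_add_left_step, sub_add_cancel]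

lemma gridVertex_sub_right_step (j i : ℤ) : gridVertex a b j i - b = gridVertex a b (j - 1) i := by
  rw [sub_eq_iff_eq_add, gridVertex_add_right_step, sub_add_cancel]

/-- `Γ` is laid out as a grid with rows `0, …, g - 1`, each an `a`-cycle of length `N`, in which
stepping by `b` beyond the last row leads back to the first row, shifted by `s` columns. -/
structure IsTwistedGrid (a b : Γ) (g N s : ℤ) : Prop where
  period : N • a = 0
  wrap : g • b = s • a
  eq_and_dvd : ∀ j i j' i' : ℤ, 0 ≤ j → j < g → 0 ≤ j' → j' < g →
    gridVertex a b j i = gridVertex a b j' i' → j = j' ∧ N ∣ i - i'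
  exists_eq : ∀ v, ∃ j i : ℤ, 0 ≤ j ∧ j < g ∧ gridVertex a b j i = v

lemma IsTwistedGrid.gridVertex_eq_of_dvd (hG : IsTwistedGrid a b g N s) {j i i' : ℤ}
    (h : N ∣ i - i') : gridVertex a b j i = gridVertex a b j i' := by
  obtain ⟨q, hq⟩ := h
  rw [gridVertex, gridVertex, ← sub_add_cancel i i', add_zsmul, hq, mul_comm, mul_zsmul, hG.period,
    zsmul_zero, zero_add]

lemma IsTwistedGrid.gridVertex_last_add (hG : IsTwistedGrid a b g N s) (i : ℤ) :
    gridVertex a b (g - 1) i + b = gridVertex a b 0 (i + s) := by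
  rw [gridVertex_add_right_step, sub_add_cancel, gridVertex, gridVertex, hG.wrap, zero_zsmul,
    zero_add, add_zsmul, add_comm]

lemma IsTwistedGrid.gridVertex_zero_sub (hG : IsTwistedGrid a b g N s) (i : ℤ) :
    gridVertex a b 0 i - b = gridVertex a b (g - 1) (i - s) := by
  rw [sub_eq_iff_eq_add, hG.gridVertex_last_add, sub_add_cancel]

/-- The sequence `0, 1, …, H - 2, H - 3, H - 2, H - 3, …` (for odd `H`). -/
def staircaseColumn (H j : ℤ) : ℤ := min j (if j % 2 = 0 then H - 3 else H - 2)

lemma le_staircaseColumn {x j : ℤ} (hx : x ≤ j) (hxH : x ≤ H - 3) : x ≤ staircaseColumn H j := by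
  unfold staircaseColumn
  lia

lemma staircaseColumn_le (H j : ℤ) : staircaseColumn H j ≤ H - 2 := by
  unfold staircaseColumn
  lia

lemma staircaseColumn_add_one (hH : H % 2 = 1) (j : ℤ) :
    staircaseColumn H (j + 1) = staircaseColumn H j + 1 ∨
      staircaseColumn H (j + 1) = staircaseColumn H j - 1 := by
  unfold staircaseColumn
  lia

lemma staircaseColumn_of_le {j : ℤ} (hH : H % 2 = 1) (hj : j ≤ H - 2) :
    staircaseColumn H j = j := by
  unfold staircaseColumn
  lia

lemma staircaseColumn_of_even {j : ℤ} (h : H - 3 ≤ j) (hj : j % 2 = 0) :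
    staircaseColumn H j = H - 3 := by
  unfold staircaseColumn
  lia

lemma staircaseColumn_of_odd {j : ℤ} (h : H - 2 ≤ j) (hj : j % 2 = 1) :
    staircaseColumn H j = H - 2 := by
  unfold staircaseColumn
  lia

/-- The lower left corners of a staircase of squares, one between any two consecutive rows. -/
def staircase (a b : Γ) (g H : ℤ) : Set Γ :=
  {v | ∃ j : ℤ, 0 ≤ j ∧ j ≤ g - 2 ∧ gridVertex a b j (staircaseColumn H j) = v}

/-- A twisted grid large enough for a staircase of squares occupying the columns
`0, …, H - 1`. -/
structure IsStaircaseGrid (a b : Γ) (g N s H : ℤ) : Prop extends IsTwistedGrid a b g N s where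
  odd_rows : g % 2 = 1
  odd_width : H % 2 = 1
  three_le_width : 3 ≤ H
  width_le_rows : H ≤ g
  width_le_period : H ≤ N

lemma not_dvd_sub_of_ne {x y : ℤ} (hne : x ≠ y) (hxy : x - y < N) (hyx : y - x < N) :
    ¬N ∣ x - y := fun hd => hne (sub_eq_zero.1
  (Int.eq_zero_of_abs_lt_dvd hd (abs_lt.2 ⟨by lia, hxy⟩)))

namespace IsStaircaseGrid

lemma gridVertex_ne (hG : IsStaircaseGrid a b g N s H) {j i j' i' : ℤ} (hj : 0 ≤ j ∧ j < g)
    (hj' : 0 ≤ j' ∧ j' < g) (hi : i - i' < N ∧ i' - i < N) (hne : j ≠ j' ∨ i ≠ i') :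
    gridVertex a b j i ≠ gridVertex a b j' i' := fun h => by
  obtain ⟨rfl, hdvd⟩ := hG.eq_and_dvd _ _ _ _ hj.1 hj.2 hj'.1 hj'.2 h
  exact not_dvd_sub_of_ne (by lia) hi.1 hi.2 hdvd

lemma hasDistinctSteps (hG : IsStaircaseGrid a b g N s H) : HasDistinctSteps a b := by
  have ⟨_, _, _, hH, hHg, hHN⟩ := hG
  constructor
  · simpa [gridVertex, two_zsmul] using hG.gridVertex_ne (j := 0) (i := 2) (j' := 0) (i' := 0)
      (by lia) (by lia) (by lia) (by lia)
  · simpa [gridVertex, two_zsmul] using hG.gridVertex_ne (j := 2) (i := 0) (j' := 0) (i' := 0)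
      (by lia) (by lia) (by lia) (by lia)
  · simpa [gridVertex] using hG.gridVertex_ne (j := 0) (i := 1) (j' := 1) (i' := 0)
      (by lia) (by lia) (by lia) (by lia)
  · simpa [gridVertex, add_comm] using hG.gridVertex_ne (j := 1) (i := 1) (j' := 0) (i' := 0)
      (by lia) (by lia) (by lia) (by lia)

lemma mem_staircase_iff (hG : IsStaircaseGrid a b g N s H) {j i : ℤ} (h₀ : 0 ≤ j) (h₁ : j < g) :
    gridVertex a b j i ∈ staircase a b g H ↔ j ≤ g - 2 ∧ N ∣ i - staircaseColumn H j := by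
  constructor
  · rintro ⟨j', h₀', h₁', h⟩
    obtain ⟨rfl, hdvd⟩ := hG.eq_and_dvd _ _ _ _ h₀ h₁ h₀' (by lia) h.symm
    exact ⟨h₁', hdvd⟩
  · rintro ⟨hj, hdvd⟩
    exact ⟨j, h₀, hj, (hG.gridVertex_eq_of_dvd hdvd).symm⟩

lemma gridVertex_last_notMem (hG : IsStaircaseGrid a b g N s H) (i : ℤ) :
    gridVertex a b (g - 1) i ∉ staircase a b g H := by
  have ⟨_, _, _, hH, hHg, _⟩ := hG
  rw [hG.mem_staircase_iff (by lia) (by lia)]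
  lia

lemma isSwitchSet (hG : IsStaircaseGrid a b g N s H) : IsSwitchSet a b (staircase a b g H) := by
  have ⟨_, _, hHo, hH, _, hHN⟩ := hG
  constructor
  · rintro v ⟨j, h₀, h₁, rfl⟩ h
    rw [gridVertex_sub_left_step, hG.mem_staircase_iff h₀ (by lia)] at h
    exact not_dvd_sub_of_ne (by lia) (by lia) (by lia) h.2
  · rintro v ⟨j, h₀, h₁, rfl⟩ h
    obtain rfl | hj : j = 0 ∨ 1 ≤ j := by lia
    · rw [hG.gridVertex_zero_sub] at h
      exact hG.gridVertex_last_notMem _ h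
    · rw [gridVertex_sub_right_step, hG.mem_staircase_iff (by lia) (by lia)] at h
      have hcol := staircaseColumn_add_one hHo (j - 1)
      rw [sub_add_cancel] at hcol
      exact not_dvd_sub_of_ne (by lia) (by lia) (by lia) h.2

end IsStaircaseGrid

end Grid

/-! ### Connectedness of the row graph -/

section PeriodicPath

variable {V : Type*} {G : SimpleGraph V} {X : ℤ → V} {N : ℤ}

lemma reachable_of_reachable_succ {p q : ℤ} (hpq : p ≤ q)
    (h : ∀ i, p ≤ i → i < q → G.Reachable (X i) (X (i + 1))) : G.Reachable (X p) (X q) := by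
  induction q, hpq using Int.leInduction with
  | base => rfl
  | succ q hpq ih =>
    exact (ih fun i hpi hiq => h i hpi (by lia)).trans (h q hpq (by lia))

lemma exists_dvd_sub_of_pos (hN : 0 < N) (c i : ℤ) : ∃ i', c ≤ i' ∧ i' < c + N ∧ N ∣ i - i' := by
  obtain ⟨hle, hlt⟩ := toIcoMod_mem_Ico hN c i
  exact ⟨toIcoMod hN c i, hle, hlt, toIcoDiv hN c i, by
    rw [self_sub_toIcoMod, smul_eq_mul, mul_comm]⟩

/- Deleting two edges from a cycle leaves two paths, each of which contains an end of the first
deleted edge. -/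
lemma reachable_or_reachable_of_periodic (hN : 0 < N) (hX : ∀ i i', N ∣ i - i' → X i = X i')
    {c c' : ℤ} (h : ∀ i, ¬N ∣ i - c → ¬N ∣ i - c' → G.Reachable (X i) (X (i + 1))) (i : ℤ) :
    G.Reachable (X i) (X c) ∨ G.Reachable (X i) (X (c + 1)) := by
  obtain ⟨i₀, hi₀, hi₀N, hi⟩ := exists_dvd_sub_of_pos hN (c + 1) i
  obtain ⟨d, hd, hdN, hdc'⟩ := exists_dvd_sub_of_pos hN (c + 1) c'
  rw [hX _ _ hi]
  have hstep (x : ℤ) (hx : c + 1 ≤ x) (hxN : x < c + N) (hxd : x ≠ d) :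
      G.Reachable (X x) (X (x + 1)) := by
    refine h x (not_dvd_sub_of_ne (by lia) (by lia) (by lia)) fun hdvd => ?_
    refine not_dvd_sub_of_ne (N := N) hxd (by lia) (by lia) ?_
    rw [← sub_add_sub_cancel x c' d]
    exact dvd_add hdvd hdc'
  by_cases hdi : d < i₀
  · left
    rw [← hX (c + N) c (by simp)]
    exact reachable_of_reachable_succ (by lia) fun x _ _ => hstep x (by lia) (by lia) (by lia)
  · right
    exact (reachable_of_reachable_succ (by lia)
      fun x _ _ => hstep x (by lia) (by lia) (by lia)).symm

end PeriodicPath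

section RowGraph

variable {Γ : Type*} [AddCommGroup Γ] {a b : Γ} {g N s H : ℤ}

/-- The graph of the rows, joined to each other along the staircase. -/
abbrev rowGraph (a b : Γ) (g H : ℤ) : SimpleGraph Γ := switched a b (staircase a b g H)

namespace IsStaircaseGrid

lemma rowGraph_adj_right_zero (hG : IsStaircaseGrid a b g N s H) {i : ℤ} (hi : ¬N ∣ i) :
    (rowGraph a b g H).Adj (gridVertex a b 0 i) (gridVertex a b 0 (i + 1)) := by
  have ⟨_, _, hHo, hH, hHg, _⟩ := hG
  rw [← gridVertex_add_left_step, switched_adj_add_left hG.hasDistinctSteps,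
    hG.gridVertex_zero_sub, hG.mem_staircase_iff le_rfl (by lia),
    staircaseColumn_of_le hHo (by lia), sub_zero]
  rintro (h | h)
  · exact hi h.2
  · exact hG.gridVertex_last_notMem _ h

lemma rowGraph_adj_right_succ (hG : IsStaircaseGrid a b g N s H) {j i : ℤ} (h₀ : 0 ≤ j)
    (h₁ : j + 1 < g) (hi : ¬N ∣ i - staircaseColumn H j)
    (hi' : ¬N ∣ i - staircaseColumn H (j + 1)) :
    (rowGraph a b g H).Adj (gridVertex a b (j + 1) i) (gridVertex a b (j + 1) (i + 1)) := by
  rw [← gridVertex_add_left_step, switched_adj_add_left hG.hasDistinctSteps,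
    gridVertex_sub_right_step, add_sub_cancel_right, hG.mem_staircase_iff (by lia) h₁,
    hG.mem_staircase_iff h₀ (by lia)]
  tauto

lemma rowGraph_adj_up (hG : IsStaircaseGrid a b g N s H) {j i : ℤ} (h₀ : 0 ≤ j) (h₁ : j + 1 < g)
    (hi : i = staircaseColumn H j ∨ i = staircaseColumn H j + 1) :
    (rowGraph a b g H).Adj (gridVertex a b j i) (gridVertex a b (j + 1) i) := by
  rw [← gridVertex_add_right_step, switched_adj_add_right hG.hasDistinctSteps,
    gridVertex_sub_left_step, hG.mem_staircase_iff h₀ (by lia), hG.mem_staircase_iff h₀ (by lia)]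
  rcases hi with rfl | rfl
  · exact Or.inl ⟨by lia, by simp⟩
  · exact Or.inr ⟨by lia, by simp⟩

lemma rowGraph_reachable (hG : IsStaircaseGrid a b g N s H) {j : ℤ} (h₀ : 0 ≤ j) :
    j < g → ∀ i, (rowGraph a b g H).Reachable (gridVertex a b j i) (gridVertex a b 0 1) := by
  have ⟨_, _, _, hH, _, hHN⟩ := hG
  induction j, h₀ using Int.leInduction with
  | base =>
    intro _ i
    obtain ⟨i', hi', hi'N, hdvd⟩ := exists_dvd_sub_of_pos (show 0 < N by lia) 1 i
    rw [hG.gridVertex_eq_of_dvd hdvd]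
    refine (reachable_of_reachable_succ hi' fun x hx hxi => ?_).symm
    have hndvd : ¬N ∣ x - 0 := not_dvd_sub_of_ne (by lia) (by lia) (by lia)
    exact (hG.rowGraph_adj_right_zero (by rwa [sub_zero] at hndvd)).reachable
  | succ j h₀ ih =>
    intro h₁ i
    have hdown (x : ℤ) (hx : x = staircaseColumn H j ∨ x = staircaseColumn H j + 1) :
        (rowGraph a b g H).Reachable (gridVertex a b (j + 1) x) (gridVertex a b 0 1) :=
      (hG.rowGraph_adj_up h₀ h₁ hx).reachable.symm.trans (ih (by lia) x)
    rcases reachable_or_reachable_of_periodic (show 0 < N by lia)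
      (fun _ _ => hG.gridVertex_eq_of_dvd (j := j + 1))
      (fun x hx hx' => (hG.rowGraph_adj_right_succ h₀ h₁ hx hx').reachable) i with h | h
    · exact h.trans (hdown _ (Or.inl rfl))
    · exact h.trans (hdown _ (Or.inr rfl))

theorem connected_rowGraph (hG : IsStaircaseGrid a b g N s H) :
    (rowGraph a b g H).Connected := by
  refine (connected_iff_exists_forall_reachable _).2 ⟨gridVertex a b 0 1, fun v => ?_⟩
  obtain ⟨j, i, h₀, h₁, rfl⟩ := hG.exists_eq v
  exact (hG.rowGraph_reachable h₀ h₁ i).symm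

end IsStaircaseGrid

end RowGraph

/-! ### Connectedness of the column graph -/

section ColumnGraph

variable {Γ : Type*} [AddCommGroup Γ] {a b : Γ} {g N s H : ℤ}

/-- The graph of the columns, joined to each other along the staircase. -/
abbrev columnGraph (a b : Γ) (g H : ℤ) : SimpleGraph Γ := switched b a (staircase a b g H)

namespace IsStaircaseGrid

lemma columnGraph_adj_up (hG : IsStaircaseGrid a b g N s H) {j i : ℤ} (h₀ : 0 ≤ j)
    (h₁ : j + 1 < g) (hi : 0 ≤ i) (hiN : i < N) (hne : i ≠ staircaseColumn H j)
    (hne' : i ≠ staircaseColumn H j + 1) :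
    (columnGraph a b g H).Adj (gridVertex a b j i) (gridVertex a b (j + 1) i) := by
  have ⟨_, _, _, hH, _, hHN⟩ := hG
  have hcol := staircaseColumn_le H j
  have hcol' := le_staircaseColumn (H := H) h₀ (by lia)
  rw [← gridVertex_add_right_step, switched_adj_add_left hG.hasDistinctSteps.symm,
    gridVertex_sub_left_step, hG.mem_staircase_iff h₀ (by lia), hG.mem_staircase_iff h₀ (by lia)]
  rintro (⟨-, h⟩ | ⟨-, h⟩)
  · exact not_dvd_sub_of_ne hne (by lia) (by lia) h
  · exact not_dvd_sub_of_ne (by lia) (by lia) (by lia) h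

lemma columnGraph_adj_wrap (hG : IsStaircaseGrid a b g N s H) (i : ℤ) :
    (columnGraph a b g H).Adj (gridVertex a b (g - 1) i) (gridVertex a b 0 (i + s)) := by
  rw [← hG.gridVertex_last_add, switched_adj_add_left hG.hasDistinctSteps.symm,
    gridVertex_sub_left_step]
  simp only [hG.gridVertex_last_notMem, or_self, not_false_eq_true]

lemma columnGraph_adj_right_lower (hG : IsStaircaseGrid a b g N s H) {j : ℤ} (h₀ : 0 ≤ j)
    (h₁ : j + 1 < g) :
    (columnGraph a b g H).Adj (gridVertex a b j (staircaseColumn H j))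
      (gridVertex a b j (staircaseColumn H j + 1)) := by
  rw [← gridVertex_add_left_step, switched_adj_add_right hG.hasDistinctSteps.symm]
  exact Or.inl ⟨j, h₀, by lia, rfl⟩

lemma columnGraph_adj_right_upper (hG : IsStaircaseGrid a b g N s H) {j : ℤ} (h₀ : 0 ≤ j)
    (h₁ : j + 1 < g) :
    (columnGraph a b g H).Adj (gridVertex a b (j + 1) (staircaseColumn H j))
      (gridVertex a b (j + 1) (staircaseColumn H j + 1)) := by
  rw [← gridVertex_add_left_step, switched_adj_add_right hG.hasDistinctSteps.symm,
    gridVertex_sub_right_step, add_sub_cancel_right]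
  exact Or.inr ⟨j, h₀, by lia, rfl⟩

lemma columnGraph_reachable_vertical (hG : IsStaircaseGrid a b g N s H) {p q i : ℤ} (hp : 0 ≤ p)
    (hpq : p ≤ q) (hq : q < g) (hi : 0 ≤ i) (hiN : i < N)
    (hne : ∀ j, p ≤ j → j < q → i ≠ staircaseColumn H j ∧ i ≠ staircaseColumn H j + 1) :
    (columnGraph a b g H).Reachable (gridVertex a b p i) (gridVertex a b q i) :=
  reachable_of_reachable_succ (X := fun j => gridVertex a b j i) hpq fun j hpj hjq =>
    (hG.columnGraph_adj_up (by lia) (by lia) hi hiN (hne j hpj hjq).1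
      (hne j hpj hjq).2).reachable

/- The edges along row `j + 1` lead to the square above it, which is shifted by one column and so
leaves one of its two columns open below. -/
lemma columnGraph_exists_reachable_of_blocked (hG : IsStaircaseGrid a b g N s H) {j : ℤ}
    (h₀ : 0 ≤ j) (h₁ : j + 1 < g) :
    ∃ j' i', (j' = 0 ∨ j' = j) ∧ (columnGraph a b g H).Reachable
      (gridVertex a b (j + 1) (staircaseColumn H j)) (gridVertex a b j' i') := by
  have ⟨_, _, hHo, hH, _, hHN⟩ := hG
  obtain hlast | hlast : j + 1 = g - 1 ∨ j + 1 + 1 < g := by lia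
  · rw [hlast]
    exact ⟨0, _, Or.inl rfl, (hG.columnGraph_adj_wrap _).reachable⟩
  have hcol := le_staircaseColumn (H := H) h₀ (by lia)
  have hcol' := staircaseColumn_le H j
  have hnonneg := le_staircaseColumn (H := H) (show 0 ≤ j + 1 by lia) (by lia)
  have hle := staircaseColumn_le H (j + 1)
  have hlower := (hG.columnGraph_adj_right_upper h₀ h₁).reachable
  have hupper := (hG.columnGraph_adj_right_lower (show 0 ≤ j + 1 by lia) hlast).reachable
  have hdown {x : ℤ} (hx : 0 ≤ x) (hxN : x < N) (hxc : x ≠ staircaseColumn H j)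
      (hxc' : x ≠ staircaseColumn H j + 1) :=
    (hG.columnGraph_adj_up h₀ h₁ hx hxN hxc hxc').reachable.symm
  rcases staircaseColumn_add_one hHo j with h | h
  · rw [h] at hupper hle
    exact ⟨j, _, Or.inr rfl, (hlower.trans hupper).trans
      (hdown (by lia) (by lia) (by lia) (by lia))⟩
  · rw [h, sub_add_cancel] at hupper
    exact ⟨j, _, Or.inr rfl, hupper.symm.trans (hdown (by lia) (by lia) (by lia) (by lia))⟩

lemma columnGraph_exists_reachable_down (hG : IsStaircaseGrid a b g N s H) {j : ℤ}
    (h₀ : 0 ≤ j) (h₁ : j + 1 < g) (i : ℤ) :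
    ∃ j' i', (j' = 0 ∨ j' = j) ∧ (columnGraph a b g H).Reachable
      (gridVertex a b (j + 1) i) (gridVertex a b j' i') := by
  have ⟨_, _, _, hH, _, hHN⟩ := hG
  obtain ⟨i₀, hi₀, hi₀N, hi⟩ := exists_dvd_sub_of_pos (show 0 < N by lia) 0 i
  rw [hG.gridVertex_eq_of_dvd hi]
  obtain ⟨j', i', hj', hreach⟩ := hG.columnGraph_exists_reachable_of_blocked h₀ h₁
  by_cases hic : i₀ = staircaseColumn H j
  · exact ⟨j', i', hj', hic ▸ hreach⟩
  by_cases hic' : i₀ = staircaseColumn H j + 1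
  · exact ⟨j', i', hj', hic' ▸
      (hG.columnGraph_adj_right_upper h₀ h₁).reachable.symm.trans hreach⟩
  · exact ⟨j, i₀, Or.inr rfl,
      (hG.columnGraph_adj_up h₀ h₁ hi₀ (by lia) hic hic').reachable.symm⟩

lemma columnGraph_exists_reachable_bottom (hG : IsStaircaseGrid a b g N s H) {j : ℤ} (h₀ : 0 ≤ j) :
    j < g → ∀ i, ∃ i', (columnGraph a b g H).Reachable (gridVertex a b j i)
      (gridVertex a b 0 i') := by
  induction j, h₀ using Int.leInduction with
  | base => exact fun _ i => ⟨i, .rfl⟩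
  | succ j h₀ ih =>
    intro h₁ i
    obtain ⟨_, i', rfl | rfl, hdown⟩ := hG.columnGraph_exists_reachable_down h₀ h₁ i
    · exact ⟨i', hdown⟩
    · exact (ih (by lia) i').imp fun _ => hdown.trans

lemma columnGraph_connected_of_bottom (hG : IsStaircaseGrid a b g N s H)
    (h : ∀ i, (columnGraph a b g H).Reachable (gridVertex a b 0 i) (gridVertex a b 0 0)) :
    (columnGraph a b g H).Connected := by
  refine (connected_iff_exists_forall_reachable _).2 ⟨gridVertex a b 0 0, fun v => ?_⟩
  obtain ⟨j, i, h₀, h₁, rfl⟩ := hG.exists_eq v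
  obtain ⟨i', hi'⟩ := hG.columnGraph_exists_reachable_bottom h₀ h₁ i
  exact (hi'.trans (h i')).symm

lemma columnGraph_reachable_bottom_zero_one (hG : IsStaircaseGrid a b g N s H) :
    (columnGraph a b g H).Reachable (gridVertex a b 0 0) (gridVertex a b 0 1) := by
  have ⟨_, _, hHo, hH, hHg, _⟩ := hG
  have h := hG.columnGraph_adj_right_lower le_rfl (by lia)
  rw [staircaseColumn_of_le hHo (by lia), zero_add] at h
  exact h.reachable

lemma columnGraph_reachable_top_last_two (hG : IsStaircaseGrid a b g N s H) :
    (columnGraph a b g H).Reachable (gridVertex a b (g - 1) (H - 2))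
      (gridVertex a b (g - 1) (H - 1)) := by
  have ⟨_, hgo, hHo, hH, hHg, _⟩ := hG
  have h := hG.columnGraph_adj_right_upper (j := g - 2) (by lia) (by lia)
  rw [staircaseColumn_of_odd (by lia) (by lia)] at h
  ring_nf at h ⊢
  exact h.reachable

lemma columnGraph_reachable_top_of_le (hG : IsStaircaseGrid a b g N s H) {i : ℤ} (hi : H ≤ i)
    (hiN : i < N) :
    (columnGraph a b g H).Reachable (gridVertex a b 0 i) (gridVertex a b (g - 1) i) := by
  have ⟨_, _, _, hH, hHg, _⟩ := hG
  refine hG.columnGraph_reachable_vertical le_rfl (by lia) (by lia) (by lia) hiN fun j _ _ => ?_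
  have := staircaseColumn_le H j
  lia

lemma columnGraph_reachable_diagonal (hG : IsStaircaseGrid a b g N s H) {c : ℤ} (hc : 1 ≤ c)
    (hcH : c < H) :
    (columnGraph a b g H).Reachable (gridVertex a b 0 c) (gridVertex a b (c - 1) c) := by
  have ⟨_, _, hHo, _, hHg, hHN⟩ := hG
  refine hG.columnGraph_reachable_vertical le_rfl (by lia) (by lia) (by lia) (by lia)
    fun j _ _ => ?_
  rw [staircaseColumn_of_le hHo (by lia)]
  lia

lemma columnGraph_reachable_top_sub_two_of_lt (hG : IsStaircaseGrid a b g N s H) {c : ℤ}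
    (hc : 2 ≤ c) (hcH : c < H - 1) :
    (columnGraph a b g H).Reachable (gridVertex a b 0 c) (gridVertex a b (g - 1) (c - 2)) := by
  have ⟨_, _, hHo, _, hHg, hHN⟩ := hG
  have hright : (columnGraph a b g H).Adj (gridVertex a b (c - 1) (c - 1))
      (gridVertex a b (c - 1) c) := by
    have h := hG.columnGraph_adj_right_lower (j := c - 1) (by lia) (by lia)
    rwa [staircaseColumn_of_le hHo (by lia), sub_add_cancel] at h
  have hleft : (columnGraph a b g H).Adj (gridVertex a b (c - 1) (c - 2))
      (gridVertex a b (c - 1) (c - 1)) := by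
    have h := hG.columnGraph_adj_right_upper (j := c - 2) (by lia) (by lia)
    rwa [staircaseColumn_of_le hHo (by lia), show c - 2 + 1 = c - 1 by ring] at h
  have hup : (columnGraph a b g H).Reachable (gridVertex a b (c - 1) (c - 2))
      (gridVertex a b (g - 1) (c - 2)) := by
    refine hG.columnGraph_reachable_vertical (by lia) (by lia) (by lia) (by lia) (by lia)
      fun j hj _ => ?_
    have := le_staircaseColumn hj (show c - 1 ≤ H - 3 by lia)
    lia
  exact (hG.columnGraph_reachable_diagonal (by lia) (by lia)).trans
    (hright.reachable.symm.trans (hleft.reachable.symm.trans hup))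

lemma columnGraph_reachable_last_three (hG : IsStaircaseGrid a b g N s H) {j : ℤ}
    (hj : H - 2 ≤ j) (hjg : j + 1 < g) :
    (columnGraph a b g H).Reachable (gridVertex a b j (H - 1)) (gridVertex a b j (H - 3)) := by
  have ⟨_, _, hHo, hH, _, _⟩ := hG
  have hlower := hG.columnGraph_adj_right_lower (j := j) (by lia) hjg
  have hupper := hG.columnGraph_adj_right_upper (j := j - 1) (by lia) (by lia)
  rw [sub_add_cancel] at hupper
  rcases Int.emod_two_eq_zero_or_one j with h | h
  · rw [staircaseColumn_of_even (by lia) h] at hlower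
    rw [staircaseColumn_of_odd (by lia) (by lia)] at hupper
    ring_nf at hlower hupper ⊢
    exact (hlower.reachable.trans hupper.reachable).symm
  · rw [staircaseColumn_of_odd (by lia) h] at hlower
    rw [staircaseColumn_of_even (by lia) (by lia)] at hupper
    ring_nf at hlower hupper ⊢
    exact (hupper.reachable.trans hlower.reachable).symm

lemma columnGraph_reachable_snake (hG : IsStaircaseGrid a b g N s H) {j : ℤ} (hj : H - 2 ≤ j) :
    j + 1 < g →
      (columnGraph a b g H).Reachable (gridVertex a b 0 (H - 1)) (gridVertex a b j (H - 1)) := by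
  have ⟨_, _, hHo, hH, _, hHN⟩ := hG
  induction j, hj using Int.leInduction with
  | base =>
    intro _
    have h := hG.columnGraph_reachable_diagonal (c := H - 1) (by lia) (by lia)
    rwa [show H - 1 - 1 = H - 2 by ring] at h
  | succ j hj ih =>
    intro hjg
    refine (ih (by lia)).trans ?_
    rcases Int.emod_two_eq_zero_or_one j with h | h
    · have hcol := staircaseColumn_of_even (H := H) (by lia) h
      exact (hG.columnGraph_adj_up (by lia) (by lia) (by lia) (by lia) (by lia)
        (by lia)).reachable
    · have hcol := staircaseColumn_of_odd (H := H) (by lia) h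
      have hup := hG.columnGraph_adj_up (j := j) (i := H - 3) (by lia) (by lia) (by lia) (by lia)
        (by lia) (by lia)
      exact (hG.columnGraph_reachable_last_three hj (by lia)).trans
        (hup.reachable.trans (hG.columnGraph_reachable_last_three (by lia) hjg).symm)

lemma columnGraph_reachable_top_sub_two (hG : IsStaircaseGrid a b g N s H) {c : ℤ} (hc : 2 ≤ c)
    (hcH : c < H) :
    (columnGraph a b g H).Reachable (gridVertex a b 0 c) (gridVertex a b (g - 1) (c - 2)) := by
  have ⟨_, hgo, hHo, hH, hHg, hHN⟩ := hG
  obtain h | rfl : c < H - 1 ∨ c = H - 1 := by lia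
  · exact hG.columnGraph_reachable_top_sub_two_of_lt hc h
  · have hcol := staircaseColumn_of_odd (H := H) (j := g - 2) (by lia) (by lia)
    have hup := hG.columnGraph_adj_up (j := g - 2) (i := H - 3) (by lia) (by lia) (by lia)
      (by lia) (by lia) (by lia)
    rw [show g - 2 + 1 = g - 1 by ring] at hup
    rw [show H - 1 - 2 = H - 3 by ring]
    exact (hG.columnGraph_reachable_snake (by lia) (by lia)).trans
      ((hG.columnGraph_reachable_last_three (by lia) (by lia)).trans hup.reachable)

lemma columnGraph_reachable_top_of_not_dvd (hG : IsStaircaseGrid a b g N s H) {i : ℤ}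
    (h : ∀ r, 0 ≤ r → r < H → ¬N ∣ i - r) :
    (columnGraph a b g H).Reachable (gridVertex a b 0 i) (gridVertex a b (g - 1) i) := by
  have ⟨_, _, _, hH, _, hHN⟩ := hG
  obtain ⟨i₀, hi₀, hi₀N, hi⟩ := exists_dvd_sub_of_pos (show 0 < N by lia) 0 i
  have hHi : H ≤ i₀ := not_lt.1 fun hlt => h i₀ hi₀ hlt hi
  rw [hG.gridVertex_eq_of_dvd hi, hG.gridVertex_eq_of_dvd hi]
  exact hG.columnGraph_reachable_top_of_le hHi (by lia)

lemma columnGraph_reachable_top_bottom (hG : IsStaircaseGrid a b g N s H) {i m : ℤ} (hm : 0 < m)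
    (h : ∀ x, 0 < x → x < m → ∀ r, 0 ≤ r → r < H → ¬N ∣ i + x * s - r) :
    (columnGraph a b g H).Reachable (gridVertex a b (g - 1) i) (gridVertex a b 0 (i + m * s)) := by
  have hwrap := (hG.columnGraph_adj_wrap i).reachable
  rw [← one_mul s] at hwrap
  refine hwrap.trans (reachable_of_reachable_succ (X := fun x => gridVertex a b 0 (i + x * s))
    (Int.add_one_le_of_lt hm) fun x hx hxm => ?_)
  rw [add_one_mul, ← add_assoc]
  exact (hG.columnGraph_reachable_top_of_not_dvd (h x (by lia) hxm)).trans
    (hG.columnGraph_adj_wrap _).reachable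

section WideStaircase

/- Modulo `H` the wrap-around does not change the column, so among the columns `0, …, H - 1` the
walk from the top of column `r` first meets `r` itself. -/
lemma columnGraph_reachable_top_self (hG : IsStaircaseGrid a b g N s H) (hs : H ∣ s) (hN : H ∣ N)
    {r : ℤ} (hr : 0 ≤ r) (hrH : r < H) :
    (columnGraph a b g H).Reachable (gridVertex a b (g - 1) r) (gridVertex a b 0 r) := by
  classical
  have ⟨_, _, _, hH, _, hHN⟩ := hG
  have hex : ∃ m : ℕ, 0 < m ∧ N ∣ m * s := ⟨N.toNat, by lia, by
    rw [Int.toNat_of_nonneg (by lia)]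
    exact dvd_mul_right N s⟩
  obtain ⟨hm, hdvd⟩ := Nat.find_spec hex
  have hreach := hG.columnGraph_reachable_top_bottom (i := r) (Int.natCast_pos.2 hm) ?_
  · have hi : N ∣ r + Nat.find hex * s - r := by rwa [add_sub_cancel_left]
    rwa [hG.gridVertex_eq_of_dvd hi] at hreach
  intro x hx hxm r' hr' hr'H hxr
  have hrr' : H ∣ r - r' := by
    have h := dvd_sub (hN.trans hxr) (hs.mul_left x)
    rwa [show r + x * s - r' - x * s = r - r' by ring] at h
  obtain rfl : r = r' := by
    by_contra hne
    exact not_dvd_sub_of_ne hne (by lia) (by lia) hrr'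
  lift x to ℕ using hx.le
  exact Nat.find_min hex (Int.ofNat_lt.1 hxm) ⟨by lia, by rwa [add_sub_cancel_left] at hxr⟩

lemma columnGraph_reachable_bottom_top (hG : IsStaircaseGrid a b g N s H) (hs : H ∣ s)
    (hN : H ∣ N) (i : ℤ) :
    (columnGraph a b g H).Reachable (gridVertex a b 0 i) (gridVertex a b (g - 1) i) := by
  by_cases hi : ∃ r, 0 ≤ r ∧ r < H ∧ N ∣ i - r
  · obtain ⟨r, hr, hrH, hdvd⟩ := hi
    rw [hG.gridVertex_eq_of_dvd hdvd, hG.gridVertex_eq_of_dvd hdvd]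
    exact (hG.columnGraph_reachable_top_self hs hN hr hrH).symm
  · exact hG.columnGraph_reachable_top_of_not_dvd fun r hr hrH hdvd => hi ⟨r, hr, hrH, hdvd⟩

lemma columnGraph_reachable_bottom_of_lt (hG : IsStaircaseGrid a b g N s H) (hs : H ∣ s)
    (hN : H ∣ N) (c : ℕ) (hc : c < H) :
    (columnGraph a b g H).Reachable (gridVertex a b 0 c) (gridVertex a b 0 0) := by
  induction c using Nat.twoStepInduction with
  | zero => rfl
  | one => exact hG.columnGraph_reachable_bottom_zero_one.symm
  | more c ih _ =>
    have h := hG.columnGraph_reachable_top_sub_two (c := (c + 2 : ℕ)) (by lia) hc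
    rw [show ((c + 2 : ℕ) : ℤ) - 2 = c by lia] at h
    exact h.trans ((hG.columnGraph_reachable_bottom_top hs hN c).symm.trans (ih (by lia)))

theorem connected_columnGraph_of_dvd (hG : IsStaircaseGrid a b g N s H) (hs : H ∣ s) (hN : H ∣ N)
    (hcover : ∀ i, ∃ r x : ℤ, 0 ≤ r ∧ r < H ∧ N ∣ i - (r + x * s)) :
    (columnGraph a b g H).Connected := by
  have ⟨_, _, _, hH, _, hHN⟩ := hG
  refine hG.columnGraph_connected_of_bottom fun i => ?_
  obtain ⟨r, x, hr, hrH, hdvd⟩ := hcover i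
  obtain ⟨x₀, hx₀, -, hx⟩ := exists_dvd_sub_of_pos (show 0 < N by lia) 0 x
  have hi : N ∣ i - (r + x₀ * s) := by
    convert Int.dvd_add hdvd (hx.mul_right s) using 1
    ring
  rw [hG.gridVertex_eq_of_dvd hi]
  have horbit := reachable_of_reachable_succ (G := columnGraph a b g H)
    (X := fun y => gridVertex a b 0 (r + y * s)) hx₀ fun y _ _ => by
      rw [add_one_mul, ← add_assoc]
      exact (hG.columnGraph_reachable_bottom_top hs hN _).trans
        (hG.columnGraph_adj_wrap _).reachable
  rw [zero_mul, add_zero] at horbit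
  lift r to ℕ using hr
  exact horbit.symm.trans (hG.columnGraph_reachable_bottom_of_lt hs hN r hrH)

end WideStaircase

section NarrowStaircase

variable {p : ℤ}

/- Multiplying by `p` inverts multiplication by `s` modulo `N`: a walk along the wrap-around from
column `0` meets the columns `1` and `2` after `p` and `2 * p` steps. -/
lemma columnGraph_reachable_top_orbit (hG : IsStaircaseGrid a b g N s 3) (hp : 0 < p)
    (hpN : 2 * p < N) (hps : N ∣ s * p - 1) {c x : ℤ} (hc : 0 ≤ c) (hc3 : c < 3) (hx : 0 < x)
    (hxp : c < 2 → x ≤ p) (hxN : p * c + x ≤ N) :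
    (columnGraph a b g 3).Reachable (gridVertex a b (g - 1) c) (gridVertex a b 0 (c + x * s)) := by
  refine hG.columnGraph_reachable_top_bottom hx fun y hy hyx r hr hr3 hdvd => ?_
  have hposition : N ∣ p * c + y - p * r := by
    convert Int.dvd_sub (hdvd.mul_right p) (hps.mul_left y) using 1
    ring
  interval_cases c <;> interval_cases r <;>
    exact not_dvd_sub_of_ne (by lia) (by lia) (by lia) hposition

lemma columnGraph_reachable_top_special (hG : IsStaircaseGrid a b g N s 3) (hp : 0 < p)
    (hpN : 2 * p < N) (hps : N ∣ s * p - 1) {c : ℤ} (hc : 0 ≤ c) (hc3 : c < 3) :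
    (columnGraph a b g 3).Reachable (gridVertex a b (g - 1) c) (gridVertex a b 0 0) := by
  have htwo : (columnGraph a b g 3).Reachable (gridVertex a b (g - 1) 2) (gridVertex a b 0 0) := by
    have h := hG.columnGraph_reachable_top_orbit hp hpN hps (c := 2) (x := N - 2 * p) (by lia)
      (by lia) (by lia) (by lia) (by lia)
    have hi : N ∣ 2 + (N - 2 * p) * s - 0 := by
      convert Int.dvd_sub (dvd_mul_right N s) (hps.mul_left 2) using 1
      ring
    rwa [hG.gridVertex_eq_of_dvd hi] at h
  interval_cases c
  · have h := hG.columnGraph_reachable_top_orbit hp hpN hps (c := 0) (x := p) (by lia)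
      (by lia) hp (by lia) (by lia)
    have hi : N ∣ 0 + p * s - 1 := by rwa [zero_add, mul_comm]
    rw [hG.gridVertex_eq_of_dvd hi] at h
    exact h.trans hG.columnGraph_reachable_bottom_zero_one.symm
  · exact hG.columnGraph_reachable_top_last_two.trans htwo
  · exact htwo

theorem connected_columnGraph_of_inverse (hG : IsStaircaseGrid a b g N s 3) (hp : 0 < p)
    (hpN : 2 * p < N) (hps : N ∣ s * p - 1) : (columnGraph a b g 3).Connected := by
  refine hG.columnGraph_connected_of_bottom fun i => ?_
  obtain ⟨q, hq, hqN, hdvd⟩ := exists_dvd_sub_of_pos (show 0 < N by lia) 1 (p * i)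
  obtain ⟨c, hc, hc3, hqc, hqp, hpc⟩ : ∃ c : ℤ, 0 ≤ c ∧ c < 3 ∧ 0 < q - p * c ∧
      (c < 2 → q - p * c ≤ p) ∧ p * c + (q - p * c) ≤ N := by
    obtain h | h | h : q ≤ p ∨ (p < q ∧ q ≤ 2 * p) ∨ 2 * p < q := by lia
    · exact ⟨0, by lia⟩
    · exact ⟨1, by lia⟩
    · exact ⟨2, by lia⟩
  have horbit := hG.columnGraph_reachable_top_orbit hp hpN hps hc hc3 hqc hqp hpc
  have hi : N ∣ i - (c + (q - p * c) * s) := by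
    convert Int.dvd_add (hdvd.mul_left s) (hps.mul_left (c - i)) using 1
    ring
  rw [hG.gridVertex_eq_of_dvd hi]
  exact horbit.symm.trans (hG.columnGraph_reachable_top_special hp hpN hps hc hc3)

end NarrowStaircase

end IsStaircaseGrid

end ColumnGraph

/-! ### Hamiltonian decompositions of Cayley graphs of odd order -/

section OddOrder

variable {Γ : Type*} [AddCommGroup Γ] {a b : Γ} {g N s H : ℤ}

lemma cayley_union (S T : Set Γ) : cayley (S ∪ T) = cayley S ⊔ cayley T := by
  ext x y
  simp only [sup_adj, cayley_adj, Set.mem_union]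
  tauto

lemma disjoint_cayley {S T : Set Γ} (h : ∀ d ∈ S, d ∉ T ∧ -d ∉ T) :
    Disjoint (cayley S) (cayley T) := by
  refine disjoint_left.2 fun x y hS hT => ?_
  rw [cayley_adj] at hS hT
  rcases hS.2 with hd | hd <;> have hd' := h _ hd <;> rw [neg_sub] at hd' <;> tauto

lemma cayley_neg_pair (a b : Γ) : cayley {-a, b} = cayley {a, b} := by
  ext x y
  have hxy : x - y = -a ↔ y - x = a := by rw [← neg_sub, neg_inj]
  have hyx : y - x = -a ↔ x - y = a := by rw [← neg_sub, neg_inj]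
  simp only [cayley_adj, Set.mem_insert_iff, Set.mem_singleton_iff, hxy, hyx]
  tauto

/-- The order of `b` modulo the subgroup generated by `a`, that is, the number of rows of a twisted
grid whose rows are the cosets of this subgroup. -/
noncomputable def orderModulo (a b : Γ) : ℕ := addOrderOf (b : Γ ⧸ AddSubgroup.zmultiples a)

lemma orderModulo_dvd_iff {z : ℤ} :
    (orderModulo a b : ℤ) ∣ z ↔ z • b ∈ AddSubgroup.zmultiples a := by
  rw [orderModulo, addOrderOf_dvd_iff_zsmul_eq_zero, ← QuotientAddGroup.mk_zsmul,
    QuotientAddGroup.eq_zero_iff]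

lemma odd_orderModulo (hodd : Odd (Nat.card Γ)) : Odd (orderModulo a b) :=
  hodd.of_dvd_nat ((addOrderOf_dvd_natCard _).trans (AddSubgroup.card_quotient_dvd_card _))

lemma exists_orderModulo_zsmul_eq (a b : Γ) : ∃ s : ℤ, (orderModulo a b : ℤ) • b = s • a := by
  obtain ⟨s, hs⟩ := orderModulo_dvd_iff.1 (dvd_refl (orderModulo a b : ℤ))
  exact ⟨s, hs.symm⟩

lemma orderModulo_dvd_of_zsmul_eq {x y : ℤ} (h : x • b = y • a) : (orderModulo a b : ℤ) ∣ x :=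
  orderModulo_dvd_iff.2 ⟨y, h.symm⟩

lemma orderModulo_dvd_addOrderOf (a b : Γ) : (orderModulo b a : ℤ) ∣ addOrderOf a :=
  orderModulo_dvd_of_zsmul_eq (y := 0) (by
    rw [natCast_zsmul, addOrderOf_nsmul_eq_zero, zero_zsmul])

lemma exists_addOrderOf_dvd_orderModulo_sub (hs : (orderModulo a b : ℤ) • b = s • a) :
    ∃ y : ℤ, (addOrderOf a : ℤ) ∣ orderModulo b a - y * s := by
  obtain ⟨z, hz⟩ := exists_orderModulo_zsmul_eq b a
  obtain ⟨y, rfl⟩ := orderModulo_dvd_of_zsmul_eq hz.symm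
  refine ⟨y, addOrderOf_dvd_iff_zsmul_eq_zero.2 ?_⟩
  rw [sub_smul, mul_smul, ← hs, hz, mul_comm, mul_smul, sub_self]

lemma isTwistedGrid_orderModulo (hpos : 0 < orderModulo a b)
    (hgen : AddSubgroup.closure {a, b} = ⊤) (hs : (orderModulo a b : ℤ) • b = s • a) :
    IsTwistedGrid a b (orderModulo a b) (addOrderOf a) s where
  period := by rw [natCast_zsmul, addOrderOf_nsmul_eq_zero]
  wrap := hs
  eq_and_dvd j i j' i' hj hjg hj' hjg' h := by
    have hrow : (j - j') • b = (i' - i) • a := by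
      rw [sub_smul, sub_smul, sub_eq_sub_iff_add_eq_add, add_comm (i' • a)]
      exact h
    obtain rfl : j = j' := by
      by_contra hne
      exact not_dvd_sub_of_ne hne (by lia) (by lia) (orderModulo_dvd_of_zsmul_eq hrow)
    rw [sub_self, zero_zsmul] at hrow
    exact ⟨rfl, dvd_sub_comm.1 (addOrderOf_dvd_iff_zsmul_eq_zero.2 hrow.symm)⟩
  exists_eq v := by
    obtain ⟨x, y, rfl⟩ := AddSubgroup.mem_closure_pair.1 (hgen ▸ AddSubgroup.mem_top v)
    refine ⟨y % orderModulo a b, x + y / orderModulo a b * s, Int.emod_nonneg _ (by lia),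
      Int.emod_lt_of_pos _ (by lia), ?_⟩
    nth_rw 3 [← Int.mul_ediv_add_emod y (orderModulo a b)]
    rw [gridVertex, add_zsmul, add_zsmul, mul_zsmul, ← hs, mul_comm, mul_zsmul]
    abel

namespace IsStaircaseGrid

lemma neg (hG : IsStaircaseGrid a b g N s H) : IsStaircaseGrid (-a) b g N (-s) H := by
  have hvertex (j i : ℤ) : gridVertex (-a) b j i = gridVertex a b j (-i) := by
    rw [gridVertex, gridVertex, zsmul_neg, neg_zsmul]
  refine { hG with period := ?_, wrap := ?_, eq_and_dvd := ?_, exists_eq := ?_ }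
  · rw [zsmul_neg, hG.period, neg_zero]
  · rw [zsmul_neg, neg_zsmul, neg_neg, hG.wrap]
  · intro j i j' i' hj hjg hj' hjg' h
    rw [hvertex, hvertex] at h
    obtain ⟨hjj, hdvd⟩ := hG.eq_and_dvd _ _ _ _ hj hjg hj' hjg' h
    rw [neg_sub_neg, dvd_sub_comm] at hdvd
    exact ⟨hjj, hdvd⟩
  · intro v
    obtain ⟨j, i, hj, hjg, rfl⟩ := hG.exists_eq v
    exact ⟨j, -i, hj, hjg, by rw [hvertex, neg_neg]⟩

theorem isHamDecomposable_cayley (hG : IsStaircaseGrid a b g N s H)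
    (hcolumn : (columnGraph a b g H).Connected) : IsHamDecomposable (cayley {a, b}) 2 :=
  isHamDecomposable_cayley_pair hG.hasDistinctSteps hG.isSwitchSet hG.connected_rowGraph hcolumn

/- The inverse `p` of `s` modulo `N` may be chosen less than `N / 2` after possibly replacing `a` by
`-a`. -/
lemma isHamDecomposable_cayley_of_inverse (hG : IsStaircaseGrid a b g N s 3) (hN : N % 2 = 1)
    {y : ℤ} (hy : N ∣ 1 - y * s) : IsHamDecomposable (cayley {a, b}) 2 := by
  have ⟨_, _, _, _, _, hN3⟩ := hG
  obtain ⟨p, hp, hpN, hdvd⟩ := exists_dvd_sub_of_pos (show 0 < N by lia) 0 y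
  have hps : N ∣ s * p - 1 := by
    convert Int.dvd_neg.2 (Int.dvd_add (hdvd.mul_right s) hy) using 1
    ring
  have hp0 : p ≠ 0 := by
    rintro rfl
    have := Int.le_of_dvd one_pos (by simpa using hps)
    lia
  rcases lt_or_ge (2 * p) N with hlt | hge
  · exact hG.isHamDecomposable_cayley (hG.connected_columnGraph_of_inverse (by lia) hlt hps)
  · have hps' : N ∣ -s * (N - p) - 1 := by
      convert Int.dvd_sub hps (dvd_mul_left N s) using 1
      ring
    rw [← cayley_neg_pair]
    exact hG.neg.isHamDecomposable_cayley
      (hG.neg.connected_columnGraph_of_inverse (by lia) (by lia) hps')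

end IsStaircaseGrid

lemma three_le_of_odd_of_ne_one {n : ℕ} (hn : Odd n) (h1 : n ≠ 1) : 3 ≤ n := by
  obtain ⟨r, rfl⟩ := hn
  lia

lemma isStaircaseGrid_orderModulo (hodd : Odd (Nat.card Γ))
    (hgen : AddSubgroup.closure {a, b} = ⊤) (hs : (orderModulo a b : ℤ) • b = s • a) {w : ℕ}
    (hw : Odd w) (hw3 : 3 ≤ w) (hwg : w ≤ orderModulo a b) (hwN : w ≤ addOrderOf a) :
    IsStaircaseGrid a b (orderModulo a b) (addOrderOf a) s w where
  toIsTwistedGrid := isTwistedGrid_orderModulo (by lia) hgen hs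
  odd_rows := by
    have := Nat.odd_iff.1 (odd_orderModulo (a := a) (b := b) hodd)
    lia
  odd_width := by
    have := Nat.odd_iff.1 hw
    lia
  three_le_width := by lia
  width_le_rows := by lia
  width_le_period := by lia

lemma isHamDecomposable_cayley_of_three_le_orderModulo (hodd : Odd (Nat.card Γ))
    (hgen : AddSubgroup.closure {a, b} = ⊤) (h3 : 3 ≤ orderModulo b a)
    (hle : orderModulo b a ≤ orderModulo a b) : IsHamDecomposable (cayley {a, b}) 2 := by
  have : Finite Γ := Nat.finite_of_card_ne_zero hodd.pos.ne'
  obtain ⟨s, hs⟩ := exists_orderModulo_zsmul_eq a b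
  obtain ⟨y, hy⟩ := exists_addOrderOf_dvd_orderModulo_sub hs
  have hN := orderModulo_dvd_addOrderOf a b
  have hG := isStaircaseGrid_orderModulo hodd hgen hs (odd_orderModulo hodd) h3 hle
    (Nat.le_of_dvd (addOrderOf_pos a) (Int.natCast_dvd_natCast.1 hN))
  refine hG.isHamDecomposable_cayley
    (hG.connected_columnGraph_of_dvd (orderModulo_dvd_of_zsmul_eq hs.symm) hN fun i => ?_)
  refine ⟨i % orderModulo b a, i / orderModulo b a * y, Int.emod_nonneg _ (by lia),
    Int.emod_lt_of_pos _ (by lia), ?_⟩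
  have hi : i - (i % orderModulo b a + i / orderModulo b a * y * s) =
      i / orderModulo b a * (orderModulo b a - y * s) := by
    linear_combination -Int.mul_ediv_add_emod i (orderModulo b a)
  exact hi ▸ hy.mul_left _

lemma isHamDecomposable_cayley_of_orderModulo_eq_one (hodd : Odd (Nat.card Γ)) (ha : a ≠ 0)
    (hgen : AddSubgroup.closure {a, b} = ⊤) (h1 : orderModulo b a = 1)
    (h3 : 3 ≤ orderModulo a b) : IsHamDecomposable (cayley {a, b}) 2 := by
  obtain ⟨s, hs⟩ := exists_orderModulo_zsmul_eq a b
  obtain ⟨y, hy⟩ := exists_addOrderOf_dvd_orderModulo_sub hs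
  have hN : Odd (addOrderOf a) := hodd.of_dvd_nat (addOrderOf_dvd_natCard a)
  have hN3 := three_le_of_odd_of_ne_one hN (by rwa [Ne, AddMonoid.addOrderOf_eq_one_iff])
  have hG := isStaircaseGrid_orderModulo hodd hgen hs (by decide : Odd 3) le_rfl h3 hN3
  rw [h1] at hy
  have := Nat.odd_iff.1 hN
  exact hG.isHamDecomposable_cayley_of_inverse (by lia) hy

lemma zmultiples_eq_top_of_orderModulo_eq_one (hgen : AddSubgroup.closure {a, b} = ⊤)
    (h1 : orderModulo a b = 1) : AddSubgroup.zmultiples a = ⊤ := by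
  refine top_le_iff.1 (hgen ▸ (AddSubgroup.closure_le _).2 ?_)
  rintro x (rfl | rfl)
  · exact AddSubgroup.mem_zmultiples x
  · simpa using orderModulo_dvd_iff.1 (show (orderModulo a x : ℤ) ∣ 1 by simp [h1])

lemma isHamDecomposable_cayley_of_zmultiples_eq_top (h : HasDistinctSteps a b)
    (ha : AddSubgroup.zmultiples a = ⊤) (hb : AddSubgroup.zmultiples b = ⊤) :
    IsHamDecomposable (cayley {a, b}) 2 := by
  rw [Set.insert_eq, cayley_union]
  refine (isCycleGraph_cayley_singleton h.two_left ha).sup_isHamDecomposable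
    (isCycleGraph_cayley_singleton h.two_right hb) (disjoint_cayley ?_)
  rintro _ rfl
  exact ⟨h.ne, fun hneg => h.add_ne_zero (by rw [← Set.mem_singleton_iff.1 hneg, add_neg_cancel])⟩

theorem isHamDecomposable_cayley_of_closure_eq_top (hodd : Odd (Nat.card Γ))
    (h : HasDistinctSteps a b) (hgen : AddSubgroup.closure {a, b} = ⊤) :
    IsHamDecomposable (cayley {a, b}) 2 := by
  wlog hle : orderModulo b a ≤ orderModulo a b generalizing a b
  · rw [Set.pair_comm] at hgen ⊢
    exact this h.symm hgen (le_of_not_ge hle)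
  have ha : a ≠ 0 := fun h0 => h.two_left (by rw [h0, add_zero])
  by_cases hba : orderModulo b a = 1
  · by_cases hab : orderModulo a b = 1
    · exact isHamDecomposable_cayley_of_zmultiples_eq_top h
        (zmultiples_eq_top_of_orderModulo_eq_one hgen hab)
        (zmultiples_eq_top_of_orderModulo_eq_one (Set.pair_comm a b ▸ hgen) hba)
    · exact isHamDecomposable_cayley_of_orderModulo_eq_one hodd ha hgen hba
        (three_le_of_odd_of_ne_one (odd_orderModulo hodd) hab)
  · exact isHamDecomposable_cayley_of_three_le_orderModulo hodd hgen
      (three_le_of_odd_of_ne_one (odd_orderModulo hodd) hba) hle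

end OddOrder

/-! ### Circulant graphs of odd order -/

section Circulant

variable {m : ℕ}

lemma intCast_zmod_mem_image_iff {A : Set ℤ} (hA : ∀ z ∈ A, |z| ≤ m) {z : ℤ} (hz : |z| ≤ m) :
    (z : ZMod (2 * m + 1)) ∈ Int.cast '' A ↔ z ∈ A :=
  (injOn_intCast_zmod m).mem_image_iff (fun z hz => hA z hz) hz

lemma exists_intCast_zmod_eq (d : ZMod (2 * m + 1)) :
    ∃ z : ℤ, |z| ≤ m ∧ (z : ZMod (2 * m + 1)) = d := by
  have h := ZMod.valMinAbs_mem_Ioc d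
  rw [Set.mem_Ioc] at h
  exact ⟨d.valMinAbs, abs_le.2 (by lia), ZMod.coe_valMinAbs d⟩

lemma intCast_zmod_ne {z w : ℤ} (hz : |z| ≤ m) (hw : |w| ≤ m) (hne : z ≠ w) :
    (z : ZMod (2 * m + 1)) ≠ w :=
  (injOn_intCast_zmod m).ne hz hw hne

lemma intCast_zmod_add_ne_zero {z w : ℤ} (hz : 0 < z ∧ z ≤ m) (hw : 0 < w ∧ w ≤ m) :
    (z : ZMod (2 * m + 1)) + w ≠ 0 := by
  rw [Ne, ← eq_neg_iff_add_eq_zero, ← Int.cast_neg]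
  exact intCast_zmod_ne (abs_le.2 (by lia)) (abs_le.2 (by lia)) (by lia)

lemma hasDistinctSteps_intCast_zmod {z w : ℤ} (hz : 0 < z ∧ z ≤ m) (hw : 0 < w ∧ w ≤ m)
    (hne : z ≠ w) : HasDistinctSteps (z : ZMod (2 * m + 1)) w where
  two_left := intCast_zmod_add_ne_zero hz hz
  two_right := intCast_zmod_add_ne_zero hw hw
  ne := intCast_zmod_ne (abs_le.2 (by lia)) (abs_le.2 (by lia)) hne
  add_ne_zero := intCast_zmod_add_ne_zero hz hw

lemma isHamDecomposable_cayley_consecutive {d : ℤ} (hd : 0 < d) (hdm : d + 1 ≤ m) :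
    IsHamDecomposable (cayley {(d : ZMod (2 * m + 1)), ((d + 1 : ℤ) : ZMod (2 * m + 1))}) 2 := by
  refine isHamDecomposable_cayley_of_closure_eq_top (by simp)
    (hasDistinctSteps_intCast_zmod (by lia) (by lia) (by lia))
    ((AddSubgroup.eq_top_iff' _).2 fun x => AddSubgroup.mem_closure_pair.2 ?_)
  exact ⟨-x.cast, x.cast, by simp⟩

lemma isCycleGraph_cayley_half (hm : 0 < m) :
    IsCycleGraph (cayley {((m : ℤ) : ZMod (2 * m + 1))}) := by
  refine isCycleGraph_cayley_singleton (intCast_zmod_add_ne_zero (by lia) (by lia))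
    ((AddSubgroup.eq_top_iff' _).2 fun x => ⟨-2 * x.cast, ?_⟩)
  have hzero : (2 * m + 1 : ZMod (2 * m + 1)) = 0 := by exact_mod_cast ZMod.natCast_self (2 * m + 1)
  simp only [zsmul_eq_mul, Int.cast_mul, Int.cast_neg, Int.cast_ofNat, ZMod.intCast_cast,
    ZMod.cast_id', id_eq, Int.cast_natCast]
  linear_combination -x * hzero

theorem isHamDecomposable_cayley_Ioc {l e : ℕ} (hle : l + e = m) :
    IsHamDecomposable (cayley (Int.cast '' Set.Ioc (l : ℤ) m : Set (ZMod (2 * m + 1)))) e := by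
  induction e using Nat.twoStepInduction generalizing l with
  | zero =>
    have hempty : Set.Ioc (l : ℤ) m = ∅ := Set.Ioc_eq_empty (by lia)
    have hbot : cayley (∅ : Set (ZMod (2 * m + 1))) = ⊥ := by
      ext x y
      simp [cayley_adj]
    rw [hempty, Set.image_empty, hbot]
    exact isHamDecomposable_bot
  | one =>
    have hsingleton : Set.Ioc (l : ℤ) m = {(m : ℤ)} := by
      ext z
      rw [Set.mem_Ioc, Set.mem_singleton_iff]
      lia
    rw [hsingleton, Set.image_singleton]
    exact (isCycleGraph_cayley_half (by lia)).isHamDecomposable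
  | more e ih _ =>
    have hsplit : Set.Ioc (l : ℤ) m =
        {(l + 1 : ℤ), (l + 1 + 1 : ℤ)} ∪ Set.Ioc ((l + 2 : ℕ) : ℤ) m := by
      ext z
      simp only [Set.mem_union, Set.mem_Ioc, Set.mem_insert_iff, Set.mem_singleton_iff]
      lia
    have hmem {z : ℤ} (hz : |z| ≤ m) := intCast_zmod_mem_image_iff
      (A := Set.Ioc ((l + 2 : ℕ) : ℤ) m) (fun w hw => abs_le.2 (by rw [Set.mem_Ioc] at hw; lia)) hz
    rw [hsplit, Set.image_union, Set.image_pair, cayley_union, add_comm e]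
    refine (isHamDecomposable_cayley_consecutive (by lia) (by lia)).sup (ih (by lia))
      (disjoint_cayley ?_)
    rintro _ (rfl | rfl) <;>
    · rw [← Int.cast_neg, hmem (abs_le.2 (by lia)), hmem (abs_le.2 (by lia)), Set.mem_Ioc,
        Set.mem_Ioc]
      lia

lemma cayley_Ioc_adj {l : ℕ} (hlm : l ≤ m) {x y : ZMod (2 * m + 1)} :
    (cayley (Int.cast '' Set.Ioc (l : ℤ) m)).Adj x y ↔
      x ≠ y ∧ y - x ∉ Int.cast '' {z : ℤ | z ∈ signedRange l} := by
  rw [cayley_adj]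
  refine and_congr_right fun hxy => ?_
  obtain ⟨z, hz, hzxy⟩ := exists_intCast_zmod_eq (y - x)
  have hz0 : z ≠ 0 := by
    rintro rfl
    exact hxy (sub_eq_zero.1 (by rw [← hzxy, Int.cast_zero])).symm
  have hIoc {w : ℤ} (hw : |w| ≤ m) := intCast_zmod_mem_image_iff
    (A := Set.Ioc (l : ℤ) m) (fun w hw => abs_le.2 (by rw [Set.mem_Ioc] at hw; lia)) hw
  rw [← neg_sub y x, ← hzxy, ← Int.cast_neg, hIoc hz, hIoc ((abs_neg z).trans_le hz),
    intCast_zmod_mem_image_iff (A := {z | z ∈ signedRange l})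
      (fun w hw => (mem_signedRange.1 hw).2.trans (by lia)) hz,
    Set.mem_ofPred_eq, mem_signedRange, Set.mem_Ioc, Set.mem_Ioc, abs_le]
  rw [abs_le] at hz
  lia

lemma zero_notMem_image_signedRange {l : ℕ} (hlm : l ≤ m) :
    (0 : ZMod (2 * m + 1)) ∉ Int.cast '' {z : ℤ | z ∈ signedRange l} := by
  rintro ⟨z, hz, hz0⟩
  obtain ⟨hne, hzl⟩ := mem_signedRange.1 hz
  exact intCast_zmod_ne (m := m) (w := 0) (by lia) (by simp) hne (by rw [hz0, Int.cast_zero])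

end Circulant

end CycleFactorization

open CycleFactorization in
theorem stmt13_general (k m l : ℕ) (hk : Odd k) (hk3 : 3 ≤ k) (hkm : k ≤ 2 * m + 1) (hl : l ≤ m)
    (hl1 : l ≠ 1) (hl2 : l ≠ 2) :
    HW (cayley {p : ZMod k × ZMod (2 * m + 1) | (p.1 = 1 ∨ p.1 = -1) ∧ p.2 ≠ 0})
      k (2 * m + 1) (2 * l) (2 * m - 2 * l) := by
  obtain ⟨ι, _, S, hι, hS⟩ := exists_potential_signedRange hk hk3 hl hl1 hl2
  obtain ⟨G, hcycle, hG⟩ := isHamDecomposable_cayley_Ioc (Nat.add_sub_of_le hl)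
  have hhom (j) : Nonempty (G j →g cayley ({1} : Set (ZMod k))) :=
    (hcycle j).nonempty_hom_cayley_zmod_of_odd hk hk3 (by simp) (by simpa using hkm)
  have hHW := hw_cayley_prod hk3 (zero_notMem_image_signedRange hl) hS
    (fun x y => cayley_Ioc_adj hl) hcycle hG fun j => (hhom j).some
  rwa [Nat.card_zmod, hι, Nat.card_fin, Nat.sub_mul, mul_comm m, mul_comm l] at hHW

theorem stmt13 (k t l : ℕ) (hk : Odd k) (hk3 : 3 ≤ k) (ht : 1 ≤ t)
    (hl : l ≤ k * t) (hl1 : l ≠ 1) (hl2 : l ≠ 2)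
    (hl3 : l ≠ k * t - 1) (hl4 : l ≠ k * t) :
    HW (cayley {p : ZMod k × ZMod (2 * k * t + 1) |
        (p.1 = 1 ∨ p.1 = -1) ∧ p.2 ≠ 0})
      k (2 * k * t + 1) (2 * l) (2 * k * t - 2 * l) := by
  have hkt : k ≤ 2 * (k * t) + 1 := by nlinarith
  rw [mul_assoc]
  exact stmt13_general k (k * t) l hk hk3 hkt hl hl1 hl2
end

section
/- Let k ≥ 3 and u ≥ 1. If a (k,1)-cycle frame of type 2^u exists, then the Cayley graph Cay(Z_k × Z_{2u}, ({0} × (Z_{2u} \ {0})) ∪ ({1, −1} × {0})) can be decomposed into u C_k-factors and one 1-factor (perfect matching). -/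
open SimpleGraph

/-- The complete multipartite graph `K_u[g]` with parts indexed by the first
coordinate. -/
def completeMultipartiteG (u g : ℕ) : SimpleGraph (ZMod u × ZMod g) :=
  SimpleGraph.fromRel (fun a b => a.1 ≠ b.1)

/-- A holey `C_k`-factor of `H` missing the set `hole`: a subgraph covering
exactly the vertices outside `hole`, 2-regular there, with all components
cycles of length `k`. -/
def IsHoleyCycleFactor {V : Type*} (H F : SimpleGraph V) (k : ℕ) (hole : Set V) : Prop :=
  F ≤ H ∧ F.support = holeᶜ ∧ (∀ v ∈ F.support, (F.neighborSet v).ncard = 2) ∧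
  ∀ v ∈ F.support, {w | F.Reachable v w}.ncard = k

/-- A `(k,1)`-cycle frame of type `g^u`: a partition of the edges of `K_u[g]`
into holey `C_k`-factors, each missing one of the parts. -/
def IsCycleFrame (k g u : ℕ) : Prop :=
  ∃ (N : ℕ) (F : Fin N → SimpleGraph (ZMod u × ZMod g)) (miss : Fin N → ZMod u),
    (∀ i, IsHoleyCycleFactor (completeMultipartiteG u g) (F i) k
      {p : ZMod u × ZMod g | p.1 = miss i}) ∧
    IsDecomp (completeMultipartiteG u g) F

/-!
The Cayley graph is the box product `C_k □ K_{2u}`, and `K_{2u}` is `K_u[2]` together with the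
perfect matching formed by its parts. Comparing degrees in the frame shows that, for `u ≥ 2`, each
part of `K_u[2]` is missed by exactly one holey factor. Take all `k` copies of the holey factor
missing a given part, and add the copies of `C_k` lying over the two vertices of that part: this is
a `C_k`-factor of `C_k □ K_u[2]`, and the `u` factors so obtained use every edge exactly once. The
copies of the perfect matching are what remains.
-/

section Decomposition

variable {V V' ι ι' : Type*} {H K : SimpleGraph V} {H' : SimpleGraph V'} {F : ι → SimpleGraph V}

theorem isDecomp_iff_adj :
    IsDecomp H F ↔ (∀ i j a b, (F i).Adj a b → (F j).Adj a b → i = j) ∧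
      ∀ a b, H.Adj a b ↔ ∃ i, (F i).Adj a b := by
  refine and_congr ⟨fun hF i j a b hi hj => ?_, fun hF i j hij => ?_⟩ Sym2.forall
  · by_contra hij
    exact Set.disjoint_left.1 (hF hij) ((mem_edgeSet _).2 hi) ((mem_edgeSet _).2 hj)
  · exact Set.disjoint_left.2 <| Sym2.ind fun a b hi hj => hij (hF i j a b hi hj)

theorem IsDecomp.le_s14 (hF : IsDecomp H F) (i : ι) : F i ≤ H :=
  fun a b hab => ((isDecomp_iff_adj.1 hF).2 a b).2 ⟨i, hab⟩

theorem isDecomp_bot : IsDecomp (⊥ : SimpleGraph V) fun _ : ι => ⊥ :=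
  isDecomp_iff_adj.2 ⟨fun _ _ _ _ h => h.elim, by simp⟩

theorem IsDecomp.reindex (hF : IsDecomp H F) (σ : ι' ≃ ι) : IsDecomp H (F ∘ σ) := by
  obtain ⟨hdisj, hcover⟩ := isDecomp_iff_adj.1 hF
  refine isDecomp_iff_adj.2 ⟨fun i j a b hi hj => σ.injective (hdisj _ _ a b hi hj), fun a b => ?_⟩
  rw [hcover, σ.surjective.exists]
  rfl

theorem IsDecomp.comap_iso (hF : IsDecomp H F) (φ : H' ≃g H) :
    IsDecomp H' fun i => (F i).comap φ := by
  obtain ⟨hdisj, hcover⟩ := isDecomp_iff_adj.1 hF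
  refine isDecomp_iff_adj.2 ⟨fun i j a b => hdisj i j (φ a) (φ b), fun a b => ?_⟩
  rw [← φ.map_adj_iff, hcover]
  rfl

theorem IsDecomp.sumElim_sdiff (hF : IsDecomp H F) (hHK : H ≤ K) :
    IsDecomp K (Sum.elim F fun _ : Unit => K \ H) := by
  obtain ⟨hdisj, hcover⟩ := isDecomp_iff_adj.1 hF
  refine isDecomp_iff_adj.2 ⟨?_, fun a b => ?_⟩
  · rintro (i | _) (j | _) a b hi hj
    · exact congrArg Sum.inl (hdisj i j a b hi hj)
    · exact (hj.2 (hF.le_s14 i hi)).elim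
    · exact (hi.2 (hF.le_s14 j hj)).elim
    · rfl
  · have := @hHK a b
    simp only [Sum.exists, Sum.elim_inl, Sum.elim_inr, sdiff_adj, exists_const, ← hcover]
    tauto

theorem IsDecomp.ncard_neighborSet [Finite V] [Fintype ι] (hF : IsDecomp H F) (v : V) :
    (H.neighborSet v).ncard = ∑ i, ((F i).neighborSet v).ncard := by
  obtain ⟨hdisj, hcover⟩ := isDecomp_iff_adj.1 hF
  have hunion : H.neighborSet v = ⋃ i, (F i).neighborSet v := by
    ext w
    simp only [mem_neighborSet, hcover, Set.mem_iUnion]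
  rw [hunion, Set.ncard_iUnion_of_finite (fun _ => Set.toFinite _), finsum_eq_sum_of_fintype]
  exact fun i j hij => Set.disjoint_left.2 fun w hi hj => hij (hdisj i j v w hi hj)

end Decomposition

section Isomorphism

variable {V V' ι ι' : Type*} {H : SimpleGraph V} {H' : SimpleGraph V'} {k : ℕ}

theorem ncard_neighborSet_of_iso (φ : H' ≃g H) (v : V') :
    (H'.neighborSet v).ncard = (H.neighborSet (φ v)).ncard :=
  Set.ncard_congr' (φ.mapNeighborSet v)

theorem ncard_reachable_of_iso (φ : H' ≃g H) (v : V') :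
    {w | H'.Reachable v w}.ncard = {w | H.Reachable (φ v) w}.ncard :=
  Set.ncard_congr' (φ.toEquiv.subtypeEquiv fun _ => φ.reachable_iff.symm)

theorem IsCycleFactor.comap_iso {F : SimpleGraph V} (hF : IsCycleFactor H F k) (φ : H' ≃g H) :
    IsCycleFactor H' (F.comap φ) k :=
  have ψ : F.comap φ ≃g F := Iso.comap φ.toEquiv F
  ⟨fun _ _ hab => φ.map_adj_iff.1 (hF.1 hab),
    fun v => (ncard_neighborSet_of_iso ψ v).trans (hF.2.1 _),
    fun v => (ncard_reachable_of_iso ψ v).trans (hF.2.2 _)⟩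

/-- `H` decomposes into `C_k`-factors indexed by `ι` together with one 1-factor. The 1-factor is
encoded as a spanning 1-regular subgraph. -/
def HasCycleOneFactorization (H : SimpleGraph V) (k : ℕ) (ι : Type*) : Prop :=
  ∃ F : ι ⊕ Unit → SimpleGraph V,
    (∀ i, IsCycleFactor H (F (Sum.inl i)) k) ∧
    (∀ j, F (Sum.inr j) ≤ H ∧ ∀ v, ((F (Sum.inr j)).neighborSet v).ncard = 1) ∧
    IsDecomp H F

theorem HasCycleOneFactorization.of_iso (hH : HasCycleOneFactorization H k ι) (φ : H' ≃g H)
    (σ : ι' ≃ ι) : HasCycleOneFactorization H' k ι' := by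
  obtain ⟨F, hcycle, hmatch, hdecomp⟩ := hH
  refine ⟨fun i => (F (σ.sumCongr (Equiv.refl Unit) i)).comap φ, fun i => (hcycle _).comap_iso φ,
    fun j => ⟨fun a b hab => φ.map_adj_iff.1 ((hmatch j).1 hab), fun v => ?_⟩,
    (hdecomp.reindex _).comap_iso φ⟩
  exact (ncard_neighborSet_of_iso (Iso.comap φ.toEquiv _) v).trans ((hmatch j).2 _)

end Isomorphism

section HoleyCycleFactor

variable {V : Type*} {H F : SimpleGraph V} {k : ℕ} {hole : Set V}

theorem IsHoleyCycleFactor.ncard_neighborSet_of_notMem (hF : IsHoleyCycleFactor H F k hole) {v : V}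
    (hv : v ∉ hole) : (F.neighborSet v).ncard = 2 :=
  hF.2.2.1 v (hF.2.1 ▸ hv)

theorem IsHoleyCycleFactor.ncard_reachable_of_notMem (hF : IsHoleyCycleFactor H F k hole) {v : V}
    (hv : v ∉ hole) : {w | F.Reachable v w}.ncard = k :=
  hF.2.2.2 v (hF.2.1 ▸ hv)

theorem IsHoleyCycleFactor.disjoint_support (hF : IsHoleyCycleFactor H F k hole) :
    Disjoint F.support hole :=
  hF.2.1 ▸ disjoint_compl_left

theorem IsHoleyCycleFactor.ncard_neighborSet_of_mem (hF : IsHoleyCycleFactor H F k hole) {v : V}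
    (hv : v ∈ hole) : (F.neighborSet v).ncard = 0 := by
  have hempty : F.neighborSet v = ∅ := Set.eq_empty_of_forall_notMem fun w hw =>
    Set.disjoint_left.1 hF.disjoint_support ⟨w, hw⟩ hv
  rw [hempty, Set.ncard_empty]

theorem isHoleyCycleFactor_bot : IsHoleyCycleFactor H ⊥ k Set.univ := by
  simp [IsHoleyCycleFactor]

end HoleyCycleFactor

section CompleteMultipartite

variable {u g : ℕ}

theorem completeMultipartiteG_adj {p q : ZMod u × ZMod g} :
    (completeMultipartiteG u g).Adj p q ↔ p.1 ≠ q.1 := by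
  rw [completeMultipartiteG, fromRel_adj, ne_comm (a := q.1), or_self, and_iff_right_iff_imp]
  exact fun hne hpq => hne (congrArg Prod.fst hpq)

theorem completeMultipartiteG_one : completeMultipartiteG 1 g = ⊥ := by
  ext p q
  simp [completeMultipartiteG_adj, Subsingleton.elim p.1 q.1]

theorem ncard_neighborSet_completeMultipartiteG [NeZero u] (p : ZMod u × ZMod g) :
    ((completeMultipartiteG u g).neighborSet p).ncard = (u - 1) * g := by
  have hprod : (completeMultipartiteG u g).neighborSet p = {p.1}ᶜ ×ˢ Set.univ := by
    ext q
    simp [completeMultipartiteG_adj, eq_comm]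
  rw [hprod, Set.ncard_prod, Set.ncard_compl, Set.ncard_singleton, Set.ncard_univ,
    Nat.card_zmod, Nat.card_zmod]

theorem ncard_neighborSet_compl_completeMultipartiteG [NeZero g] (p : ZMod u × ZMod g) :
    ((completeMultipartiteG u g)ᶜ.neighborSet p).ncard = g - 1 := by
  have hprod : (completeMultipartiteG u g)ᶜ.neighborSet p = {p.1} ×ˢ {p.2}ᶜ := by
    ext q
    simp only [mem_neighborSet, compl_adj, completeMultipartiteG_adj, not_not, Set.mem_prod,
      Set.mem_singleton_iff, Set.mem_compl_iff]
    grind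
  rw [hprod, Set.ncard_prod, Set.ncard_compl, Set.ncard_singleton,
    Set.ncard_singleton, Nat.card_zmod, one_mul]

end CompleteMultipartite

section Frame

open Finset

variable {ι : Type*} {k g u : ℕ} {F : ι → SimpleGraph (ZMod u × ZMod g)} {miss : ι → ZMod u}

theorem two_mul_card_miss_ne [Fintype ι] [NeZero g] [NeZero u]
    (hF : ∀ i, IsHoleyCycleFactor (completeMultipartiteG u g) (F i) k {p | p.1 = miss i})
    (hdecomp : IsDecomp (completeMultipartiteG u g) F) (x : ZMod u) :
    2 * #{i | miss i ≠ x} = (u - 1) * g := by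
  have hdeg (i : ι) : ((F i).neighborSet (x, 0)).ncard = if miss i ≠ x then 2 else 0 := by
    split_ifs with hi
    · exact (hF i).ncard_neighborSet_of_notMem (Ne.symm hi)
    · exact (hF i).ncard_neighborSet_of_mem (not_not.1 hi).symm
  rw [← ncard_neighborSet_completeMultipartiteG (x, (0 : ZMod g)), hdecomp.ncard_neighborSet,
    sum_congr rfl fun i _ => hdeg i, ← sum_filter, sum_const, smul_eq_mul, mul_comm]

theorem two_mul_card_miss_eq [Fintype ι] [NeZero g] (hu : 2 ≤ u)
    (hF : ∀ i, IsHoleyCycleFactor (completeMultipartiteG u g) (F i) k {p | p.1 = miss i})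
    (hdecomp : IsDecomp (completeMultipartiteG u g) F) (x : ZMod u) :
    2 * #{i | miss i = x} = g := by
  obtain ⟨n, rfl⟩ : ∃ n, u = n + 2 := Nat.exists_eq_add_of_le' hu
  have hsplit (y : ZMod (n + 2)) :
      2 * #{i | miss i = y} + (n + 1) * g = 2 * Fintype.card ι := by
    have hne : 2 * #{i | ¬miss i = y} = (n + 1) * g := two_mul_card_miss_ne hF hdecomp y
    rw [← hne, ← mul_add, card_filter_add_card_filter_not, card_univ]
  have hfibers : ∑ y, #{i | miss i = y} = Fintype.card ι :=
    (card_eq_sum_card_fiberwise fun _ _ => mem_coe.2 (mem_univ _)).symm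
  have hsum : 2 * Fintype.card ι + (n + 2) * ((n + 1) * g) = (n + 2) * (2 * Fintype.card ι) := by
    have := Fintype.sum_congr _ _ hsplit
    simpa [sum_add_distrib, ← mul_sum, hfibers] using this
  have htotal : 2 * Fintype.card ι = (n + 2) * g :=
    Nat.eq_of_mul_eq_mul_left n.succ_pos (by linarith)
  linarith [hsplit x]

theorem bijective_miss [Finite ι] (hu : 2 ≤ u) {F : ι → SimpleGraph (ZMod u × ZMod 2)}
    (hF : ∀ i, IsHoleyCycleFactor (completeMultipartiteG u 2) (F i) k {p | p.1 = miss i})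
    (hdecomp : IsDecomp (completeMultipartiteG u 2) F) : Function.Bijective miss := by
  have := Fintype.ofFinite ι
  rw [Function.bijective_iff_existsUnique]
  intro x
  rw [Fintype.existsUnique_iff_card_one]
  have := two_mul_card_miss_eq hu hF hdecomp x
  omega

theorem IsCycleFrame.exists_indexed_by_parts [NeZero u] (hframe : IsCycleFrame k 2 u) :
    ∃ G : ZMod u → SimpleGraph (ZMod u × ZMod 2),
      (∀ x, IsHoleyCycleFactor (completeMultipartiteG u 2) (G x) k {p | p.1 = x}) ∧
      IsDecomp (completeMultipartiteG u 2) G := by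
  obtain ⟨N, F, miss, hF, hdecomp⟩ := hframe
  obtain rfl | hu : u = 1 ∨ 2 ≤ u := by have := NeZero.pos u; omega
  · -- `K_1[2]` has no edges, so here a frame may consist of any number of empty holey factors.
    refine ⟨fun _ => ⊥, fun x => ?_, ?_⟩
    · have hhole : {p : ZMod 1 × ZMod 2 | p.1 = x} = Set.univ :=
        Set.eq_univ_of_forall fun p => Subsingleton.elim p.1 x
      rw [hhole]
      exact isHoleyCycleFactor_bot
    · rw [completeMultipartiteG_one]
      exact isDecomp_bot
  · let σ := Equiv.ofBijective miss (bijective_miss hu hF hdecomp)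
    refine ⟨fun x => F (σ.symm x), fun x => ?_, hdecomp.reindex σ.symm⟩
    have hx : miss (σ.symm x) = x := σ.apply_symm_apply x
    simpa only [hx] using hF (σ.symm x)

end Frame

section FillHole

variable {A W X : Type*} {C : SimpleGraph A} {G H : SimpleGraph W} {S : Set W} {k : ℕ}

/-- The subgraph of `C □ G` consisting of all copies of `G` and only those copies of `C` that lie
over `S`. When `G` is a holey cycle factor with hole `S`, the copies of `C` cover exactly the
vertices missed by the copies of `G`. -/
def fillHole (C : SimpleGraph A) (G : SimpleGraph W) (S : Set W) : SimpleGraph (A × W) where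
  Adj p q := (C.Adj p.1 q.1 ∧ p.2 = q.2 ∧ p.2 ∈ S) ∨ (G.Adj p.2 q.2 ∧ p.1 = q.1)
  symm := ⟨fun _ _ => Or.imp (fun h => ⟨h.1.symm, h.2.1.symm, h.2.1 ▸ h.2.2⟩)
    fun h => ⟨h.1.symm, h.2.symm⟩⟩
  loopless := ⟨fun _ => Or.rec (fun h => h.1.ne rfl) fun h => h.1.ne rfl⟩

theorem fillHole_adj {p q : A × W} :
    (fillHole C G S).Adj p q ↔
      (C.Adj p.1 q.1 ∧ p.2 = q.2 ∧ p.2 ∈ S) ∨ (G.Adj p.2 q.2 ∧ p.1 = q.1) :=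
  Iff.rfl

theorem fillHole_le_boxProd (hGH : G ≤ H) : fillHole C G S ≤ C □ H :=
  fun _ _ => Or.imp (fun h => ⟨h.1, h.2.1⟩) fun h => ⟨hGH h.1, h.2⟩

theorem fillHole_adj_of_mem (hS : Disjoint G.support S) {p q : A × W} (hp : p.2 ∈ S) :
    (fillHole C G S).Adj p q ↔ C.Adj p.1 q.1 ∧ p.2 = q.2 := by
  have hG : ¬G.Adj p.2 q.2 := fun h => Set.disjoint_left.1 hS ⟨_, h⟩ hp
  simp only [fillHole_adj, hp, hG, and_true, false_and, or_false]

theorem fillHole_adj_of_notMem {p q : A × W} (hp : p.2 ∉ S) :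
    (fillHole C G S).Adj p q ↔ G.Adj p.2 q.2 ∧ p.1 = q.1 := by
  simp only [fillHole_adj, hp, and_false, false_or]

theorem fillHole_reachable_of_mem (hS : Disjoint G.support S) {p q : A × W} (hp : p.2 ∈ S) :
    (fillHole C G S).Reachable p q ↔ C.Reachable p.1 q.1 ∧ p.2 = q.2 := by
  constructor
  · rintro ⟨walk⟩
    induction walk with
    | nil => exact ⟨.rfl, rfl⟩
    | cons hadj _ ih =>
      obtain ⟨hC, heq⟩ := (fillHole_adj_of_mem hS hp).1 hadj
      obtain ⟨hreach, heq'⟩ := ih (heq ▸ hp)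
      exact ⟨hC.reachable.trans hreach, heq.trans heq'⟩
  · obtain ⟨a, w⟩ := p
    obtain ⟨b, z⟩ := q
    rintro ⟨hreach, rfl : w = z⟩
    exact hreach.map (⟨fun c => (c, w), fun h => Or.inl ⟨h, rfl, hp⟩⟩ : C →g fillHole C G S)

theorem fillHole_reachable_of_notMem (hS : Disjoint G.support S) {p q : A × W} (hp : p.2 ∉ S) :
    (fillHole C G S).Reachable p q ↔ p.1 = q.1 ∧ G.Reachable p.2 q.2 := by
  constructor
  · rintro ⟨walk⟩
    induction walk with
    | nil => exact ⟨rfl, .rfl⟩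
    | cons hadj _ ih =>
      obtain ⟨hG, heq⟩ := (fillHole_adj_of_notMem hp).1 hadj
      obtain ⟨heq', hreach⟩ := ih (Set.disjoint_left.1 hS ⟨_, hG.symm⟩)
      exact ⟨heq.trans heq', hG.reachable.trans hreach⟩
  · obtain ⟨a, w⟩ := p
    obtain ⟨b, z⟩ := q
    rintro ⟨rfl : a = b, hreach⟩
    exact hreach.map (⟨fun c => (a, c), fun h => Or.inr ⟨h, rfl⟩⟩ : G →g fillHole C G S)

theorem isCycleFactor_fillHole (hC : IsCycleFactor C C k) (hG : IsHoleyCycleFactor H G k S) :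
    IsCycleFactor (C □ H) (fillHole C G S) k := by
  have hS := hG.disjoint_support
  refine ⟨fillHole_le_boxProd hG.1, fun ⟨a, w⟩ => ?_, fun ⟨a, w⟩ => ?_⟩ <;> by_cases hw : w ∈ S
  · have hset : (fillHole C G S).neighborSet (a, w) = C.neighborSet a ×ˢ {w} := by
      ext q
      simp [fillHole_adj_of_mem hS, hw, eq_comm]
    rw [hset, Set.ncard_prod, Set.ncard_singleton, mul_one, hC.2.1]
  · have hset : (fillHole C G S).neighborSet (a, w) = {a} ×ˢ G.neighborSet w := by
      ext q
      simp [fillHole_adj_of_notMem, hw, eq_comm, and_comm]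
    rw [hset, Set.ncard_prod, Set.ncard_singleton, one_mul, hG.ncard_neighborSet_of_notMem hw]
  · have hset : {q | (fillHole C G S).Reachable (a, w) q} =
        {b | C.Reachable a b} ×ˢ {w} := by
      ext q
      simp [fillHole_reachable_of_mem hS, hw, eq_comm]
    rw [hset, Set.ncard_prod, Set.ncard_singleton, mul_one, hC.2.2]
  · have hset : {q | (fillHole C G S).Reachable (a, w) q} =
        {a} ×ˢ {z | G.Reachable w z} := by
      ext q
      simp [fillHole_reachable_of_notMem hS, hw, eq_comm]
    rw [hset, Set.ncard_prod, Set.ncard_singleton, one_mul, hG.ncard_reachable_of_notMem hw]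

theorem isDecomp_fillHole {G : X → SimpleGraph W} (hG : IsDecomp H G) (part : W → X) :
    IsDecomp (C □ H) fun x => fillHole C (G x) {w | part w = x} := by
  obtain ⟨hdisj, hcover⟩ := isDecomp_iff_adj.1 hG
  refine isDecomp_iff_adj.2 ⟨?_, fun p q => ?_⟩
  · rintro x y p q (⟨-, heq, hx⟩ | ⟨hx, -⟩) (⟨-, heq', hy⟩ | ⟨hy, -⟩)
    · exact hx.symm.trans hy
    · exact (hy.ne heq).elim
    · exact (hx.ne heq').elim
    · exact hdisj x y _ _ hx hy
  · simp [boxProd_adj, fillHole_adj, hcover, exists_or]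

end FillHole

section BoxProduct

variable {A A' W W' X : Type*} {C : SimpleGraph A} {C' : SimpleGraph A'} {H : SimpleGraph W}
  {H' : SimpleGraph W'} {k : ℕ}

theorem boxProd_top_sdiff_boxProd : (C □ (⊤ : SimpleGraph W)) \ (C □ H) = ⊥ □ Hᶜ := by
  ext p q
  simp only [sdiff_adj, boxProd_adj, top_adj, bot_adj, compl_adj]
  grind

theorem hasCycleOneFactorization_boxProd_top (hC : IsCycleFactor C C k) {G : X → SimpleGraph W}
    {part : W → X} (hG : ∀ x, IsHoleyCycleFactor H (G x) k {w | part w = x})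
    (hdecomp : IsDecomp H G) (hcompl : ∀ w, (Hᶜ.neighborSet w).ncard = 1) :
    HasCycleOneFactorization (C □ (⊤ : SimpleGraph W)) k X := by
  have hle : (C □ H) ≤ (C □ ⊤) := fun _ _ => Or.imp_right fun h => ⟨h.1.ne, h.2⟩
  refine ⟨_, fun x => ?_, fun _ => ⟨sdiff_le, fun v => ?_⟩,
    (isDecomp_fillHole hdecomp part).sumElim_sdiff hle⟩
  · obtain ⟨hsub, hregular⟩ := isCycleFactor_fillHole hC (hG x)
    exact ⟨hsub.trans hle, hregular⟩
  · simp [boxProd_top_sdiff_boxProd, neighborSet_boxProd, Set.ncard_prod, hcompl]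

/-- The isomorphism of box products induced by isomorphisms of both factors. -/
def boxProdCongr (φ : C ≃g C') (ψ : H ≃g H') : (C □ H) ≃g (C' □ H') where
  toEquiv := φ.toEquiv.prodCongr ψ.toEquiv
  map_rel_iff' {p q} := by simp [boxProd_adj, φ.map_adj_iff, ψ.map_adj_iff]

end BoxProduct

section Cayley

variable {k : ℕ}

theorem isCycleFactor_cycleGraph (hk : 3 ≤ k) :
    IsCycleFactor (cycleGraph k) (cycleGraph k) k := by
  obtain ⟨n, rfl⟩ := Nat.exists_eq_add_of_le' hk
  refine ⟨le_rfl, fun v => ?_, fun v => ?_⟩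
  · rw [Set.ncard_eq_toFinset_card']
    exact cycleGraph_degree_three_le
  · simp [cycleGraph_preconnected v]

theorem isCycleFactor_circulantGraph_one (hk : 3 ≤ k) :
    IsCycleFactor (circulantGraph ({1} : Set (ZMod k))) (circulantGraph {1}) k := by
  have hcycle := isCycleFactor_cycleGraph hk
  obtain ⟨n, rfl⟩ := Nat.exists_eq_add_of_le' hk
  rw [cycleGraph_eq_circulantGraph] at hcycle
  exact hcycle

theorem cayley_eq_boxProd {R M : Type*} [Ring R] [AddGroup M] :
    cayley {p : R × M | (p.1 = 0 ∧ p.2 ≠ 0) ∨ ((p.1 = 1 ∨ p.1 = -1) ∧ p.2 = 0)} =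
      circulantGraph ({1} : Set R) □ (⊤ : SimpleGraph M) := by
  ext p q
  simp only [cayley, fromRel_adj, boxProd_adj, circulantGraph_adj, top_adj, Set.mem_ofPred_eq,
    Set.mem_singleton_iff, Prod.fst_sub, Prod.snd_sub, Prod.ext_iff, ne_eq, sub_eq_zero]
  grind

end Cayley

theorem stmt14 (k u : ℕ) (hk : 3 ≤ k) (hu : 1 ≤ u) (h : IsCycleFrame k 2 u) :
    ∃ F : Fin u ⊕ Unit → SimpleGraph (ZMod k × ZMod (2 * u)),
      (∀ i, IsCycleFactor
        (cayley {p : ZMod k × ZMod (2 * u) |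
          (p.1 = 0 ∧ p.2 ≠ 0) ∨ ((p.1 = 1 ∨ p.1 = -1) ∧ p.2 = 0)})
        (F (Sum.inl i)) k) ∧
      (∀ j, F (Sum.inr j) ≤
          cayley {p : ZMod k × ZMod (2 * u) |
            (p.1 = 0 ∧ p.2 ≠ 0) ∨ ((p.1 = 1 ∨ p.1 = -1) ∧ p.2 = 0)} ∧
        ∀ v, ((F (Sum.inr j)).neighborSet v).ncard = 1) ∧
      IsDecomp
        (cayley {p : ZMod k × ZMod (2 * u) |
          (p.1 = 0 ∧ p.2 ≠ 0) ∨ ((p.1 = 1 ∨ p.1 = -1) ∧ p.2 = 0)}) F := by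
  have : NeZero u := ⟨by omega⟩
  obtain ⟨G, hG, hdecomp⟩ := h.exists_indexed_by_parts
  have hbox := hasCycleOneFactorization_boxProd_top (isCycleFactor_circulantGraph_one hk) hG hdecomp
    ncard_neighborSet_compl_completeMultipartiteG
  let points : ZMod (2 * u) ≃ ZMod u × ZMod 2 := Fintype.equivOfCardEq (by simp [mul_comm])
  rw [cayley_eq_boxProd]
  exact hbox.of_iso (boxProdCongr Iso.refl (Iso.completeGraph points)) (ZMod.finEquiv u).toEquiv
end

section
/- (6, 5) ∈ HWP(C_3[11]; 3, 11); that is, the edge set of C_3[11] can be partitioned into 6 C_3-factors and 5 C_11-factors. -/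
open SimpleGraph

/-!
Attach to the edge `(x, i) – (x + 1, j)` its difference `j - i` in `ZMod 11`. The `C_3`-factors use
up the edges whose difference is a square, the `C_11`-factors those whose difference is a nonsquare.

For a square `q` the triangles `(0, i), (1, i + q), (2, i + 2q)` form a `C_3`-factor with
differences `q, q, -2q`. Since `-2 = 3²` in `ZMod 11`, letting `q` run through the six squares
produces every square difference exactly once between any two consecutive levels.

The nonsquare edges are invariant under the rotations `(x, i) ↦ (x + 1, i)` and under the five
multiplications `(x, i) ↦ (x, q i)` with `q` a nonzero square. There is an `11`-cycle that meets
each of the eleven edge orbits of this group once and takes every value of `i` once. Its three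
rotations form a `C_11`-factor, and the five multiples of that factor partition the nonsquare edges.
-/

section CycleUnion

variable {V J : Type*} {H : SimpleGraph V} {k : ℕ}

lemma cayley_one_adj [Fact (1 < k)] {s t : ZMod k} :
    (cayley {1}).Adj s t ↔ t = s + 1 ∨ s = t + 1 := by
  simp only [cayley, fromRel_adj, Set.mem_singleton_iff, sub_eq_iff_eq_add',
    add_comm _ (1 : ZMod k)]
  have hne : t = 1 + s ∨ s = 1 + t → s ≠ t := by
    rintro h rfl
    simp at h
  tauto

lemma cayley_one_reachable_add_natCast (t : ZMod k) (d : ℕ) :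
    (cayley {1}).Reachable t (t + d) := by
  induction d with
  | zero => simp
  | succ d ih =>
    refine ih.trans ?_
    by_cases h : t + d = t + (d + 1 : ℕ)
    · rw [h]
    · exact Adj.reachable ((fromRel_adj _ _ _).2 ⟨h, .inr (by simp)⟩)

lemma cayley_one_reachable (s t : ZMod k) : (cayley {1}).Reachable s t := by
  obtain ⟨d, hd⟩ := ZMod.intCast_surjective (t - s)
  obtain rfl : t = s + d := by rw [hd, add_sub_cancel]
  obtain ⟨a, rfl | rfl⟩ := d.eq_nat_or_neg
  · simpa using cayley_one_reachable_add_natCast s a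
  · simpa [sub_eq_add_neg] using (cayley_one_reachable_add_natCast (s - (a : ZMod k)) a).symm

lemma ncard_neighborSet_cayley_one (hk : 3 ≤ k) (t : ZMod k) :
    ((cayley {1}).neighborSet t).ncard = 2 := by
  have : Fact (1 < k) := ⟨by omega⟩
  have hset : (cayley {1}).neighborSet t = {t + 1, t - 1} := by
    ext s
    simp only [mem_neighborSet, cayley_one_adj, Set.mem_insert_iff, Set.mem_singleton_iff,
      eq_sub_iff_add_eq, eq_comm (a := t)]
  have htwo : ((2 : ℕ) : ZMod k) ≠ 0 := fun h =>
    absurd (Nat.le_of_dvd two_pos ((ZMod.natCast_eq_zero_iff 2 k).1 h)) (by omega)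
  rw [hset, Set.ncard_pair]
  intro h
  apply htwo
  linear_combination h

/-- The disjoint union of `k`-cycles, one for each `j : J`, in which `e` assigns to a vertex the
cycle it lies on and its position along that cycle. -/
def cycleUnion (e : V ≃ J × ZMod k) : SimpleGraph V :=
  ((⊥ : SimpleGraph J) □ cayley {1}).comap e

lemma cycleUnion_adj [Fact (1 < k)] (e : V ≃ J × ZMod k) {v w : V} :
    (cycleUnion e).Adj v w ↔
      (e v).1 = (e w).1 ∧ ((e w).2 = (e v).2 + 1 ∨ (e v).2 = (e w).2 + 1) := by
  simp [cycleUnion, boxProd_adj, cayley_one_adj, and_comm]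

lemma cycleUnion_reachable (e : V ≃ J × ZMod k) {v w : V} :
    (cycleUnion e).Reachable v w ↔ (e v).1 = (e w).1 := by
  rw [cycleUnion, ← (Iso.comap e _).reachable_iff]
  simp [reachable_boxProd, cayley_one_reachable]

lemma ncard_neighborSet_cycleUnion (hk : 3 ≤ k) (e : V ≃ J × ZMod k) (v : V) :
    ((cycleUnion e).neighborSet v).ncard = 2 := by
  have hset : (cycleUnion e).neighborSet v =
      e ⁻¹' ({(e v).1} ×ˢ (cayley {1}).neighborSet (e v).2) := by
    ext w
    simp [cycleUnion, boxProd_adj, and_comm, eq_comm]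
  rw [hset, Set.ncard_preimage_of_injective_subset_range e.injective (by simp), Set.ncard_prod,
    Set.ncard_singleton, one_mul, ncard_neighborSet_cayley_one hk]

lemma isCycleFactor_cycleUnion (hk : 3 ≤ k) {e : V ≃ J × ZMod k} (hle : cycleUnion e ≤ H) :
    IsCycleFactor H (cycleUnion e) k := by
  refine ⟨hle, ncard_neighborSet_cycleUnion hk e, fun v => ?_⟩
  have hset : {w | (cycleUnion e).Reachable v w} = e ⁻¹' ({(e v).1} ×ˢ Set.univ) := by
    ext w
    simp [cycleUnion_reachable, eq_comm]
  rw [hset, Set.ncard_preimage_of_injective_subset_range e.injective (by simp), Set.ncard_prod,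
    Set.ncard_singleton, one_mul, Set.ncard_univ, Nat.card_zmod]

end CycleUnion

section LexCycle

variable {m n k : ℕ} {ι V : Type*}

lemma isDecomp_of_existsUnique_adj {H : SimpleGraph V} {F : ι → SimpleGraph V}
    (hle : ∀ i, F i ≤ H) (hF : ∀ v w, H.Adj v w → ∃! i, (F i).Adj v w) : IsDecomp H F := by
  refine ⟨fun i j hij => Set.disjoint_left.2 fun e => ?_, fun e => ?_⟩ <;> induction e with | _ v w
  · exact fun hi hj => hij ((hF v w (hle i hi)).unique hi hj)
  · exact ⟨fun h => (hF v w h).exists, fun ⟨i, hi⟩ => hle i hi⟩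

lemma isDecomp_lexCycle {F : ι → SimpleGraph (ZMod m × ZMod n)} (hle : ∀ i, F i ≤ lexCycle m n)
    (hF : ∀ x i j, ∃! k, (F k).Adj (x, i) (x + 1, j)) : IsDecomp (lexCycle m n) F := by
  refine isDecomp_of_existsUnique_adj hle ?_
  rintro ⟨x, i⟩ ⟨y, j⟩ h
  rcases ((fromRel_adj _ _ _).1 h).2 with hxy | hyx
  · obtain rfl : x = y + 1 := eq_add_of_sub_eq' hxy
    simpa only [adj_comm] using hF y j i
  · obtain rfl : y = x + 1 := eq_add_of_sub_eq' hyx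
    exact hF x i j

/-- Coordinates on `C_m[n]` for the `m`-cycles `{(x, a + c x) | x : ZMod m}`, indexed by
`a : ZMod n`. -/
def transversalCoords (c : ZMod m → ZMod n) : ZMod m × ZMod n ≃ ZMod n × ZMod m :=
  ((Equiv.refl _).prodShear fun x => Equiv.subRight (c x)).trans (Equiv.prodComm _ _)

lemma cycleUnion_transversalCoords_adj [Fact (1 < m)] (c : ZMod m → ZMod n) {x : ZMod m}
    {i j : ZMod n} :
    (cycleUnion (transversalCoords c)).Adj (x, i) (x + 1, j) ↔ c (x + 1) - c x = j - i := by
  simp only [cycleUnion_adj, transversalCoords, Equiv.trans_apply, Equiv.prodShear_apply,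
    Equiv.prodComm_apply, Prod.swap, Equiv.refl_apply, Equiv.subRight_apply, true_or, and_true]
  grind

lemma cycleUnion_transversalCoords_le [Fact (1 < m)] (c : ZMod m → ZMod n) :
    cycleUnion (transversalCoords c) ≤ lexCycle m n := by
  rintro v w h
  obtain ⟨-, hw | hv⟩ := (cycleUnion_adj _).1 h
  · exact (fromRel_adj _ _ _).2 ⟨h.ne, .inr (sub_eq_of_eq_add' hw)⟩
  · exact (fromRel_adj _ _ _).2 ⟨h.ne, .inl (sub_eq_of_eq_add' hv)⟩

/-- Coordinates on `C_m[n]` for the `k`-cycles `t ↦ (x + level t, position⁻¹ t)`, indexed by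
`x : ZMod m`: the rotations of a single cycle that meets each column `ZMod m × {i}` once. -/
def rotationCoords (position : ZMod n ≃ ZMod k) (level : ZMod k → ZMod m) :
    ZMod m × ZMod n ≃ ZMod m × ZMod k :=
  (Equiv.prodComm _ _).trans <|
    (position.prodShear fun i => Equiv.subRight (level (position i))).trans (Equiv.prodComm _ _)

lemma cycleUnion_rotationCoords_adj [Fact (1 < k)] (position : ZMod n ≃ ZMod k)
    (level : ZMod k → ZMod m) {x y : ZMod m} {i j : ZMod n} :
    (cycleUnion (rotationCoords position level)).Adj (x, i) (y, j) ↔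
      level (position j) - level (position i) = y - x ∧
        (position j = position i + 1 ∨ position i = position j + 1) := by
  simp only [cycleUnion_adj, rotationCoords, Equiv.trans_apply, Equiv.prodShear_apply,
    Equiv.prodComm_apply, Prod.swap, Equiv.subRight_apply]
  grind

lemma cycleUnion_rotationCoords_le [Fact (1 < k)] (position : ZMod n ≃ ZMod k)
    {level : ZMod k → ZMod m}
    (hlevel : ∀ t, level (t + 1) - level t = 1 ∨ level t - level (t + 1) = 1) :
    cycleUnion (rotationCoords position level) ≤ lexCycle m n := by
  rintro ⟨x, i⟩ ⟨y, j⟩ h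
  refine (fromRel_adj _ _ _).2 ⟨h.ne, ?_⟩
  obtain ⟨hdiff, hpos⟩ := (cycleUnion_rotationCoords_adj position level).1 h
  rw [← neg_sub y x, ← hdiff, neg_sub]
  rcases hpos with hj | hi
  · rw [hj]
    exact (hlevel _).symm
  · rw [hi]
    exact hlevel _

end LexCycle

instance fact_prime_eleven : Fact (Nat.Prime 11) := ⟨by norm_num⟩

/-- The offsets of the triangles `(0, a), (1, a + r²), (2, a + 2r²)`. -/
def triangleOffset (r : Fin 6) (x : ZMod 3) : ZMod 11 := (r : ℕ) ^ 2 * x.val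

lemma isSquare_triangleOffset_sub :
    ∀ r x, IsSquare (triangleOffset r (x + 1) - triangleOffset r x) := by
  decide

lemma existsUnique_triangleOffset_sub_eq :
    ∀ x d, IsSquare d → ∃! r, triangleOffset r (x + 1) - triangleOffset r x = d := by
  unfold ExistsUnique
  decide

/-- The `C_3`-factor of triangles with offsets `triangleOffset r`. -/
def triangleFactor (r : Fin 6) : SimpleGraph (ZMod 3 × ZMod 11) :=
  cycleUnion (transversalCoords (triangleOffset r))

lemma triangleFactor_le (r : Fin 6) : triangleFactor r ≤ lexCycle 3 11 :=
  cycleUnion_transversalCoords_le _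

lemma isSquare_sub_of_triangleFactor_adj {r : Fin 6} {x : ZMod 3} {i j : ZMod 11}
    (h : (triangleFactor r).Adj (x, i) (x + 1, j)) : IsSquare (j - i) :=
  (cycleUnion_transversalCoords_adj _).1 h ▸ isSquare_triangleOffset_sub r x

lemma existsUnique_triangleFactor_adj {i j : ZMod 11} (hij : IsSquare (j - i)) (x : ZMod 3) :
    ∃! r, (triangleFactor r).Adj (x, i) (x + 1, j) := by
  simpa only [triangleFactor, cycleUnion_transversalCoords_adj] using
    existsUnique_triangleOffset_sub_eq x _ hij

/-- The second coordinates of the base `11`-cycle `t ↦ (t mod 3, baseCycle t)`, `0 ≤ t ≤ 10`,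
found by a computer search. -/
def baseCycle : ZMod 11 ≃ ZMod 11 where
  toFun := ![4, 10, 9, 8, 7, 6, 5, 0, 2, 1, 3]
  invFun := ![7, 9, 8, 10, 0, 6, 5, 4, 3, 2, 1]
  left_inv := by unfold Function.LeftInverse; decide
  right_inv := by unfold Function.RightInverse Function.LeftInverse; decide

/-- The level `t mod 3` of the `t`-th vertex of the base cycle. The cycle rises by one level at
every step but the last, which leads from `t = 10` on level `1` down to `t = 0` on level `0`. -/
def baseLevel (t : ZMod 11) : ZMod 3 := t.val

lemma baseLevel_sub :
    ∀ t, baseLevel (t + 1) - baseLevel t = 1 ∨ baseLevel t - baseLevel (t + 1) = 1 := by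
  decide

/-- The base cycle joins second coordinate `i` to second coordinate `j` one level higher. -/
def IsBaseAscent (i j : ZMod 11) : Prop :=
  baseLevel (baseCycle.symm j) - baseLevel (baseCycle.symm i) = 1 ∧
    (baseCycle.symm j = baseCycle.symm i + 1 ∨ baseCycle.symm i = baseCycle.symm j + 1)

instance : DecidableRel IsBaseAscent := fun _ _ => inferInstanceAs (Decidable (_ ∧ _))

/-- The nonzero squares of `ZMod 11`. -/
def nonzeroSquare (s : Fin 5) : ZMod 11 := ((s : ℕ) + 1) ^ 2

lemma nonzeroSquare_ne_zero : ∀ s, nonzeroSquare s ≠ 0 := by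
  decide

lemma not_isSquare_sub_of_isBaseAscent : ∀ i j, IsBaseAscent i j → ¬IsSquare (j - i) := by
  decide

lemma existsUnique_isBaseAscent_mul : ∀ i j, ¬IsSquare (j - i) →
    ∃! s, IsBaseAscent (nonzeroSquare s * i) (nonzeroSquare s * j) := by
  unfold ExistsUnique
  decide +kernel

/-- The `C_11`-factor formed by the rotations of the base cycle, with second coordinates divided
by `nonzeroSquare s`. -/
def baseCycleFactor (s : Fin 5) : SimpleGraph (ZMod 3 × ZMod 11) :=
  cycleUnion (rotationCoords
    ((Equiv.mulLeft₀ (nonzeroSquare s) (nonzeroSquare_ne_zero s)).trans baseCycle.symm) baseLevel)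

lemma baseCycleFactor_le (s : Fin 5) : baseCycleFactor s ≤ lexCycle 3 11 :=
  cycleUnion_rotationCoords_le _ baseLevel_sub

lemma baseCycleFactor_adj {s : Fin 5} {x : ZMod 3} {i j : ZMod 11} :
    (baseCycleFactor s).Adj (x, i) (x + 1, j) ↔
      IsBaseAscent (nonzeroSquare s * i) (nonzeroSquare s * j) := by
  rw [baseCycleFactor, cycleUnion_rotationCoords_adj, add_sub_cancel_left]
  rfl

lemma not_isSquare_sub_of_baseCycleFactor_adj {s : Fin 5} {x : ZMod 3} {i j : ZMod 11}
    (h : (baseCycleFactor s).Adj (x, i) (x + 1, j)) : ¬IsSquare (j - i) := fun hij =>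
  not_isSquare_sub_of_isBaseAscent _ _ (baseCycleFactor_adj.1 h) <| by
    rw [← mul_sub]
    exact (IsSquare.sq _).mul hij

lemma existsUnique_baseCycleFactor_adj {i j : ZMod 11} (hij : ¬IsSquare (j - i)) (x : ZMod 3) :
    ∃! s, (baseCycleFactor s).Adj (x, i) (x + 1, j) := by
  simpa only [baseCycleFactor_adj] using existsUnique_isBaseAscent_mul i j hij

theorem stmt15 : HW (lexCycle 3 11) 3 11 6 5 := by
  refine ⟨Sum.elim triangleFactor baseCycleFactor,
    fun r => isCycleFactor_cycleUnion le_rfl (triangleFactor_le r),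
    fun s => isCycleFactor_cycleUnion (by norm_num) (baseCycleFactor_le s),
    isDecomp_lexCycle (Sum.forall.2 ⟨triangleFactor_le, baseCycleFactor_le⟩) fun x i j => ?_⟩
  by_cases hij : IsSquare (j - i)
  · obtain ⟨r, hr, hunique⟩ := existsUnique_triangleFactor_adj hij x
    refine ⟨.inl r, hr, Sum.forall.2 ⟨fun r' hr' => congrArg _ (hunique r' hr'), fun s hs => ?_⟩⟩
    exact absurd hij (not_isSquare_sub_of_baseCycleFactor_adj hs)
  · obtain ⟨s, hs, hunique⟩ := existsUnique_baseCycleFactor_adj hij x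
    refine ⟨.inr s, hs, Sum.forall.2 ⟨fun r hr => ?_, fun s' hs' => congrArg _ (hunique s' hs')⟩⟩
    exact absurd (isSquare_sub_of_triangleFactor_adj hr) hij
end
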